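/- arXiv:0911.4041 — 2 statements merged into one kernel-verified Lean document; each statement's English description precedes it below -/
import Mathlib

section
/- Under hypotheses (H1), (H2) and the periodicity of Ã_ε and C̃_ε in τ and θ, for any μ > 0 and ν > 0 there exists a unique S_μ^ν = S_μ^ν(t,τ,θ,x) ∈ C⁰ ∩ L²(ℝ×𝕋²), periodic of period 1 in θ, solving μS_μ^ν + ∂S_μ^ν/∂θ − ∇·((Ã_ε(t,τ,·,·)+ν)∇S_μ^ν) = ∇·C̃_ε(t,τ,·,·), regular in the parameters t and τ. Moreover there is a constant γ₃, depending only on γ and ν, such that sup_θ |∫_{𝕋²} S_μ^ν(θ,x) dx| = 0, ‖∂S_μ^ν/∂θ‖_{L²_#(ℝ×𝕋²)} ≤ γ₃, ‖∇S_μ^ν‖_{L^∞_#(ℝ,L²(𝕋²))} ≤ γ₃, ‖S_μ^ν‖_{L^∞_#(ℝ,L²(𝕋²))} ≤ γ₃, ‖∂S_μ^ν/∂t‖_{L^∞_#(ℝ,L²(𝕋²))} ≤ γ₃ and ‖∂S_μ^ν/∂τ‖_{L^∞_#(ℝ,L²(𝕋²))} ≤ √ε γ₃. -/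
open MeasureTheory Filter

noncomputable section

/-- Fundamental domain of the two-dimensional torus `𝕋² = ℝ²/ℤ²`. -/
def Tsq : Set (ℝ × ℝ) := Set.Icc (0:ℝ) 1 ×ˢ Set.Icc (0:ℝ) 1

/-- Periodicity of period 1 in each space direction: a function on `ℝ²`
defining a function on the torus `𝕋²`. -/
def SpacePeriodic {E : Type*} (f : (ℝ × ℝ) → E) : Prop :=
  ∀ x : ℝ × ℝ, f (x + (1, 0)) = f x ∧ f (x + (0, 1)) = f x

/-- Gradient of a scalar function on `ℝ²`. -/
def grad (f : (ℝ × ℝ) → ℝ) (x : ℝ × ℝ) : ℝ × ℝ :=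
  (fderiv ℝ f x (1, 0), fderiv ℝ f x (0, 1))

/-- Divergence of a vector field on `ℝ²`. -/
def div2 (F : (ℝ × ℝ) → ℝ × ℝ) (x : ℝ × ℝ) : ℝ :=
  fderiv ℝ (fun y => (F y).1) x (1, 0) + fderiv ℝ (fun y => (F y).2) x (0, 1)

/-- Laplacian of a scalar function on `ℝ²`. -/
def lap (f : (ℝ × ℝ) → ℝ) (x : ℝ × ℝ) : ℝ := div2 (grad f) x

/-- `L²(𝕋²)` norm of a scalar function. -/
def L2norm (f : (ℝ × ℝ) → ℝ) : ℝ := (∫ x in Tsq, (f x) ^ 2) ^ (1/2 : ℝ)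

/-- `L^∞(𝕋²)` norm of a (bounded) function. -/
def LinfNorm (f : (ℝ × ℝ) → ℝ) : ℝ := ⨆ x : ℝ × ℝ, |f x|

/-- `L²_#(ℝ×𝕋²)` norm : `(∫₀¹ ∫_{𝕋²} f² dx dθ)^{1/2}` for functions
1-periodic in `θ`. -/
def L2sharpNorm (f : ℝ → (ℝ × ℝ) → ℝ) : ℝ :=
  (∫ θ in Set.Icc (0:ℝ) 1, ∫ x in Tsq, (f θ x) ^ 2) ^ (1/2 : ℝ)

/-- `L^∞_#(ℝ, L²(𝕋²))` norm : `sup_{θ ∈ [0,1]} ‖f(θ,·)‖_{L²(𝕋²)}`. -/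
def LinfL2Norm (f : ℝ → (ℝ × ℝ) → ℝ) : ℝ :=
  ⨆ θ : Set.Icc (0:ℝ) 1, L2norm (f θ.1)

/-- Regular nonnegative scalar coefficient `Ã_ε(t,τ,θ,x)` and regular vector field
`C̃_ε(t,τ,θ,x)`, 1-periodic in `τ` and in `θ` (and in space), together with the
bounds (H1) and (H2) with constant `γ`. -/
def CoeffBasic (γ ε : ℝ)
    (A : ℝ → ℝ → ℝ → (ℝ × ℝ) → ℝ) (C : ℝ → ℝ → ℝ → (ℝ × ℝ) → ℝ × ℝ) : Prop :=
  ContDiff ℝ (⊤ : ℕ∞) (fun p : ℝ × ℝ × ℝ × (ℝ × ℝ) => A p.1 p.2.1 p.2.2.1 p.2.2.2) ∧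
  ContDiff ℝ (⊤ : ℕ∞) (fun p : ℝ × ℝ × ℝ × (ℝ × ℝ) => C p.1 p.2.1 p.2.2.1 p.2.2.2) ∧
  (∀ t τ θ x, 0 ≤ A t τ θ x) ∧
  (∀ t τ θ x, A t (τ + 1) θ x = A t τ θ x ∧ A t τ (θ + 1) x = A t τ θ x ∧
      C t (τ + 1) θ x = C t τ θ x ∧ C t τ (θ + 1) x = C t τ θ x) ∧
  (∀ t τ θ, SpacePeriodic (A t τ θ) ∧ SpacePeriodic (C t τ θ)) ∧
  -- (H1)
  (∀ t τ θ x,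
    |A t τ θ x| ≤ γ ∧ ‖C t τ θ x‖ ≤ γ ∧
    |deriv (fun s => A s τ θ x) t| ≤ γ ∧ ‖deriv (fun s => C s τ θ x) t‖ ≤ γ ∧
    |deriv (fun σ => A t τ σ x) θ| ≤ γ ∧ ‖deriv (fun σ => C t τ σ x) θ‖ ≤ γ ∧
    ‖grad (A t τ θ) x‖ ≤ γ ∧ |div2 (C t τ θ) x| ≤ γ ∧
    ‖deriv (fun s => grad (A s τ θ) x) t‖ ≤ γ ∧
    |deriv (fun s => div2 (C s τ θ) x) t| ≤ γ) ∧
  -- (H2)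
  (∀ t τ θ x,
    |deriv (fun s => A t s θ x) τ| ≤ Real.sqrt ε * γ ∧
    ‖deriv (fun s => C t s θ x) τ‖ ≤ Real.sqrt ε * γ ∧
    ‖deriv (fun s => grad (A t s θ) x) τ‖ ≤ Real.sqrt ε * γ)

/-- The threshold hypotheses (H3), (H4) and (H5). -/
def CoeffThreshold (γ Gthr θa θw ε : ℝ)
    (A : ℝ → ℝ → ℝ → (ℝ × ℝ) → ℝ) (C : ℝ → ℝ → ℝ → (ℝ × ℝ) → ℝ × ℝ) : Prop :=
  -- (H3)
  (0 < Gthr ∧ θa < θw ∧ θa ∈ Set.Icc (0:ℝ) 1 ∧ θw ∈ Set.Icc (0:ℝ) 1 ∧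
    ∀ t τ : ℝ, ∀ x : ℝ × ℝ, ∀ θ ∈ Set.Icc θa θw, Gthr ≤ A t τ θ x) ∧
  -- (H4)
  (∀ t τ θ x, A t τ θ x ≤ Gthr →
    deriv (fun s => A s τ θ x) t = 0 ∧ deriv (fun s => A t s θ x) τ = 0 ∧
    grad (A t τ θ) x = 0 ∧
    deriv (fun s => C s τ θ x) t = 0 ∧ deriv (fun s => C t s θ x) τ = 0 ∧
    div2 (C t τ θ) x = 0) ∧
  -- (H5)
  (∀ t τ θ x,
    ‖C t τ θ x‖ ≤ γ * A t τ θ x ∧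
    ‖C t τ θ x‖ ^ 2 ≤ γ * A t τ θ x ∧
    ‖grad (A t τ θ) x‖ ≤ γ * A t τ θ x ∧
    |deriv (fun s => A s τ θ x) t| ≤ γ * A t τ θ x ∧
    ‖deriv (fun s => grad (A s τ θ) x) t‖ ^ 2 ≤ γ * A t τ θ x ∧
    |deriv (fun s => A t s θ x) τ| ^ 2 ≤ ε * γ * A t τ θ x ∧
    ‖deriv (fun s => grad (A t s θ) x) τ‖ ^ 2 ≤ ε * γ * A t τ θ x ∧
    |div2 (C t τ θ) x| ≤ γ * A t τ θ x ∧
    ‖deriv (fun s => C s τ θ x) t‖ ≤ γ * A t τ θ x ∧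
    ‖deriv (fun s => C s τ θ x) t‖ ^ 2 ≤ γ ^ 2 * A t τ θ x)

/-- `S(t,τ,·,·)` is, for all values of the parameters `t` and `τ`, a classical
solution, 1-periodic in `θ`, of the regularized cell problem
`μ S + ∂S/∂θ − ∇·((Ã_ε(t,τ,·,·) + ν)∇S) = ∇·C̃_ε(t,τ,·,·)`,
depending regularly on `t` and `τ`. -/
def IsRegCellSolP (A : ℝ → ℝ → ℝ → (ℝ × ℝ) → ℝ) (C : ℝ → ℝ → ℝ → (ℝ × ℝ) → ℝ × ℝ)
    (μ ν : ℝ) (S : ℝ → ℝ → ℝ → (ℝ × ℝ) → ℝ) : Prop :=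
  ContDiff ℝ (⊤ : ℕ∞) (fun p : ℝ × ℝ × ℝ × (ℝ × ℝ) => S p.1 p.2.1 p.2.2.1 p.2.2.2) ∧
  (∀ t τ θ x, S t τ (θ + 1) x = S t τ θ x) ∧
  (∀ t τ θ, SpacePeriodic (S t τ θ)) ∧
  (∀ t τ θ x, μ * S t τ θ x + deriv (fun σ => S t τ σ x) θ
      - div2 (fun y => (A t τ θ y + ν) • grad (S t τ θ) y) x = div2 (C t τ θ) x)

/-- `S(t,τ,·,·)` is, for all values of the parameters `t` and `τ`, a classical
solution, 1-periodic in `θ` and with zero spatial mean for every `θ`, of the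
`ν`-regularized cell problem
`∂S/∂θ − ∇·((Ã_ε(t,τ,·,·) + ν)∇S) = ∇·C̃_ε(t,τ,·,·)`. -/
def IsNuCellSolP (A : ℝ → ℝ → ℝ → (ℝ × ℝ) → ℝ) (C : ℝ → ℝ → ℝ → (ℝ × ℝ) → ℝ × ℝ)
    (ν : ℝ) (S : ℝ → ℝ → ℝ → (ℝ × ℝ) → ℝ) : Prop :=
  ContDiff ℝ (⊤ : ℕ∞) (fun p : ℝ × ℝ × ℝ × (ℝ × ℝ) => S p.1 p.2.1 p.2.2.1 p.2.2.2) ∧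
  (∀ t τ θ x, S t τ (θ + 1) x = S t τ θ x) ∧
  (∀ t τ θ, SpacePeriodic (S t τ θ)) ∧
  (∀ t τ θ x, deriv (fun σ => S t τ σ x) θ
      - div2 (fun y => (A t τ θ y + ν) • grad (S t τ θ) y) x = div2 (C t τ θ) x) ∧
  (∀ t τ θ : ℝ, ∫ x in Tsq, S t τ θ x = 0)

/-!
The parameters `t, τ` and the periodic variables `θ, x` are treated alike. For a smooth `f` on a
normed space `Z` that is periodic along `ι : ℝᵈ → Z`, the Fourier coefficients of `y ↦ f (q + ι y)`
form a smooth `ℓ²`-valued family in `q`, and moving `q` along `ι` is translation on the torus.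
Conversely every smooth family with this covariance comes from a smooth periodic function: after
multiplication by `∏ᵢ (1 + 4π²kᵢ²)` the coefficients can be summed.

Existence: write the coefficient as a constant `κ` minus a multiplication operator of norm less than
`κ`. The equation for the Fourier coefficients is then solved by a Neumann series, smoothly in the
base point, and uniqueness makes the solution covariant, hence a smooth function of all variables.

A priori bounds: the mean over `𝕋²` solves a linear ODE and is periodic in `θ`, so it vanishes.
With Poincaré's inequality the energy identity bounds the `L²` norm; the functional
`(μ + k) ∫ S² + ∫ a |∇S|²`, with `k = γ/ν + 1`, bounds `∇S` and `∂_θ S`. The `t` and `τ`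
derivatives solve the same equation with a source that is already controlled.
-/

namespace CellProblem

open scoped ContDiff ENNReal

universe u

section DirectionalDerivative

variable {E F G : Type*} [NormedAddCommGroup E] [NormedSpace ℝ E] [NormedAddCommGroup F]
  [NormedSpace ℝ F] [NormedAddCommGroup G] [NormedSpace ℝ G]

/-- The derivative of `f` in the fixed direction `v`, as a function of the base point. -/
def dirDeriv (v : E) (f : E → F) (z : E) : F := fderiv ℝ f z v

lemma contDiff_dirDeriv {f : E → F} (hf : ContDiff ℝ ∞ f) (v : E) : ContDiff ℝ ∞ (dirDeriv v f) :=
  (contDiff_infty_iff_fderiv.1 hf).2.clm_apply contDiff_const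

lemma dirDeriv_clm_comp (T : F →L[ℝ] G) {f : E → F} {z : E} (hf : DifferentiableAt ℝ f z) (v : E) :
    dirDeriv v (fun z => T (f z)) z = T (dirDeriv v f z) :=
  congrArg (· v) (T.hasFDerivAt.comp z hf.hasFDerivAt).fderiv

end DirectionalDerivative

section TorusLift

variable {d : Type*}

/-- The quotient map `ℝᵈ → 𝕋ᵈ`. -/
def torusMk (y : d → ℝ) : UnitAddTorus d := fun i => (y i : UnitAddCircle)

/-- An arbitrary section of the quotient map `ℝᵈ → 𝕋ᵈ`. -/
def torusRep (y : UnitAddTorus d) : d → ℝ := fun i => Quotient.out (y i)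

lemma torusMk_torusRep (y : UnitAddTorus d) : torusMk (torusRep y) = y :=
  funext fun _ => Quotient.out_eq _

lemma torusMk_add (a b : d → ℝ) : torusMk (a + b) = torusMk a + torusMk b := rfl

lemma torusMk_intCast (n : d → ℤ) : torusMk (fun i => (n i : ℝ)) = 0 :=
  funext fun i => (QuotientAddGroup.eq_zero_iff _).2
    (AddSubgroup.mem_zmultiples_iff.2 ⟨n i, by simp⟩)

lemma isOpenQuotientMap_torusMk : IsOpenQuotientMap (torusMk (d := d)) :=
  .piMap fun _ => QuotientAddGroup.isOpenQuotientMap_mk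

lemma exists_torusRep_torusMk (y : d → ℝ) :
    ∃ n : d → ℤ, torusRep (torusMk y) = y + fun i => (n i : ℝ) := by
  have h (i : d) : ∃ n : ℤ, torusRep (torusMk y) i = y i + n := by
    have hi : (torusRep (torusMk y) i : UnitAddCircle) = y i :=
      congrFun (torusMk_torusRep (torusMk y)) i
    obtain ⟨n, hn⟩ := AddSubgroup.mem_zmultiples_iff.1 (QuotientAddGroup.eq_iff_sub_mem.1 hi)
    rw [zsmul_eq_mul, mul_one] at hn
    exact ⟨n, by linarith⟩
  choose n hn using h
  exact ⟨n, funext hn⟩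

variable {Z F : Type u} [NormedAddCommGroup Z] [NormedSpace ℝ Z]
  [NormedAddCommGroup F] [NormedSpace ℝ F] {ι : (d → ℝ) →L[ℝ] Z} {f : Z → F}

/-- `f` is smooth on `Z` and invariant under the lattice `ι ℤᵈ`. The remaining directions of `Z`
are the parameters of the problem. -/
structure SmoothPeriodic (ι : (d → ℝ) →L[ℝ] Z) (f : Z → F) : Prop where
  contDiff : ContDiff ℝ ∞ f
  periodic (z : Z) (n : d → ℤ) : f (z + ι fun i => (n i : ℝ)) = f z

namespace SmoothPeriodic

lemma continuous (hf : SmoothPeriodic ι f) : Continuous f := hf.contDiff.continuous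

lemma fderiv (hf : SmoothPeriodic ι f) : SmoothPeriodic ι (fderiv ℝ f) where
  contDiff := (contDiff_infty_iff_fderiv.1 hf.contDiff).2
  periodic z n := by
    rw [← fderiv_comp_add_right]
    exact congrArg (_root_.fderiv ℝ · z) (funext fun w => hf.periodic w n)

lemma dirDeriv (hf : SmoothPeriodic ι f) (v : Z) : SmoothPeriodic ι (dirDeriv v f) where
  contDiff := contDiff_dirDeriv hf.contDiff v
  periodic z n := congrArg (· v) (hf.fderiv.periodic z n)

lemma add {g : Z → F} (hf : SmoothPeriodic ι f) (hg : SmoothPeriodic ι g) :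
    SmoothPeriodic ι fun z => f z + g z :=
  ⟨hf.contDiff.add hg.contDiff, fun z n => by rw [hf.periodic, hg.periodic]⟩

lemma sub {g : Z → F} (hf : SmoothPeriodic ι f) (hg : SmoothPeriodic ι g) :
    SmoothPeriodic ι fun z => f z - g z :=
  ⟨hf.contDiff.sub hg.contDiff, fun z n => by rw [hf.periodic, hg.periodic]⟩

lemma sum {κ : Type*} {f : κ → Z → F} {s : Finset κ} (hf : ∀ j ∈ s, SmoothPeriodic ι (f j)) :
    SmoothPeriodic ι fun z => ∑ j ∈ s, f j z :=
  ⟨.sum fun j hj => (hf j hj).contDiff,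
    fun z n => Finset.sum_congr rfl fun j hj => (hf j hj).periodic z n⟩

lemma comp {G : Type u} [NormedAddCommGroup G] [NormedSpace ℝ G] {φ : F → G}
    (hf : SmoothPeriodic ι f) (hφ : ContDiff ℝ ∞ φ) : SmoothPeriodic ι fun z => φ (f z) :=
  ⟨hφ.comp hf.contDiff, fun z n => by rw [hf.periodic]⟩

lemma mul {𝔸 : Type u} [NormedRing 𝔸] [NormedAlgebra ℝ 𝔸] {f g : Z → 𝔸}
    (hf : SmoothPeriodic ι f) (hg : SmoothPeriodic ι g) : SmoothPeriodic ι fun z => f z * g z :=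
  ⟨hf.contDiff.mul hg.contDiff, fun z n => by rw [hf.periodic, hg.periodic]⟩

lemma const (c : F) : SmoothPeriodic ι fun _ : Z => c := ⟨contDiff_const, fun _ _ => rfl⟩

lemma apply_torusRep_torusMk (hf : SmoothPeriodic ι f) (z : Z) (y : d → ℝ) :
    f (z + ι (torusRep (torusMk y))) = f (z + ι y) := by
  obtain ⟨n, hn⟩ := exists_torusRep_torusMk y
  rw [hn, map_add, ← add_assoc, hf.periodic]

lemma continuous_apply_torusRep (hf : SmoothPeriodic ι f) :
    Continuous fun p : Z × UnitAddTorus d => f (p.1 + ι (torusRep p.2)) := by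
  have hq : IsOpenQuotientMap (Prod.map (id : Z → Z) (torusMk (d := d))) :=
    IsOpenQuotientMap.id.prodMap isOpenQuotientMap_torusMk
  rw [hq.isQuotientMap.continuous_iff]
  have h : (fun p : Z × UnitAddTorus d => f (p.1 + ι (torusRep p.2))) ∘ Prod.map id torusMk
      = fun p : Z × (d → ℝ) => f (p.1 + ι p.2) :=
    funext fun p => hf.apply_torusRep_torusMk p.1 p.2
  rw [h]
  exact hf.continuous.comp (by fun_prop)

/-- For a point `q`, the function `y ↦ f (q + ι y)`, seen as a function on the torus. -/
def lift (hf : SmoothPeriodic ι f) (q : Z) : C(UnitAddTorus d, F) :=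
  ⟨fun y => f (q + ι (torusRep y)),
    hf.continuous_apply_torusRep.comp (Continuous.prodMk continuous_const continuous_id)⟩

lemma lift_apply (hf : SmoothPeriodic ι f) (q : Z) (y : UnitAddTorus d) :
    hf.lift q y = f (q + ι (torusRep y)) := rfl

lemma lift_torusMk (hf : SmoothPeriodic ι f) (q : Z) (y : d → ℝ) :
    hf.lift q (torusMk y) = f (q + ι y) :=
  hf.apply_torusRep_torusMk q y

lemma lift_add_apply (hf : SmoothPeriodic ι f) (q : Z) (h : d → ℝ) (y : UnitAddTorus d) :
    hf.lift (q + ι h) y = hf.lift q (y + torusMk h) := by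
  rw [← torusMk_torusRep y, ← torusMk_add, lift_torusMk, lift_torusMk, map_add, add_assoc,
    add_comm (ι h)]

lemma continuous_lift (hf : SmoothPeriodic ι f) : Continuous hf.lift :=
  (ContinuousMap.curry ⟨_, hf.continuous_apply_torusRep⟩).continuous

end SmoothPeriodic

/-- Evaluation of operator-valued functions on the torus at a vector,
`C(𝕋ᵈ, Z →L[ℝ] F) → (Z →L[ℝ] C(𝕋ᵈ, F))`. -/
def evalVector : C(UnitAddTorus d, Z →L[ℝ] F) →L[ℝ] (Z →L[ℝ] C(UnitAddTorus d, F)) :=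
  LinearMap.mkContinuous₂
    (LinearMap.mk₂ ℝ (fun (g : C(UnitAddTorus d, Z →L[ℝ] F)) (v : Z) =>
        (⟨fun y => g y v, by fun_prop⟩ : C(UnitAddTorus d, F)))
      (by intros; ext; simp) (by intros; ext; simp) (by intros; ext; simp)
      (by intros; ext; simp)) 1 fun g v => by
    rw [one_mul, ContinuousMap.norm_le _ (by positivity)]
    exact fun y => (g y).le_of_opNorm_le (g.norm_coe_le_norm y) v

namespace SmoothPeriodic

lemma hasFDerivAt_lift (hf : SmoothPeriodic ι f) (q : Z) :
    HasFDerivAt hf.lift (evalVector (hf.fderiv.lift q)) q := by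
  rw [hasFDerivAt_iff_isLittleO, Asymptotics.isLittleO_iff]
  intro c hc
  obtain ⟨δ, hδ, hclose⟩ :=
    Metric.continuousAt_iff.1 (hf.fderiv.continuous_lift.continuousAt (x := q)) c hc
  filter_upwards [Metric.ball_mem_nhds q hδ] with q' hq'
  rw [ContinuousMap.norm_le _ (by positivity)]
  intro y
  have hderiv (z : Z) (_ : z ∈ Metric.ball q δ) :
      HasFDerivWithinAt (fun z => f (z + ι (torusRep y))) (hf.fderiv.lift z y)
        (Metric.ball q δ) z :=
    ((hasFDerivAt_comp_add_right (f := f) (ι (torusRep y))).2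
      (hf.contDiff.differentiable (by simp) _).hasFDerivAt).hasFDerivWithinAt
  have hbound (z : Z) (hz : z ∈ Metric.ball q δ) :
      ‖hf.fderiv.lift z y - hf.fderiv.lift q y‖ ≤ c :=
    ((hf.fderiv.lift z - hf.fderiv.lift q).norm_coe_le_norm y).trans
      (by rw [← dist_eq_norm]; exact (hclose hz).le)
  exact (convex_ball q δ).norm_image_sub_le_of_norm_hasFDerivWithin_le' hderiv hbound
    (Metric.mem_ball_self hδ) hq'

set_option maxSynthPendingDepth 3 in
lemma contDiff_lift_nat (n : ℕ) {F : Type u} [NormedAddCommGroup F] [NormedSpace ℝ F] {f : Z → F}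
    (hf : SmoothPeriodic ι f) : ContDiff ℝ n hf.lift := by
  induction n generalizing F with
  | zero => exact contDiff_zero.2 hf.continuous_lift
  | succ n ih =>
    have heval : ContDiff ℝ n fun g : C(UnitAddTorus d, Z →L[ℝ] F) => evalVector g :=
      ContinuousLinearMap.contDiff (evalVector (Z := Z) (F := F))
    exact contDiff_succ_iff_hasFDerivAt.2 ⟨fun q => evalVector (hf.fderiv.lift q),
      heval.comp (ih hf.fderiv), hf.hasFDerivAt_lift⟩

lemma contDiff_lift (hf : SmoothPeriodic ι f) : ContDiff ℝ ∞ hf.lift :=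
  contDiff_infty.2 fun n => contDiff_lift_nat n hf

lemma dirDeriv_lift (hf : SmoothPeriodic ι f) (v q : Z) :
    CellProblem.dirDeriv v hf.lift q = (hf.dirDeriv v).lift q := by
  rw [CellProblem.dirDeriv, (hf.hasFDerivAt_lift q).fderiv]
  rfl

end SmoothPeriodic

end TorusLift

section Diagonal

variable {K : Type*}

/-- The operator on `ℓ²` that multiplies the `k`-th coordinate by the bounded weight `m k`. -/
def diagonal : lp (fun _ : K => ℂ) ∞ →L[ℂ] lp (fun _ : K => ℂ) 2 →L[ℂ] lp (fun _ : K => ℂ) 2 :=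
  lp.holderL (K := 1) 2 (fun _ => ContinuousLinearMap.mul ℂ ℂ)
    fun _ => ContinuousLinearMap.opNorm_mul_le ℂ ℂ

lemma diagonal_apply (m : lp (fun _ : K => ℂ) ∞) (v : lp (fun _ : K => ℂ) 2) (k : K) :
    diagonal m v k = m k * v k := rfl

lemma diagonal_comm (m n : lp (fun _ : K => ℂ) ∞) (v : lp (fun _ : K => ℂ) 2) :
    diagonal m (diagonal n v) = diagonal n (diagonal m v) := by
  ext k
  exact mul_left_comm _ _ _

lemma norm_diagonal_apply_le {m : lp (fun _ : K => ℂ) ∞} {c : ℝ} (hc : 0 ≤ c)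
    (hm : ∀ k, ‖m k‖ ≤ c) (v : lp (fun _ : K => ℂ) 2) : ‖diagonal m v‖ ≤ c * ‖v‖ := by
  have h : ‖diagonal (K := K)‖ ≤ 1 := lp.norm_holderL_le _ _ _
  have hmc : ‖m‖ ≤ c := lp.norm_le_of_forall_le hc hm
  calc ‖diagonal m v‖ ≤ 1 * ‖m‖ * ‖v‖ := diagonal.le_of_opNorm₂_le_of_le h le_rfl le_rfl
    _ ≤ c * ‖v‖ := by rw [one_mul]; gcongr

lemma hasSum_norm_sq (v : lp (fun _ : K => ℂ) 2) : HasSum (fun k => ‖v k‖ ^ 2) (‖v‖ ^ 2) := by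
  simpa using lp.hasSum_norm (p := 2) (by simp) v

variable {κ : Type*} {J : Finset κ} {r : κ → lp (fun _ : K => ℂ) ∞}

lemma sum_norm_sq_diagonal_le (hr : ∀ k, ∑ j ∈ J, ‖r j k‖ ^ 2 ≤ 1)
    (v : lp (fun _ : K => ℂ) 2) : ∑ j ∈ J, ‖diagonal (r j) v‖ ^ 2 ≤ ‖v‖ ^ 2 := by
  refine hasSum_le (fun k => ?_) (hasSum_sum fun j _ => hasSum_norm_sq (diagonal (r j) v))
    (hasSum_norm_sq v)
  simp only [diagonal_apply, norm_mul, mul_pow, ← Finset.sum_mul]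
  exact mul_le_of_le_one_left (by positivity) (hr k)

lemma norm_sum_diagonal_sq_le (hr : ∀ k, ∑ j ∈ J, ‖r j k‖ ^ 2 ≤ 1)
    (u : κ → lp (fun _ : K => ℂ) 2) :
    ‖∑ j ∈ J, diagonal (r j) (u j)‖ ^ 2 ≤ ∑ j ∈ J, ‖u j‖ ^ 2 := by
  refine hasSum_le (fun k => ?_) (hasSum_norm_sq _) (hasSum_sum fun j _ => hasSum_norm_sq (u j))
  rw [lp.coeFn_sum, Finset.sum_apply]
  calc ‖∑ j ∈ J, diagonal (r j) (u j) k‖ ^ 2 ≤ (∑ j ∈ J, ‖r j k‖ * ‖u j k‖) ^ 2 := by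
        gcongr
        exact (norm_sum_le _ _).trans_eq (by simp only [diagonal_apply, norm_mul])
    _ ≤ (∑ j ∈ J, ‖r j k‖ ^ 2) * ∑ j ∈ J, ‖u j k‖ ^ 2 := Finset.sum_mul_sq_le_sq_mul_sq ..
    _ ≤ ∑ j ∈ J, ‖u j k‖ ^ 2 := mul_le_of_le_one_left (by positivity) (hr k)

end Diagonal

section Fourier

local instance instMeasureSpaceUnitAddCircle : MeasureSpace UnitAddCircle :=
  ⟨AddCircle.haarAddCircle⟩

local instance instIsAddHaarMeasureUnitAddCircle :
    Measure.IsAddHaarMeasure (volume : Measure UnitAddCircle) :=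
  inferInstanceAs (Measure.IsAddHaarMeasure AddCircle.haarAddCircle)

local instance instIsProbabilityMeasureUnitAddCircle :
    IsProbabilityMeasure (volume : Measure UnitAddCircle) :=
  inferInstanceAs (IsProbabilityMeasure AddCircle.haarAddCircle)

variable {d : Type*} [Fintype d]

/-- The Hilbert space of Fourier coefficients of functions on `𝕋ᵈ`. -/
abbrev FourierSpace (d : Type*) := lp (fun _ : d → ℤ => ℂ) 2

/-- The Hilbert space `L²(𝕋ᵈ)`, for the Haar probability measure. -/
abbrev TorusL2 (d : Type*) [Fintype d] := Lp ℂ 2 (volume : Measure (UnitAddTorus d))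

/-- The isometry of `L²(𝕋ᵈ)` onto `ℓ²(ℤᵈ)` given by the Fourier basis. -/
def fourierIso : TorusL2 d ≃ₗᵢ[ℂ] FourierSpace d :=
  UnitAddTorus.mFourierBasis.repr

/-- The square-summable family of Fourier coefficients of a continuous function on `𝕋ᵈ`. -/
def fourierCoeffs : C(UnitAddTorus d, ℂ) →L[ℂ] FourierSpace d :=
  ((fourierIso (d := d)).toContinuousLinearEquiv : TorusL2 d →L[ℂ] FourierSpace d) ∘L
    ContinuousMap.toLp 2 volume ℂ

lemma fourierCoeffs_def (f : C(UnitAddTorus d, ℂ)) :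
    fourierCoeffs f = fourierIso (ContinuousMap.toLp 2 volume ℂ f) := rfl

lemma fourierCoeffs_apply (f : C(UnitAddTorus d, ℂ)) (k : d → ℤ) :
    fourierCoeffs f k = UnitAddTorus.mFourierCoeff f k := by
  rw [← UnitAddTorus.mFourierCoeff_toLp, ← UnitAddTorus.mFourierBasis_repr]
  rfl

lemma fourierCoeffs_injective : Function.Injective (fourierCoeffs (d := d)) :=
  fourierIso.injective.comp (ContinuousMap.toLp_injective volume)

lemma denseRange_fourierCoeffs : DenseRange (fourierCoeffs (d := d)) :=
  fourierIso.surjective.denseRange.comp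
    (ContinuousMap.toLp_denseRange ℂ (volume : Measure (UnitAddTorus d)) ℂ (by simp))
    fourierIso.continuous

lemma fourierCoeffs_mFourier [DecidableEq (d → ℤ)] (k : d → ℤ) :
    fourierCoeffs (UnitAddTorus.mFourier k) = lp.single 2 k 1 := by
  have h := (UnitAddTorus.mFourierBasis (d := d)).repr_self k
  rw [UnitAddTorus.coe_mFourierBasis] at h
  convert h using 1
  rfl

/-- Multiplication by a continuous function, as an operator on Fourier coefficients. -/
def mulOp : C(UnitAddTorus d, ℂ) →L[ℂ] FourierSpace d →L[ℂ] FourierSpace d :=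
  ((ContinuousLinearMap.compL ℂ (FourierSpace d) (TorusL2 d) (FourierSpace d)
        ((fourierIso (d := d)).toContinuousLinearEquiv : TorusL2 d →L[ℂ] FourierSpace d)) ∘L
    ((ContinuousLinearMap.compL ℂ (FourierSpace d) (TorusL2 d) (TorusL2 d)).flip
      ((fourierIso (d := d)).symm.toContinuousLinearEquiv : FourierSpace d →L[ℂ] TorusL2 d))) ∘L
    ((ContinuousLinearMap.mul ℂ ℂ).holderL (volume : Measure (UnitAddTorus d)) ⊤ 2 2 ∘L
      ContinuousMap.toLp ⊤ volume ℂ)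

lemma mulOp_apply (b : C(UnitAddTorus d, ℂ)) (v : FourierSpace d) :
    mulOp b v = fourierIso ((ContinuousLinearMap.mul ℂ ℂ).holder 2
      (ContinuousMap.toLp ⊤ volume ℂ b) (fourierIso.symm v)) := rfl

lemma norm_mulOp_apply_le (b : C(UnitAddTorus d, ℂ)) (v : FourierSpace d) :
    ‖mulOp b v‖ ≤ ‖b‖ * ‖v‖ := by
  have hmul : ‖ContinuousLinearMap.mul ℂ ℂ‖ ≤ 1 := ContinuousLinearMap.opNorm_mul_le ℂ ℂ
  have hb : ‖ContinuousMap.toLp ⊤ (volume : Measure (UnitAddTorus d)) ℂ b‖ ≤ ‖b‖ := by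
    refine (Lp.norm_le_of_ae_bound (norm_nonneg b) ?_).trans_eq (by simp)
    filter_upwards [ContinuousMap.coeFn_toLp (p := ⊤) volume (𝕜 := ℂ) b] with y hy
    exact hy ▸ b.norm_coe_le_norm y
  rw [mulOp_apply, LinearIsometryEquiv.norm_map]
  refine (ContinuousLinearMap.norm_holder_apply_apply_le _ _ _).trans ?_
  rw [LinearIsometryEquiv.norm_map, ← one_mul ‖b‖]
  gcongr

lemma mulOp_fourierCoeffs (b g : C(UnitAddTorus d, ℂ)) :
    mulOp b (fourierCoeffs g) = fourierCoeffs (b * g) := by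
  have h : (ContinuousLinearMap.mul ℂ ℂ).holder 2 (ContinuousMap.toLp ⊤ volume ℂ b)
      (ContinuousMap.toLp 2 volume ℂ g) = ContinuousMap.toLp 2 volume ℂ (b * g) := by
    apply Lp.ext
    filter_upwards [ContinuousLinearMap.coeFn_holder (r := 2) (ContinuousLinearMap.mul ℂ ℂ)
        (ContinuousMap.toLp ⊤ volume ℂ b) (ContinuousMap.toLp 2 volume ℂ g),
      ContinuousMap.coeFn_toLp (p := ⊤) volume (𝕜 := ℂ) b,
      ContinuousMap.coeFn_toLp (p := 2) volume (𝕜 := ℂ) g,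
      ContinuousMap.coeFn_toLp (p := 2) volume (𝕜 := ℂ) (b * g)] with y hbg hb hg hmul
    rw [hbg, hb, hg, hmul]
    rfl
  rw [mulOp_apply, fourierCoeffs_def, fourierIso.symm_apply_apply, h]
  rfl

/-- The value of the character with frequency `k` at the point `h ∈ ℝᵈ`. -/
def character (k : d → ℤ) (h : d → ℝ) : ℂ := UnitAddTorus.mFourier k (torusMk h)

lemma character_eq_exp (k : d → ℤ) (h : d → ℝ) :
    character k h = Complex.exp (∑ i, 2 * Real.pi * Complex.I * k i * h i) := by
  rw [Complex.exp_sum]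
  refine Finset.prod_congr rfl fun i _ => (fourier_coe_apply (T := 1)).trans ?_
  simp

lemma norm_character (k : d → ℤ) (h : d → ℝ) : ‖character k h‖ = 1 := by
  rw [character_eq_exp, Complex.norm_exp]
  simp

lemma character_intCast (k : d → ℤ) (n : d → ℤ) : character k (fun i => (n i : ℝ)) = 1 := by
  rw [character, torusMk_intCast]
  simp [UnitAddTorus.mFourier]

lemma mFourier_add_torusMk (k : d → ℤ) (y : UnitAddTorus d) (h : d → ℝ) :
    UnitAddTorus.mFourier k (y + torusMk h) = UnitAddTorus.mFourier k y * character k h := by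
  simp only [character, UnitAddTorus.mFourier, ContinuousMap.coe_mk, Pi.add_apply,
    ← Finset.prod_mul_distrib, fourier_apply, smul_add, AddCircle.toCircle_add, Circle.coe_mul]

/-- Translation of functions by `h`, as an operator on Fourier coefficients. -/
def translate (h : d → ℝ) : FourierSpace d →L[ℂ] FourierSpace d :=
  diagonal ⟨fun k => character k h,
    memℓp_infty ⟨1, Set.forall_mem_range.2 fun k => (norm_character k h).le⟩⟩

lemma translate_apply (h : d → ℝ) (v : FourierSpace d) (k : d → ℤ) :
    translate h v k = character k h * v k := rfl

lemma fourierCoeffs_translate {f g : C(UnitAddTorus d, ℂ)} {h : d → ℝ}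
    (hfg : ∀ y, g y = f (y + torusMk h)) : fourierCoeffs g = translate h (fourierCoeffs f) := by
  ext k
  rw [translate_apply, fourierCoeffs_apply, fourierCoeffs_apply, UnitAddTorus.mFourierCoeff,
    UnitAddTorus.mFourierCoeff,
    ← integral_add_right_eq_self (fun t => UnitAddTorus.mFourier (-k) t • f t) (torusMk h),
    ← integral_const_mul]
  refine integral_congr_ae (.of_forall fun t => ?_)
  have hinv : character k h * character (-k) h = 1 := by
    rw [character, character, ← UnitAddTorus.mFourier_add]
    simp [UnitAddTorus.mFourier_zero]
  simp only [mFourier_add_torusMk, smul_eq_mul, hfg]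
  linear_combination (-UnitAddTorus.mFourier (-k) t * f (t + torusMk h)) * hinv

lemma mulOp_translate {b b' : C(UnitAddTorus d, ℂ)} {h : d → ℝ}
    (hb : ∀ y, b' y = b (y + torusMk h)) (v : FourierSpace d) :
    mulOp b' (translate h v) = translate h (mulOp b v) := by
  have hl : Continuous fun v => mulOp b' (translate h v) := by fun_prop
  have hr : Continuous fun v => translate h (mulOp b v) := by fun_prop
  refine congrFun (denseRange_fourierCoeffs.equalizer hl hr (funext fun g => ?_)) v
  let g' : C(UnitAddTorus d, ℂ) := g.comp ⟨fun y => y + torusMk h, by fun_prop⟩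
  have hg : fourierCoeffs g' = translate h (fourierCoeffs g) :=
    fourierCoeffs_translate fun y => rfl
  simp only [Function.comp_apply, ← hg, mulOp_fourierCoeffs]
  exact fourierCoeffs_translate fun y => by simp [hb, g']

lemma fourierCoeffs_eq_of_hasSum {a : FourierSpace d} (ha : Summable fun k => ‖a k‖)
    {f : C(UnitAddTorus d, ℂ)}
    (hf : ∀ y : d → ℝ, HasSum (fun k => a k * character k y) (f (torusMk y))) :
    fourierCoeffs f = a := by
  classical
  have hs : Summable fun k => a k • (UnitAddTorus.mFourier k : C(UnitAddTorus d, ℂ)) :=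
    .of_norm (by simpa [norm_smul, UnitAddTorus.mFourier_norm] using ha)
  have htsum : ∑' k, a k • (UnitAddTorus.mFourier k : C(UnitAddTorus d, ℂ)) = f := by
    ext y
    rw [← torusMk_torusRep y]
    exact (hs.hasSum.map (ContinuousMap.evalCLM ℂ (torusMk (torusRep y)) : _ →L[ℂ] ℂ)
      (ContinuousLinearMap.continuous _)).unique (hf (torusRep y))
  have hsum := fourierCoeffs.hasSum (htsum ▸ hs.hasSum)
  refine hsum.unique ?_
  simpa only [map_smul, fourierCoeffs_mFourier, ← lp.single_smul, smul_eq_mul, mul_one]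
    using lp.hasSum_single (by simp) a

end Fourier

section Smooth

variable {Z : Type*} [NormedAddCommGroup Z] [NormedSpace ℝ Z]
  {E F : Type*} [NormedAddCommGroup E] [NormedSpace ℂ E] [NormedAddCommGroup F] [NormedSpace ℂ F]

lemma contDiff_complexCLM_comp (T : E →L[ℂ] F) {f : Z → E} (hf : ContDiff ℝ ∞ f) :
    ContDiff ℝ ∞ fun q => T (f q) :=
  (T.restrictScalars ℝ).contDiff.comp hf

lemma contDiff_complexCLM_apply {T : Z → E →L[ℂ] F} {f : Z → E} (hT : ContDiff ℝ ∞ T)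
    (hf : ContDiff ℝ ∞ f) : ContDiff ℝ ∞ fun q => T q (f q) := by
  have h : ContDiff ℂ ∞ fun p : (E →L[ℂ] F) × E => p.1 p.2 := isBoundedBilinearMap_apply.contDiff
  exact (h.restrict_scalars ℝ).comp (hT.prodMk hf)

end Smooth

section Covariant

variable {d : Type*} [Fintype d] {Z : Type} [NormedAddCommGroup Z] [NormedSpace ℝ Z]
  {ι : (d → ℝ) →L[ℝ] Z} {s : Z → FourierSpace d}

/-- `s` is a smooth family of Fourier coefficients for which moving the base point along `ι` is
translation on the torus. These are the coefficient families of the functions `y ↦ S (q + ι y)`,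
for `S` smooth and periodic. -/
structure SmoothCovariant (ι : (d → ℝ) →L[ℝ] Z) (s : Z → FourierSpace d) : Prop where
  contDiff : ContDiff ℝ ∞ s
  covariant (q : Z) (h : d → ℝ) : s (q + ι h) = translate h (s q)

/-- The frequency `2π kᵢ` of the `k`-th character in the `i`-th direction. -/
def frequency (i : d) (k : d → ℤ) : ℝ := 2 * Real.pi * k i

lemma character_smul_single [DecidableEq d] (k : d → ℤ) (i : d) (r : ℝ) :
    character k (r • Pi.single i 1) = Complex.exp (r * (frequency i k * Complex.I)) := by
  rw [character_eq_exp, Finset.sum_eq_single i]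
  · simp only [frequency, Pi.smul_apply, Pi.single_eq_same, smul_eq_mul, mul_one]
    push_cast
    ring_nf
  · exact fun j _ hj => by simp [hj]
  · simp

namespace SmoothCovariant

lemma sub {t : Z → FourierSpace d} (hs : SmoothCovariant ι s) (ht : SmoothCovariant ι t) :
    SmoothCovariant ι fun q => s q - t q :=
  ⟨hs.contDiff.sub ht.contDiff, fun q h => by rw [hs.covariant, ht.covariant, map_sub]⟩

lemma diagonal (hs : SmoothCovariant ι s) (m : lp (fun _ : d → ℤ => ℂ) ∞) :
    SmoothCovariant ι fun q => diagonal m (s q) :=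
  ⟨contDiff_complexCLM_comp _ hs.contDiff,
    fun q h => by rw [hs.covariant, translate, diagonal_comm]⟩

lemma dirDeriv_apply [DecidableEq d] (hs : SmoothCovariant ι s) (i : d) (q : Z) (k : d → ℤ) :
    CellProblem.dirDeriv (ι (Pi.single i 1)) s q k = frequency i k * Complex.I * s q k := by
  set e : Z := ι (Pi.single i 1)
  have hline : HasDerivAt (fun r : ℝ => q + r • e) e 0 := by
    simpa using ((hasDerivAt_id (0 : ℝ)).smul_const e).const_add q
  have hs0 : HasFDerivAt s (_root_.fderiv ℝ s q) (q + (0 : ℝ) • e) := by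
    simpa using (hs.contDiff.differentiable (by simp) q).hasFDerivAt
  have hcoord := ((lp.evalCLM ℂ (fun _ : d → ℤ => ℂ) 2 k).restrictScalars ℝ).hasFDerivAt
    |>.comp_hasDerivAt (0 : ℝ) (hs0.comp_hasDerivAt (0 : ℝ) hline)
  have hexp : HasDerivAt
      (fun r : ℝ => Complex.exp (r * (frequency i k * Complex.I)) * s q k)
      (frequency i k * Complex.I * s q k) 0 := by
    simpa using ((Complex.ofRealCLM.hasDerivAt (x := (0 : ℝ))).mul_const
      (frequency i k * Complex.I)).cexp.mul_const (s q k)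
  refine hcoord.unique (hexp.congr_of_eventuallyEq (.of_forall fun r => ?_))
  change s (q + r • ι (Pi.single i 1)) k = _
  rw [← map_smul, hs.covariant, translate_apply, character_smul_single]

protected lemma dirDeriv [DecidableEq d] (hs : SmoothCovariant ι s) (i : d) :
    SmoothCovariant ι (dirDeriv (ι (Pi.single i 1)) s) where
  contDiff := (contDiff_infty_iff_fderiv.1 hs.contDiff).2.clm_apply contDiff_const
  covariant q h := by
    ext k
    rw [translate_apply, hs.dirDeriv_apply, hs.dirDeriv_apply, hs.covariant, translate_apply]
    ring

lemma exists_prod_one_add_frequency_sq_mul (hs : SmoothCovariant ι s) (I : Finset d) :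
    ∃ v, SmoothCovariant ι v ∧
      ∀ q k, v q k = (∏ i ∈ I, (1 + frequency i k ^ 2) : ℝ) * s q k := by
  classical
  induction I using Finset.induction_on with
  | empty => exact ⟨s, hs, fun q k => by simp⟩
  | insert i I hi ih =>
    obtain ⟨v, hv, hvs⟩ := ih
    refine ⟨_, hv.sub ((hv.dirDeriv i).dirDeriv i), fun q k => ?_⟩
    rw [lp.coeFn_sub, Pi.sub_apply, (hv.dirDeriv i).dirDeriv_apply, hv.dirDeriv_apply, hvs,
      Finset.prod_insert hi]
    push_cast
    linear_combination (-(frequency i k : ℂ) ^ 2 * (∏ j ∈ I, (1 + (frequency j k : ℂ) ^ 2))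
      * s q k) * Complex.I_sq

end SmoothCovariant

namespace SmoothPeriodic

variable {f g : Z → ℂ}

lemma smoothCovariant (hf : SmoothPeriodic ι f) :
    SmoothCovariant ι fun q => fourierCoeffs (hf.lift q) :=
  ⟨contDiff_complexCLM_comp _ hf.contDiff_lift,
    fun q h => fourierCoeffs_translate (hf.lift_add_apply q h)⟩

lemma fourierCoeffs_lift_dirDeriv [DecidableEq d] (hf : SmoothPeriodic ι f) (i : d) (q : Z)
    (k : d → ℤ) : fourierCoeffs ((hf.dirDeriv (ι (Pi.single i 1))).lift q) k
      = frequency i k * Complex.I * fourierCoeffs (hf.lift q) k := by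
  have hcomp := dirDeriv_clm_comp (fourierCoeffs.restrictScalars ℝ)
    (hf.contDiff_lift.differentiable (by simp) q) (ι (Pi.single i 1))
  rw [← hf.dirDeriv_lift]
  exact (congrArg (· k) hcomp).symm.trans (hf.smoothCovariant.dirDeriv_apply i q k)

lemma eq_of_fourierCoeffs_lift (hf : SmoothPeriodic ι f) (hg : SmoothPeriodic ι g)
    (h : ∀ q, fourierCoeffs (hf.lift q) = fourierCoeffs (hg.lift q)) : f = g := by
  funext q
  have hq : hf.lift q (torusMk 0) = hg.lift q (torusMk 0) := by
    rw [fourierCoeffs_injective (h q)]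
  simpa only [lift_torusMk, map_zero, add_zero] using hq

end SmoothPeriodic

lemma summable_prod_apply {κ : Type*} {f : κ → ℝ} (hf : Summable f) (h0 : ∀ n, 0 ≤ f n) :
    Summable fun k : d → κ => ∏ i, f (k i) := by
  classical
  refine summable_of_sum_le (c := ∏ _i : d, ∑' n, f n)
    (fun k => Finset.prod_nonneg fun i _ => h0 _) fun u => ?_
  have hu : u ⊆ Fintype.piFinset fun i : d => u.image fun k => k i := fun k hk =>
    Fintype.mem_piFinset.2 fun i => Finset.mem_image_of_mem _ hk
  calc ∑ k ∈ u, ∏ i, f (k i)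
      ≤ ∑ k ∈ Fintype.piFinset fun i : d => u.image fun k => k i, ∏ i, f (k i) :=
        Finset.sum_le_sum_of_subset_of_nonneg hu fun k _ _ => Finset.prod_nonneg fun i _ => h0 _
    _ = ∏ i : d, ∑ n ∈ u.image fun k => k i, f n := (Finset.prod_univ_sum _ _).symm
    _ ≤ ∏ _i : d, ∑' n, f n :=
        Finset.prod_le_prod (fun i _ => Finset.sum_nonneg fun n _ => h0 n)
          fun i _ => hf.sum_le_tsum _ fun n _ => h0 n

lemma summable_prod_inv_one_add_frequency_sq :
    Summable fun k : d → ℤ => ∏ i, (1 + frequency i k ^ 2)⁻¹ := by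
  refine summable_prod_apply (f := fun n : ℤ => (1 + (2 * Real.pi * n) ^ 2)⁻¹) ?_
    fun n => by positivity
  refine (Real.summable_one_div_int_pow.2 one_lt_two).of_norm_bounded_eventually ?_
  filter_upwards [(Set.finite_singleton (0 : ℤ)).compl_mem_cofinite] with n hn
  have hn : (n : ℝ) ≠ 0 := Int.cast_ne_zero.2 hn
  rw [Real.norm_of_nonneg (by positivity), one_div]
  gcongr
  have hpi : 1 ≤ (2 * Real.pi) ^ 2 := one_le_pow₀ (by linarith [Real.pi_gt_three])
  nlinarith [sq_nonneg (n : ℝ)]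

lemma exists_hasSum_prod_inv_one_add_frequency_sq_mul :
    ∃ Λ : FourierSpace d →L[ℂ] ℂ, ∀ v : FourierSpace d,
      HasSum (fun k => (∏ i, (1 + frequency i k ^ 2)⁻¹ : ℝ) * v k) (Λ v) := by
  have hmem : Memℓp (fun k : d → ℤ => ((∏ i, (1 + frequency i k ^ 2)⁻¹ : ℝ) : ℂ)) 2 := by
    refine Memℓp.of_exponent_ge (q := 1) (memℓp_gen ?_) one_le_two
    simpa only [ENNReal.toReal_one, Real.rpow_one, Complex.norm_real] using
      summable_prod_inv_one_add_frequency_sq.norm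
  refine ⟨innerSL ℂ ⟨_, hmem⟩, fun v => ?_⟩
  refine (lp.hasSum_inner ⟨_, hmem⟩ v).congr_fun fun k => ?_
  simp [mul_comm]

/- Dividing by `∏ (1 + ωᵢ²)` makes square-summable coefficients summable; covariance supplies the
compensating factor as the smooth family `∏ (1 - ∂ᵢ²) s`. -/
lemma SmoothCovariant.exists_smoothPeriodic (hs : SmoothCovariant ι s) :
    ∃ (S : Z → ℂ) (hS : SmoothPeriodic ι S), ∀ q, fourierCoeffs (hS.lift q) = s q := by
  obtain ⟨v, hv, hvs⟩ := hs.exists_prod_one_add_frequency_sq_mul Finset.univ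
  obtain ⟨Λ, hΛ⟩ := exists_hasSum_prod_inv_one_add_frequency_sq_mul (d := d)
  have hweight (k : d → ℤ) : ∏ i, (1 + frequency i k ^ 2) ≠ 0 :=
    Finset.prod_ne_zero_iff.2 fun i _ => by positivity
  have hsum (q : Z) : HasSum (fun k => s q k) (Λ (v q)) := by
    refine (hΛ (v q)).congr_fun fun k => ?_
    rw [hvs, ← mul_assoc, ← Complex.ofReal_mul, Finset.prod_inv_distrib,
      inv_mul_cancel₀ (hweight k), Complex.ofReal_one, one_mul]
  have hS : SmoothPeriodic ι fun q => Λ (v q) := by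
    refine ⟨contDiff_complexCLM_comp Λ hv.contDiff, fun q n => congrArg Λ ?_⟩
    ext k
    rw [hv.covariant, translate_apply, character_intCast, one_mul]
  refine ⟨_, hS, fun q => fourierCoeffs_eq_of_hasSum (hsum q).summable.norm fun y => ?_⟩
  rw [hS.lift_torusMk]
  refine (hsum (q + ι y)).congr_fun fun k => ?_
  rw [hs.covariant, translate_apply, mul_comm]

end Covariant

lemma exists_contDiff_unique_add_apply_eq {Z E : Type*} [NormedAddCommGroup Z] [NormedSpace ℝ Z]
    [NormedAddCommGroup E] [NormedSpace ℂ E] [CompleteSpace E] {T : Z → E →L[ℂ] E} {g : Z → E}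
    (hT : ContDiff ℝ ∞ T) (hg : ContDiff ℝ ∞ g) (hlt : ∀ q, ‖T q‖ < 1) :
    ∃ w : Z → E, ContDiff ℝ ∞ w ∧ ∀ q v, v + T q v = g q ↔ v = w q := by
  have hunit (q : Z) : IsUnit (1 + T q) := by
    simpa using isUnit_one_sub_of_norm_lt_one (x := -T q) (by rw [norm_neg]; exact hlt q)
  have hinv : ContDiff ℝ ∞ fun q => Ring.inverse (1 + T q) := by
    refine contDiff_iff_contDiffAt.2 fun q => ?_
    obtain ⟨u, hu⟩ := hunit q
    have h : ContDiffAt ℝ ∞ Ring.inverse (1 + T q) := by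
      rw [← hu]
      exact (contDiffAt_ringInverse ℂ u).restrict_scalars ℝ
    exact h.comp q (contDiff_const.add hT).contDiffAt
  refine ⟨_, contDiff_complexCLM_apply hinv hg, fun q v => ⟨fun hv => ?_, ?_⟩⟩
  · rw [← hv]
    exact (congrArg (· v) (Ring.inverse_mul_cancel _ (hunit q))).symm
  · rintro rfl
    exact congrArg (· (g q)) (Ring.mul_inverse_cancel _ (hunit q))

section ConjSum

variable {K J : Type*} [Fintype J]

/-- The operator `v ↦ ∑ⱼ rⱼ M (rⱼ v)`. With `rⱼ` the Riesz transforms and `M` multiplication by `b`,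
this is `|∇|⁻¹ ∇·(b ∇ |∇|⁻¹ v)`. -/
def conjSum (r : J → lp (fun _ : K => ℂ) ∞)
    (M : lp (fun _ : K => ℂ) 2 →L[ℂ] lp (fun _ : K => ℂ) 2) :
    lp (fun _ : K => ℂ) 2 →L[ℂ] lp (fun _ : K => ℂ) 2 :=
  ∑ j, diagonal (r j) ∘L M ∘L diagonal (r j)

lemma conjSum_apply (r : J → lp (fun _ : K => ℂ) ∞)
    (M : lp (fun _ : K => ℂ) 2 →L[ℂ] lp (fun _ : K => ℂ) 2) (v : lp (fun _ : K => ℂ) 2) :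
    conjSum r M v = ∑ j, diagonal (r j) (M (diagonal (r j) v)) := by
  simp [conjSum]

variable {r : J → lp (fun _ : K => ℂ) ∞} {γ : ℝ}

lemma norm_conjSum_apply_le (hr : ∀ k, ∑ j, ‖r j k‖ ^ 2 ≤ 1)
    {M : lp (fun _ : K => ℂ) 2 →L[ℂ] lp (fun _ : K => ℂ) 2} (hγ : 0 ≤ γ) (hM : ∀ v, ‖M v‖ ≤ γ * ‖v‖)
    (v : lp (fun _ : K => ℂ) 2) : ‖conjSum r M v‖ ≤ γ * ‖v‖ := by
  rw [conjSum_apply]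
  refine le_of_sq_le_sq ?_ (by positivity)
  calc ‖∑ j, diagonal (r j) (M (diagonal (r j) v))‖ ^ 2
      ≤ ∑ j, ‖M (diagonal (r j) v)‖ ^ 2 := norm_sum_diagonal_sq_le hr _
    _ ≤ ∑ j, γ ^ 2 * ‖diagonal (r j) v‖ ^ 2 := by
        gcongr with j
        rw [← mul_pow]
        exact pow_le_pow_left₀ (norm_nonneg _) (hM _) 2
    _ ≤ γ ^ 2 * ‖v‖ ^ 2 := by
        rw [← Finset.mul_sum]
        gcongr
        exact sum_norm_sq_diagonal_le hr v
    _ = (γ * ‖v‖) ^ 2 := by ring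

end ConjSum

section Symbols

variable {d J : Type*} [Fintype J]

/-- The Euclidean length of the frequencies in the directions `e`, the symbol of `|∇|`. -/
def spatialFrequency (e : J → d) (k : d → ℤ) : ℝ := √(∑ j, frequency (e j) k ^ 2)

lemma sq_spatialFrequency (e : J → d) (k : d → ℤ) :
    spatialFrequency e k ^ 2 = ∑ j, frequency (e j) k ^ 2 :=
  Real.sq_sqrt (Finset.sum_nonneg fun _ _ => sq_nonneg _)

lemma spatialFrequency_nonneg (e : J → d) (k : d → ℤ) : 0 ≤ spatialFrequency e k :=
  Real.sqrt_nonneg _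

lemma sq_frequency_le (e : J → d) (j : J) (k : d → ℤ) :
    frequency (e j) k ^ 2 ≤ spatialFrequency e k ^ 2 := by
  rw [sq_spatialFrequency]
  exact Finset.single_le_sum (f := fun j => frequency (e j) k ^ 2) (fun _ _ => sq_nonneg _)
    (Finset.mem_univ j)

/-- The symbol of the constant-coefficient operator `μ + ∂_{i₀} - κ ∑ⱼ ∂_{e j}²`. -/
def parabolicSymbol (μ κ : ℝ) (i₀ : d) (e : J → d) (k : d → ℤ) : ℂ :=
  μ + frequency i₀ k * Complex.I + κ * spatialFrequency e k ^ 2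

variable {μ κ : ℝ} {i₀ : d} {e : J → d}

lemma le_norm_parabolicSymbol (k : d → ℤ) :
    μ + κ * spatialFrequency e k ^ 2 ≤ ‖parabolicSymbol μ κ i₀ e k‖ := by
  refine le_of_eq_of_le ?_ (Complex.re_le_norm _)
  simp [parabolicSymbol, ← Complex.ofReal_pow]

lemma parabolicSymbol_ne_zero (hμ : 0 < μ) (hκ : 0 < κ) (k : d → ℤ) :
    parabolicSymbol μ κ i₀ e k ≠ 0 :=
  norm_pos_iff.1 (lt_of_lt_of_le (by positivity) (le_norm_parabolicSymbol k))

lemma norm_sq_spatialFrequency_div_parabolicSymbol_le (hμ : 0 < μ) (hκ : 0 < κ) (k : d → ℤ) :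
    ‖(spatialFrequency e k : ℂ) ^ 2 / parabolicSymbol μ κ i₀ e k‖ ≤ κ⁻¹ := by
  have h := le_norm_parabolicSymbol (μ := μ) (κ := κ) (i₀ := i₀) (e := e) k
  rw [norm_div, norm_pow, Complex.norm_real, Real.norm_eq_abs, sq_abs,
    div_le_iff₀ (lt_of_lt_of_le (by positivity) h), inv_mul_eq_div, le_div_iff₀ hκ]
  linarith

lemma norm_spatialFrequency_div_parabolicSymbol_le (hμ : 0 < μ) (hκ : 0 < κ) (k : d → ℤ) :
    ‖(spatialFrequency e k : ℂ) / parabolicSymbol μ κ i₀ e k‖ ≤ μ⁻¹ + κ⁻¹ := by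
  have h := le_norm_parabolicSymbol (μ := μ) (κ := κ) (i₀ := i₀) (e := e) k
  have hρ := spatialFrequency_nonneg e k
  rw [norm_div, Complex.norm_of_nonneg hρ, div_le_iff₀ (lt_of_lt_of_le (by positivity) h)]
  calc spatialFrequency e k ≤ 1 + spatialFrequency e k ^ 2 := by nlinarith
    _ ≤ 1 + spatialFrequency e k ^ 2 + (μ⁻¹ * κ * spatialFrequency e k ^ 2 + κ⁻¹ * μ) := by
        rw [le_add_iff_nonneg_right]; positivity
    _ = (μ⁻¹ + κ⁻¹) * (μ + κ * spatialFrequency e k ^ 2) := by field_simp; ring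
    _ ≤ (μ⁻¹ + κ⁻¹) * ‖parabolicSymbol μ κ i₀ e k‖ := by gcongr

lemma sum_norm_sq_frequency_div_spatialFrequency_le (k : d → ℤ) :
    ∑ j, ‖frequency (e j) k * Complex.I / spatialFrequency e k‖ ^ 2 ≤ 1 := by
  have h (j : J) : ‖frequency (e j) k * Complex.I / spatialFrequency e k‖ ^ 2
      = frequency (e j) k ^ 2 / spatialFrequency e k ^ 2 := by
    simp [div_pow]
  rw [Finset.sum_congr rfl fun j _ => h j, ← Finset.sum_div, ← sq_spatialFrequency]
  exact div_self_le_one _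

/-- The Riesz transforms `∂_{e j} / |∇|`, as Fourier multipliers. At the frequencies where the
denominator vanishes the multiplier is `0`. -/
def riesz (e : J → d) (j : J) : lp (fun _ : d → ℤ => ℂ) ∞ :=
  ⟨fun k => frequency (e j) k * Complex.I / spatialFrequency e k,
    memℓp_infty ⟨1, Set.forall_mem_range.2 fun k => (sq_le_one_iff₀ (norm_nonneg _)).1 <|
      (Finset.single_le_sum (f := fun j =>
          ‖frequency (e j) k * Complex.I / spatialFrequency e k‖ ^ 2)
        (fun _ _ => sq_nonneg _) (Finset.mem_univ j)).trans
      (sum_norm_sq_frequency_div_spatialFrequency_le k)⟩⟩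

lemma riesz_apply (j : J) (k : d → ℤ) :
    riesz e j k = frequency (e j) k * Complex.I / spatialFrequency e k := rfl

lemma spatialFrequency_mul_riesz (j : J) (k : d → ℤ) :
    spatialFrequency e k * riesz e j k = frequency (e j) k * Complex.I := by
  rcases eq_or_ne (spatialFrequency e k) 0 with h | h
  · have hj : frequency (e j) k = 0 := by
      have := sq_frequency_le e j k
      rw [h, zero_pow two_ne_zero] at this
      exact pow_eq_zero_iff two_ne_zero |>.1 (this.antisymm (sq_nonneg _))
    simp [h, hj]
  · rw [riesz_apply]
    exact mul_div_cancel₀ _ (Complex.ofReal_ne_zero.2 h)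

end Symbols

section Existence

variable {d J : Type*} [Fintype d] [Fintype J] {Z : Type} [NormedAddCommGroup Z]
  [NormedSpace ℝ Z] {ι : (d → ℝ) →L[ℝ] Z}

namespace SmoothCovariant

lemma sum {f : J → Z → FourierSpace d} (hf : ∀ j, SmoothCovariant ι (f j)) :
    SmoothCovariant ι fun q => ∑ j, f j q :=
  ⟨.sum fun j _ => (hf j).contDiff, fun q h => by
    rw [map_sum]
    exact Finset.sum_congr rfl fun j _ => (hf j).covariant q h⟩

lemma clm_apply {M : Z → FourierSpace d →L[ℂ] FourierSpace d} {s : Z → FourierSpace d}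
    (hM : ContDiff ℝ ∞ M) (hMτ : ∀ q h v, M (q + ι h) (translate h v) = translate h (M q v))
    (hs : SmoothCovariant ι s) : SmoothCovariant ι fun q => M q (s q) :=
  ⟨contDiff_complexCLM_apply hM hs.contDiff, fun q h => by rw [hs.covariant, hMτ]⟩

end SmoothCovariant

variable {r : J → lp (fun _ : d → ℤ => ℂ) ∞} {G : lp (fun _ : d → ℤ => ℂ) ∞} {γ c : ℝ}

lemma exists_smoothCovariant_eq_diagonal_sub_conjSum (hr : ∀ k, ∑ j, ‖r j k‖ ^ 2 ≤ 1)
    (hG : ∀ k, ‖G k‖ ≤ c) (hγ : 0 ≤ γ) (hcγ : c * γ < 1)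
    {M : Z → FourierSpace d →L[ℂ] FourierSpace d} (hM : ContDiff ℝ ∞ M)
    (hMτ : ∀ q h v, M (q + ι h) (translate h v) = translate h (M q v))
    (hMγ : ∀ q v, ‖M q v‖ ≤ γ * ‖v‖) {g : Z → FourierSpace d} (hg : SmoothCovariant ι g) :
    ∃ w, SmoothCovariant ι w ∧ ∀ q, w q = diagonal G (g q - conjSum r (M q) (w q)) := by
  have hc : 0 ≤ c := (norm_nonneg _).trans (hG 0)
  have hT : ContDiff ℝ ∞ fun q => diagonal G ∘L conjSum r (M q) := by
    have hcomp {T : Z → FourierSpace d →L[ℂ] FourierSpace d} (hT : ContDiff ℝ ∞ T)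
        (m : lp (fun _ : d → ℤ => ℂ) ∞) : ContDiff ℝ ∞ fun q => diagonal m ∘L T q :=
      contDiff_complexCLM_comp (ContinuousLinearMap.compL ℂ _ _ _ (diagonal m)) hT
    exact hcomp (.sum fun j _ => hcomp (contDiff_complexCLM_comp
      ((ContinuousLinearMap.compL ℂ _ _ _).flip (diagonal (r j))) hM) (r j)) G
  have hT1 (q : Z) : ‖diagonal G ∘L conjSum r (M q)‖ < 1 := by
    refine (ContinuousLinearMap.opNorm_le_bound _ (by positivity) fun v => ?_).trans_lt hcγ
    rw [mul_assoc]
    exact (norm_diagonal_apply_le hc hG _).trans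
      (mul_le_mul_of_nonneg_left (norm_conjSum_apply_le hr hγ (hMγ q) v) hc)
  obtain ⟨w, hw, hwq⟩ :=
    exists_contDiff_unique_add_apply_eq hT (hg.diagonal G).contDiff hT1
  refine ⟨w, ⟨hw, fun q h => ((hwq _ _).1 ?_).symm⟩, fun q => ?_⟩
  · have htranslate (m : lp (fun _ : d → ℤ => ℂ) ∞) (v : FourierSpace d) :
        diagonal m (translate h v) = translate h (diagonal m v) := diagonal_comm _ _ _
    rw [(hg.diagonal G).covariant, ← (hwq q (w q)).2 rfl, map_add]
    simp only [ContinuousLinearMap.comp_apply, conjSum_apply, htranslate, hMτ, map_sum]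
  · rw [map_sub, eq_sub_iff_add_eq]
    exact (hwq q (w q)).2 rfl

variable {μ κ : ℝ}

/- The unknown of the fixed-point problem is `w = |∇| s`: multiplying by `|∇|² / σ` and by the
Riesz transforms keeps the perturbation `M` of norm `γ < κ` a contraction. -/
lemma exists_smoothCovariant_parabolic (hμ : 0 < μ) (hγ : 0 ≤ γ) (hγκ : γ < κ)
    {M : Z → FourierSpace d →L[ℂ] FourierSpace d} (hM : ContDiff ℝ ∞ M)
    (hMτ : ∀ q h v, M (q + ι h) (translate h v) = translate h (M q v))
    (hMγ : ∀ q v, ‖M q v‖ ≤ γ * ‖v‖) {f : J → Z → FourierSpace d}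
    (hf : ∀ j, SmoothCovariant ι (f j)) (i₀ : d) (e : J → d) :
    ∃ s, SmoothCovariant ι s ∧ ∀ q, ∃ p : J → FourierSpace d,
      (∀ j k, p j k = frequency (e j) k * Complex.I * s q k) ∧
      ∀ k, parabolicSymbol μ κ i₀ e k * s q k
        = ∑ j, frequency (e j) k * Complex.I * (f j q - M q (p j)) k := by
  have hκ : 0 < κ := hγ.trans_lt hγκ
  let G : lp (fun _ : d → ℤ => ℂ) ∞ :=
    ⟨fun k => (spatialFrequency e k : ℂ) ^ 2 / parabolicSymbol μ κ i₀ e k, memℓp_infty ⟨_,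
      Set.forall_mem_range.2 (norm_sq_spatialFrequency_div_parabolicSymbol_le hμ hκ)⟩⟩
  let G₁ : lp (fun _ : d → ℤ => ℂ) ∞ :=
    ⟨fun k => (spatialFrequency e k : ℂ) / parabolicSymbol μ κ i₀ e k, memℓp_infty ⟨_,
      Set.forall_mem_range.2 (norm_spatialFrequency_div_parabolicSymbol_le hμ hκ)⟩⟩
  obtain ⟨w, hw, hwq⟩ := exists_smoothCovariant_eq_diagonal_sub_conjSum (r := riesz e) (G := G)
    sum_norm_sq_frequency_div_spatialFrequency_le
    (norm_sq_spatialFrequency_div_parabolicSymbol_le hμ hκ) hγ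
    ((inv_mul_lt_one₀ hκ).2 hγκ) hM hMτ hMγ (.sum fun j => (hf j).diagonal (riesz e j))
  let v (q : Z) : FourierSpace d :=
    ∑ j, diagonal (riesz e j) (f j q - M q (diagonal (riesz e j) (w q)))
  have hv : SmoothCovariant ι v := .sum fun j =>
    ((hf j).sub (.clm_apply hM hMτ (hw.diagonal _))).diagonal _
  have hwv (q : Z) (k : d → ℤ) : w q k = G k * v q k := by
    rw [hwq q, conjSum_apply, ← Finset.sum_sub_distrib]
    simp only [← map_sub, diagonal_apply, v]
  refine ⟨_, hv.diagonal G₁, fun q => ⟨fun j => diagonal (riesz e j) (w q), fun j k => ?_,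
    fun k => ?_⟩⟩
  · rw [diagonal_apply, diagonal_apply, hwv, ← spatialFrequency_mul_riesz]
    simp only [G, G₁]
    ring
  · rw [diagonal_apply]
    have hσ : parabolicSymbol μ κ i₀ e k * G₁ k = spatialFrequency e k :=
      mul_div_cancel₀ _ (parabolicSymbol_ne_zero hμ hκ k)
    rw [← mul_assoc, hσ]
    simp only [v, lp.coeFn_sum, Finset.sum_apply, Finset.mul_sum, diagonal_apply, ← mul_assoc,
      spatialFrequency_mul_riesz]

end Existence

section DivergenceForm

section Equation

variable {J Z 𝕜 : Type*} [NormedAddCommGroup Z] [NormedSpace ℝ Z] [NontriviallyNormedField 𝕜]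
  [NormedAlgebra ℝ 𝕜]

/-- The flux `a ∂S + c`, for the derivative `∂` in the direction `v`. -/
def flux (a S c : Z → 𝕜) (v z : Z) : 𝕜 := a z * dirDeriv v S z + c z

/-- `S` solves `μ S + ∂₀ S = ∑ⱼ ∂ⱼ (a ∂ⱼ S + cⱼ)`, where `∂₀` and `∂ⱼ` are the derivatives in the
directions `v₀` and `v j`. -/
def IsParabolicSol [Fintype J] (μ : 𝕜) (v₀ : Z) (v : J → Z) (a S : Z → 𝕜) (c : J → Z → 𝕜) :
    Prop :=
  ∀ z, μ * S z + dirDeriv v₀ S z = ∑ j, dirDeriv (v j) (flux a S (c j) (v j)) z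

end Equation

variable {d J : Type*} {Z : Type} [NormedAddCommGroup Z] [NormedSpace ℝ Z] {ι : (d → ℝ) →L[ℝ] Z}

namespace SmoothPeriodic

lemma flux {𝕜 : Type} [NontriviallyNormedField 𝕜] [NormedAlgebra ℝ 𝕜] {a S c : Z → 𝕜}
    (ha : SmoothPeriodic ι a) (hS : SmoothPeriodic ι S) (hc : SmoothPeriodic ι c) (v : Z) :
    SmoothPeriodic ι (flux a S c v) :=
  (ha.mul (hS.dirDeriv v)).add hc

lemma norm_lift_le {b : Z → ℂ} {γ : ℝ} (hb : SmoothPeriodic ι b) (hγ : 0 ≤ γ)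
    (hbγ : ∀ z, ‖b z‖ ≤ γ) (q : Z) : ‖hb.lift q‖ ≤ γ :=
  (ContinuousMap.norm_le _ hγ).2 fun _ => hbγ _

variable [Fintype d]

lemma contDiff_mulOp_lift {b : Z → ℂ} (hb : SmoothPeriodic ι b) :
    ContDiff ℝ ∞ fun q => mulOp (hb.lift q) :=
  contDiff_complexCLM_comp mulOp hb.contDiff_lift

lemma fourierCoeffs_lift_const_mul_add {f g : Z → ℂ} (hf : SmoothPeriodic ι f)
    (hg : SmoothPeriodic ι g) (c : ℂ) (q : Z) (k : d → ℤ) :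
    fourierCoeffs ((((SmoothPeriodic.const c).mul hf).add hg).lift q) k
      = c * fourierCoeffs (hf.lift q) k + fourierCoeffs (hg.lift q) k := by
  have h : (((SmoothPeriodic.const c).mul hf).add hg).lift q = c • hf.lift q + hg.lift q := rfl
  rw [h, map_add, map_smul]
  rfl

lemma fourierCoeffs_lift_sum {J : Type*} [Fintype J] {f : J → Z → ℂ}
    (hf : ∀ j, SmoothPeriodic ι (f j)) (q : Z) (k : d → ℤ) :
    fourierCoeffs ((SmoothPeriodic.sum (s := Finset.univ) fun j _ => hf j).lift q) k
      = ∑ j, fourierCoeffs ((hf j).lift q) k := by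
  have h : (SmoothPeriodic.sum (s := Finset.univ) fun j _ => hf j).lift q
      = ∑ j, (hf j).lift q := by
    ext y
    simp only [lift_apply, ContinuousMap.coe_sum, Finset.sum_apply]
  rw [h, map_sum, lp.coeFn_sum, Finset.sum_apply]

lemma fourierCoeffs_lift_flux {a S c : Z → ℂ} (ha : SmoothPeriodic ι a) (hS : SmoothPeriodic ι S)
    (hc : SmoothPeriodic ι c) (κ : ℂ) (v q : Z) :
    fourierCoeffs ((ha.flux hS hc v).lift q) = fourierCoeffs (hc.lift q)
      - mulOp (((SmoothPeriodic.const κ).sub ha).lift q) (fourierCoeffs ((hS.dirDeriv v).lift q))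
      + κ • fourierCoeffs ((hS.dirDeriv v).lift q) := by
  rw [mulOp_fourierCoeffs, ← map_smul, ← map_sub, ← map_add]
  congr 1
  ext y
  simp only [lift_apply, CellProblem.flux, ContinuousMap.add_apply, ContinuousMap.sub_apply,
    ContinuousMap.mul_apply, ContinuousMap.smul_apply, smul_eq_mul]
  ring

end SmoothPeriodic

variable {μ κ γ : ℝ} (i₀ : d) (e : J → d)

lemma sum_sq_frequency_mul_I [Fintype J] (k : d → ℤ) :
    ∑ j, (frequency (e j) k * Complex.I) ^ 2 = -(spatialFrequency e k : ℂ) ^ 2 := by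
  rw [← Complex.ofReal_pow, sq_spatialFrequency, Complex.ofReal_sum, ← Finset.sum_neg_distrib]
  simp only [mul_pow, Complex.I_sq, mul_neg_one, Complex.ofReal_pow]

variable [Finite d] [DecidableEq d] [Fintype J]

lemma exists_smoothPeriodic_isParabolicSol_complex (hμ : 0 < μ) (hγ : 0 ≤ γ) (hγκ : γ < κ)
    {a : Z → ℂ} (ha : SmoothPeriodic ι a) (haγ : ∀ z, ‖κ - a z‖ ≤ γ) {c : J → Z → ℂ}
    (hc : ∀ j, SmoothPeriodic ι (c j)) :
    ∃ S, SmoothPeriodic ι S ∧ IsParabolicSol (μ : ℂ) (ι (Pi.single i₀ 1))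
      (fun j => ι (Pi.single (e j) 1)) a S c := by
  have := Fintype.ofFinite d
  have hb : SmoothPeriodic ι fun z => κ - a z := (SmoothPeriodic.const _).sub ha
  obtain ⟨s, hs, hsq⟩ := exists_smoothCovariant_parabolic hμ hγ hγκ hb.contDiff_mulOp_lift
    (fun q h => mulOp_translate (hb.lift_add_apply q h))
    (fun q v => (norm_mulOp_apply_le _ v).trans
      (mul_le_mul_of_nonneg_right (hb.norm_lift_le hγ haγ q) (norm_nonneg v)))
    (fun j => (hc j).smoothCovariant) i₀ e
  obtain ⟨S, hS, hSs⟩ := hs.exists_smoothPeriodic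
  have hflux (j : J) := (ha.flux hS (hc j) (ι (Pi.single (e j) 1))).dirDeriv (ι (Pi.single (e j) 1))
  have hL : SmoothPeriodic ι fun z => μ * S z + dirDeriv (ι (Pi.single i₀ 1)) S z :=
    ((SmoothPeriodic.const _).mul hS).add (hS.dirDeriv _)
  have hR := SmoothPeriodic.sum (s := Finset.univ) fun j _ => hflux j
  refine ⟨S, hS, fun z => congrFun (hL.eq_of_fourierCoeffs_lift hR fun q => ?_) z⟩
  obtain ⟨p, hp, hpq⟩ := hsq q
  have hSp (j : J) : fourierCoeffs ((hS.dirDeriv (ι (Pi.single (e j) 1))).lift q) = p j := by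
    ext k
    rw [hp, ← hSs]
    exact hS.fourierCoeffs_lift_dirDeriv _ _ _
  ext k
  have hleft : fourierCoeffs (hL.lift q) k = μ * s q k + frequency i₀ k * Complex.I * s q k := by
    rw [← hSs, ← hS.fourierCoeffs_lift_dirDeriv]
    exact hS.fourierCoeffs_lift_const_mul_add (hS.dirDeriv _) μ q k
  have hright (j : J) : fourierCoeffs ((hflux j).lift q) k
      = frequency (e j) k * Complex.I * (fourierCoeffs ((hc j).lift q) - mulOp (hb.lift q) (p j)) k
        + κ * (frequency (e j) k * Complex.I) ^ 2 * s q k := by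
    have hv := ha.fourierCoeffs_lift_flux hS (hc j) κ (ι (Pi.single (e j) 1)) q
    rw [hSp] at hv
    refine ((ha.flux hS (hc j) _).fourierCoeffs_lift_dirDeriv (e j) q k).trans ?_
    rw [hv, lp.coeFn_add, Pi.add_apply, lp.coeFn_smul, Pi.smul_apply, hp, smul_eq_mul]
    ring
  rw [hleft, SmoothPeriodic.fourierCoeffs_lift_sum hflux,
    Finset.sum_congr rfl fun j _ => hright j, Finset.sum_add_distrib, ← hpq, ← Finset.sum_mul,
    ← Finset.mul_sum, sum_sq_frequency_mul_I, parabolicSymbol]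
  ring

lemma dirDeriv_re {S : Z → ℂ} (hS : ContDiff ℝ ∞ S) (v z : Z) :
    dirDeriv v (fun z => (S z).re) z = (dirDeriv v S z).re :=
  dirDeriv_clm_comp Complex.reCLM (hS.differentiable (by simp) z) v

/- With `a = Λ - (Λ - a)`, the coefficient is a perturbation of the constant `Λ` of size at most
`Λ - ν < Λ`. -/
theorem exists_smoothPeriodic_isParabolicSol {ν Λ : ℝ} (hμ : 0 < μ) (hν : 0 < ν) {a : Z → ℝ}
    (ha : SmoothPeriodic ι a) (haν : ∀ z, ν ≤ a z) (haΛ : ∀ z, a z ≤ Λ) {c : J → Z → ℝ}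
    (hc : ∀ j, SmoothPeriodic ι (c j)) :
    ∃ S, SmoothPeriodic ι S ∧ IsParabolicSol μ (ι (Pi.single i₀ 1))
      (fun j => ι (Pi.single (e j) 1)) a S c := by
  have hνΛ : ν ≤ Λ := (haν 0).trans (haΛ 0)
  have hnorm (z : Z) : ‖(Λ : ℂ) - (a z : ℂ)‖ ≤ Λ - ν := by
    rw [← Complex.ofReal_sub, Complex.norm_of_nonneg (sub_nonneg.2 (haΛ z))]
    linarith [haν z]
  have ha' := ha.comp Complex.ofRealCLM.contDiff
  have hc' (j : J) := (hc j).comp Complex.ofRealCLM.contDiff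
  obtain ⟨S, hS, heq⟩ := exists_smoothPeriodic_isParabolicSol_complex i₀ e hμ (sub_nonneg.2 hνΛ)
    (sub_lt_self Λ hν) ha' hnorm hc'
  have hflux (j : J) (v : Z) : flux a (fun z => (S z).re) (c j) v
      = fun z => (flux (fun z => (a z : ℂ)) S (fun z => (c j z : ℂ)) v z).re := by
    funext z
    simp [flux, dirDeriv_re hS.contDiff]
  refine ⟨fun z => (S z).re, hS.comp Complex.reCLM.contDiff, fun z => ?_⟩
  have hre := congrArg Complex.re (heq z)
  simp only [Complex.add_re, Complex.re_ofReal_mul, Complex.re_sum] at hre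
  rw [dirDeriv_re hS.contDiff, hre]
  refine Finset.sum_congr rfl fun j _ => ?_
  rw [hflux]
  exact (dirDeriv_re (ha'.flux hS (hc' j) _).contDiff _ _).symm

end DivergenceForm

section DirectionalDerivative

variable {E F Z : Type*} [NormedAddCommGroup E] [NormedSpace ℝ E] [NormedAddCommGroup F]
  [NormedSpace ℝ F] [NormedAddCommGroup Z] [NormedSpace ℝ Z]

lemma dirDeriv_comp {f : Z → F} {φ : E → Z} {φ' : E →L[ℝ] Z} {x : E}
    (hf : DifferentiableAt ℝ f (φ x)) (hφ : HasFDerivAt φ φ' x) (v : E) :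
    dirDeriv v (fun x => f (φ x)) x = dirDeriv (φ' v) f (φ x) :=
  congrArg (· v) (hf.hasFDerivAt.comp x hφ).fderiv

lemma hasDerivAt_comp_curve {f : Z → F} {φ : ℝ → Z} {v : Z} {r : ℝ}
    (hf : DifferentiableAt ℝ f (φ r)) (hφ : HasDerivAt φ v r) :
    HasDerivAt (fun r => f (φ r)) (dirDeriv v f (φ r)) r :=
  hf.hasFDerivAt.comp_hasDerivAt r hφ

lemma dirDeriv_add {f g : Z → F} {z : Z} (hf : DifferentiableAt ℝ f z)
    (hg : DifferentiableAt ℝ g z) (v : Z) :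
    dirDeriv v (fun z => f z + g z) z = dirDeriv v f z + dirDeriv v g z :=
  congrArg (· v) (fderiv_fun_add hf hg)

lemma dirDeriv_sub {f g : Z → F} {z : Z} (hf : DifferentiableAt ℝ f z)
    (hg : DifferentiableAt ℝ g z) (v : Z) :
    dirDeriv v (fun z => f z - g z) z = dirDeriv v f z - dirDeriv v g z :=
  congrArg (· v) (fderiv_fun_sub hf hg)

lemma dirDeriv_sum {κ : Type*} {s : Finset κ} {f : κ → Z → F} {z : Z}
    (hf : ∀ j ∈ s, DifferentiableAt ℝ (f j) z) (v : Z) :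
    dirDeriv v (fun z => ∑ j ∈ s, f j z) z = ∑ j ∈ s, dirDeriv v (f j) z := by
  rw [dirDeriv, fderiv_fun_sum hf, sum_apply]
  rfl

lemma dirDeriv_mul {f g : Z → ℝ} {z : Z} (hf : DifferentiableAt ℝ f z)
    (hg : DifferentiableAt ℝ g z) (v : Z) :
    dirDeriv v (fun z => f z * g z) z = f z * dirDeriv v g z + dirDeriv v f z * g z := by
  rw [dirDeriv, fderiv_fun_mul hf hg, mul_comm (dirDeriv v f z)]
  rfl

lemma dirDeriv_sq {f : Z → ℝ} {z : Z} (hf : DifferentiableAt ℝ f z) (v : Z) :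
    dirDeriv v (fun z => f z ^ 2) z = 2 * (f z * dirDeriv v f z) := by
  simp only [sq]
  rw [dirDeriv_mul hf hf]
  ring

lemma dirDeriv_const_mul {f : Z → ℝ} {z : Z} (hf : DifferentiableAt ℝ f z) (c : ℝ) (v : Z) :
    dirDeriv v (fun z => c * f z) z = c * dirDeriv v f z :=
  congrArg (· v) (fderiv_const_mul hf c)

lemma dirDeriv_const (c : F) (v z : Z) : dirDeriv v (fun _ : Z => c) z = 0 := by
  rw [dirDeriv, fderiv_fun_const]
  rfl

lemma dirDeriv_comm {f : Z → F} (hf : ContDiff ℝ 2 f) (u v z : Z) :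
    dirDeriv u (dirDeriv v f) z = dirDeriv v (dirDeriv u f) z := by
  have hf' : DifferentiableAt ℝ (fderiv ℝ f) z :=
    (hf.fderiv_right (m := 1) le_rfl).differentiable one_ne_zero z
  have h (u v : Z) : dirDeriv u (dirDeriv v f) z = fderiv ℝ (fderiv ℝ f) z u v :=
    congrArg (· u) (hf'.hasFDerivAt.clm_apply (hasFDerivAt_const v z)).fderiv |>.trans (by simp)
  rw [h, h]
  exact (hf.contDiffAt.isSymmSndFDerivAt (by simp)).eq u v

end DirectionalDerivative

section Square

lemma isCompact_Tsq : IsCompact Tsq := isCompact_Icc.prod isCompact_Icc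

lemma volume_real_Tsq : (volume : Measure (ℝ × ℝ)).real Tsq = 1 := by
  rw [Measure.real, Tsq, Measure.volume_eq_prod, Measure.prod_prod]
  simp

lemma volume_restrict_Tsq : (volume : Measure (ℝ × ℝ)).restrict Tsq
    = (volume.restrict (Set.Icc (0 : ℝ) 1)).prod (volume.restrict (Set.Icc (0 : ℝ) 1)) := by
  rw [Tsq, Measure.volume_eq_prod, Measure.prod_restrict]

variable {f : ℝ × ℝ → ℝ}

lemma integrableOn_Tsq (hf : Continuous f) : IntegrableOn f Tsq :=
  hf.continuousOn.integrableOn_compact isCompact_Tsq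

lemma setIntegral_Tsq (hf : Continuous f) :
    ∫ x in Tsq, f x = ∫ x in (0 : ℝ)..1, ∫ y in (0 : ℝ)..1, f (x, y) := by
  have h := integrableOn_Tsq hf
  rw [IntegrableOn, volume_restrict_Tsq] at h
  rw [volume_restrict_Tsq, integral_prod _ h]
  simp only [intervalIntegral.integral_of_le zero_le_one, integral_Icc_eq_integral_Ioc]

lemma setIntegral_Tsq_symm (hf : Continuous f) :
    ∫ x in Tsq, f x = ∫ y in (0 : ℝ)..1, ∫ x in (0 : ℝ)..1, f (x, y) := by
  have h := integrableOn_Tsq hf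
  rw [IntegrableOn, volume_restrict_Tsq] at h
  rw [volume_restrict_Tsq, integral_prod_symm _ h]
  simp only [intervalIntegral.integral_of_le zero_le_one, integral_Icc_eq_integral_Ioc]

lemma setIntegral_Tsq_const (c : ℝ) : ∫ _ in Tsq, c = c := by
  rw [setIntegral_const, volume_real_Tsq, one_smul]

lemma setIntegral_Tsq_mono {g : ℝ × ℝ → ℝ} (hf : Continuous f) (hg : Continuous g)
    (h : ∀ x ∈ Tsq, f x ≤ g x) : ∫ x in Tsq, f x ≤ ∫ x in Tsq, g x :=
  setIntegral_mono_on (integrableOn_Tsq hf) (integrableOn_Tsq hg) isCompact_Tsq.measurableSet h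

lemma setIntegral_Tsq_sub_const_sq (hf : Continuous f) (hmean : ∫ x in Tsq, f x = 0) (c : ℝ) :
    ∫ x in Tsq, (f x - c) ^ 2 = (∫ x in Tsq, f x ^ 2) + c ^ 2 := by
  have h (x : ℝ × ℝ) : (f x - c) ^ 2 = f x ^ 2 - 2 * c * f x + c ^ 2 := by ring
  simp only [h]
  rw [integral_add (integrableOn_Tsq (by fun_prop)) (integrableOn_Tsq (by fun_prop)),
    integral_sub (integrableOn_Tsq (by fun_prop)) (integrableOn_Tsq (by fun_prop)),
    integral_const_mul, hmean, setIntegral_Tsq_const, mul_zero, sub_zero]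

lemma sq_sub_le_integral_sq_deriv {g g' : ℝ → ℝ} (hg : ∀ x, HasDerivAt g (g' x) x)
    (hg' : Continuous g') {a b : ℝ} (ha : a ∈ Set.Icc (0 : ℝ) 1) (hb : b ∈ Set.Icc (0 : ℝ) 1) :
    (g a - g b) ^ 2 ≤ ∫ s in (0 : ℝ)..1, g' s ^ 2 := by
  have : IsProbabilityMeasure (volume.restrict (Set.Ioc (0 : ℝ) 1)) := ⟨by simp⟩
  have hint {h : ℝ → ℝ} (hh : Continuous h) : IntegrableOn h (Set.Ioc 0 1) :=
    (hh.intervalIntegrable 0 1).1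
  have habs : |g a - g b| ≤ ∫ s in Set.Ioc (0 : ℝ) 1, |g' s| := by
    rw [← intervalIntegral.integral_eq_sub_of_hasDerivAt (fun x _ => hg x)
      (hg'.intervalIntegrable b a)]
    exact (intervalIntegral.norm_integral_le_integral_norm_uIoc).trans
      (setIntegral_mono_set (hint hg'.abs) (.of_forall fun x => norm_nonneg (g' x))
        (Set.Ioc_subset_Ioc (le_min hb.1 ha.1) (max_le hb.2 ha.2)).eventuallyLE)
  have hjensen := (even_two.convexOn_pow (𝕜 := ℝ)).map_integral_le (by fun_prop) isClosed_univ
    (.of_forall fun _ => Set.mem_univ _) (hint hg'.abs) (hint (hg'.abs.pow 2))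
  rw [intervalIntegral.integral_of_le zero_le_one]
  calc (g a - g b) ^ 2 = |g a - g b| ^ 2 := (sq_abs _).symm
    _ ≤ (∫ s in Set.Ioc (0 : ℝ) 1, |g' s|) ^ 2 := by gcongr
    _ ≤ _ := by simpa only [Function.comp_def, sq_abs] using hjensen

variable {f₁ f₂ : ℝ × ℝ → ℝ}

lemma sq_sub_le_integral_sq_partial (hf₁ : Continuous f₁) (hf₂ : Continuous f₂)
    (h₁ : ∀ x y, HasDerivAt (fun s => f (s, y)) (f₁ (x, y)) x)
    (h₂ : ∀ x y, HasDerivAt (fun s => f (x, s)) (f₂ (x, y)) y) {p q : ℝ × ℝ} (hp : p ∈ Tsq)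
    (hq : q ∈ Tsq) : (f p - f q) ^ 2
      ≤ 2 * (∫ s in (0 : ℝ)..1, f₁ (s, p.2) ^ 2) + 2 * ∫ s in (0 : ℝ)..1, f₂ (q.1, s) ^ 2 := by
  have hx : (f p - f (q.1, p.2)) ^ 2 ≤ ∫ s in (0 : ℝ)..1, f₁ (s, p.2) ^ 2 :=
    sq_sub_le_integral_sq_deriv (fun x => h₁ x p.2) (by fun_prop) hp.1 hq.1
  have hy : (f (q.1, p.2) - f q) ^ 2 ≤ ∫ s in (0 : ℝ)..1, f₂ (q.1, s) ^ 2 :=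
    sq_sub_le_integral_sq_deriv (fun y => h₂ q.1 y) (by fun_prop) hp.2 hq.2
  linarith [add_sq_le (a := f p - f (q.1, p.2)) (b := f (q.1, p.2) - f q),
    congrArg (· ^ 2) (sub_add_sub_cancel (f p) (f (q.1, p.2)) (f q))]

/- For mean-zero `f`, the double integral of `(f p - f q)²` over `p` and `q` is `2 ∫ f²`. -/
theorem poincare_Tsq (hf : Continuous f) (hf₁ : Continuous f₁) (hf₂ : Continuous f₂)
    (h₁ : ∀ x y, HasDerivAt (fun s => f (s, y)) (f₁ (x, y)) x)
    (h₂ : ∀ x y, HasDerivAt (fun s => f (x, s)) (f₂ (x, y)) y) (hmean : ∫ x in Tsq, f x = 0) :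
    ∫ x in Tsq, f x ^ 2 ≤ (∫ x in Tsq, f₁ x ^ 2) + ∫ x in Tsq, f₂ x ^ 2 := by
  let E₁ (y : ℝ) : ℝ := ∫ s in (0 : ℝ)..1, f₁ (s, y) ^ 2
  let E₂ (x : ℝ) : ℝ := ∫ s in (0 : ℝ)..1, f₂ (x, s) ^ 2
  have hE₁ : Continuous E₁ :=
    intervalIntegral.continuous_parametric_intervalIntegral_of_continuous'
      (f := fun y s => f₁ (s, y) ^ 2) (by simp only [Function.uncurry_def]; fun_prop) 0 1
  have hE₂ : Continuous E₂ :=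
    intervalIntegral.continuous_parametric_intervalIntegral_of_continuous'
      (f := fun x s => f₂ (x, s) ^ 2) (by simp only [Function.uncurry_def]; fun_prop) 0 1
  have hE₁_int : ∫ p in Tsq, E₁ p.2 = ∫ x in Tsq, f₁ x ^ 2 := by
    rw [setIntegral_Tsq (by fun_prop), setIntegral_Tsq_symm (by fun_prop)]
    simp [E₁]
  have hE₂_int : ∫ q in Tsq, E₂ q.1 = ∫ x in Tsq, f₂ x ^ 2 := by
    rw [setIntegral_Tsq (by fun_prop), setIntegral_Tsq (by fun_prop)]
    simp [E₂]
  have hinner (q : ℝ × ℝ) (hq : q ∈ Tsq) :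
      (∫ p in Tsq, f p ^ 2) + f q ^ 2 ≤ 2 * (∫ x in Tsq, f₁ x ^ 2) + 2 * E₂ q.1 := by
    have h := setIntegral_Tsq_mono (by fun_prop) (by fun_prop) fun p hp =>
      sq_sub_le_integral_sq_partial hf₁ hf₂ h₁ h₂ hp hq
    rwa [setIntegral_Tsq_sub_const_sq hf hmean,
      integral_add (integrableOn_Tsq (by fun_prop)) (integrableOn_Tsq (by fun_prop)),
      integral_const_mul, hE₁_int, setIntegral_Tsq_const] at h
  have houter := setIntegral_Tsq_mono (by fun_prop) (by fun_prop) hinner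
  rw [integral_add (integrableOn_Tsq (by fun_prop)) (integrableOn_Tsq (by fun_prop)),
    integral_add (integrableOn_Tsq (by fun_prop)) (integrableOn_Tsq (by fun_prop)),
    integral_const_mul 2 fun q : ℝ × ℝ => E₂ q.1, hE₂_int, setIntegral_Tsq_const,
    setIntegral_Tsq_const] at houter
  linarith

end Square

lemma le_div_of_periodic_of_deriv_le {n n' : ℝ → ℝ} {T c δ : ℝ} (hn : ∀ θ, HasDerivAt n (n' θ) θ)
    (hT : T ≠ 0) (hper : Function.Periodic n T) (hδ : 0 < δ) (h : ∀ θ, n' θ ≤ c - δ * n θ)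
    (θ : ℝ) : n θ ≤ c / δ := by
  have hcont : Continuous n := continuous_iff_continuousAt.2 fun θ => (hn θ).continuousAt
  obtain ⟨-, ⟨θ₀, rfl⟩, hmax⟩ :=
    (hper.compact_of_continuous hT hcont).exists_isGreatest (Set.range_nonempty n)
  have hn₀ : n' θ₀ = 0 := by
    have hloc : IsLocalMax n θ₀ := .of_forall fun θ => hmax ⟨θ, rfl⟩
    exact hloc.hasDerivAt_eq_zero (hn θ₀)
  refine (hmax ⟨θ, rfl⟩).trans ((le_div_iff₀ hδ).2 ?_)
  linarith [h θ₀]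

section Pointwise

variable {J : Type*} [Fintype J] {Z : Type*} [NormedAddCommGroup Z] [NormedSpace ℝ Z] {μ ν : ℝ}
  {v₀ : Z} {v : J → Z} {a R : Z → ℝ} {D : J → Z → ℝ}

/-- The square `∑ⱼ (∂ⱼ R)²` of the gradient of `R` in the directions `v j`. -/
def gradSq (v : J → Z) (R : Z → ℝ) (z : Z) : ℝ := ∑ j, dirDeriv (v j) R z ^ 2

/-- The functional `(μ + k) R² + a |∇R|²`. Along the equation its integral decreases up to bounded
terms when `k` is large, which controls `∇R` and `∂₀ R`. -/
def energyDensity (μ k : ℝ) (v : J → Z) (a R : Z → ℝ) (z : Z) : ℝ :=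
  (μ * R z ^ 2 + a z * gradSq v R z) + k * R z ^ 2

lemma gradSq_nonneg (v : J → Z) (R : Z → ℝ) (z : Z) : 0 ≤ gradSq v R z :=
  Finset.sum_nonneg fun _ _ => sq_nonneg _

lemma contDiff_gradSq (hR : ContDiff ℝ ∞ R) (v : J → Z) : ContDiff ℝ ∞ (gradSq v R) :=
  .sum fun j _ => (contDiff_dirDeriv hR (v j)).pow 2

lemma contDiff_flux {c : Z → ℝ} (ha : ContDiff ℝ ∞ a) (hR : ContDiff ℝ ∞ R) (hc : ContDiff ℝ ∞ c)
    (w : Z) : ContDiff ℝ ∞ (flux a R c w) :=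
  (ha.mul (contDiff_dirDeriv hR w)).add hc

lemma sub_div_le_two_mul_flux {c : Z → ℝ} {z : Z} (hν : 0 < ν) (ha : ν ≤ a z) (w : Z) :
    a z * dirDeriv w R z ^ 2 - c z ^ 2 / ν ≤ 2 * (dirDeriv w R z * flux a R c w z) := by
  have h : 0 ≤ (ν * dirDeriv w R z + c z) ^ 2 / ν := by positivity
  have h' : (ν * dirDeriv w R z + c z) ^ 2 / ν
      = ν * dirDeriv w R z ^ 2 + 2 * (dirDeriv w R z * c z) + c z ^ 2 / ν := by
    field_simp
    ring
  have := mul_le_mul_of_nonneg_right ha (sq_nonneg (dirDeriv w R z))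
  rw [flux]
  linarith

namespace IsParabolicSol

lemma sub {R' : Z → ℝ} {D' : J → Z → ℝ} (h : IsParabolicSol μ v₀ v a R D)
    (h' : IsParabolicSol μ v₀ v a R' D') (ha : ContDiff ℝ ∞ a) (hR : ContDiff ℝ ∞ R)
    (hR' : ContDiff ℝ ∞ R') (hD : ∀ j, ContDiff ℝ ∞ (D j)) (hD' : ∀ j, ContDiff ℝ ∞ (D' j)) :
    IsParabolicSol μ v₀ v a (fun z => R z - R' z) (fun j z => D j z - D' j z) := by
  intro z
  have hsub (w z : Z) :
      dirDeriv w (fun z => R z - R' z) z = dirDeriv w R z - dirDeriv w R' z :=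
    dirDeriv_sub (hR.differentiable (by simp) z) (hR'.differentiable (by simp) z) w
  have hflux (j : J) : flux a (fun z => R z - R' z) (fun z => D j z - D' j z) (v j)
      = fun z => flux a R (D j) (v j) z - flux a R' (D' j) (v j) z := by
    funext z
    rw [flux, flux, flux, hsub]
    ring
  simp only [hflux]
  rw [hsub, Finset.sum_congr rfl fun j _ => dirDeriv_sub
    ((contDiff_flux ha hR (hD j) (v j)).differentiable (by simp) z)
    ((contDiff_flux ha hR' (hD' j) (v j)).differentiable (by simp) z) (v j),
    Finset.sum_sub_distrib, ← h z, ← h' z]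
  ring

lemma dirDeriv_sol (h : IsParabolicSol μ v₀ v a R D) (ha : ContDiff ℝ ∞ a) (hR : ContDiff ℝ ∞ R)
    (hD : ∀ j, ContDiff ℝ ∞ (D j)) (w : Z) :
    IsParabolicSol μ v₀ v a (dirDeriv w R)
      fun j z => dirDeriv w a z * dirDeriv (v j) R z + dirDeriv w (D j) z := by
  intro z
  have diff {f : Z → ℝ} (hf : ContDiff ℝ ∞ f) (z : Z) : DifferentiableAt ℝ f z :=
    hf.differentiable (by simp) z
  have comm {f : Z → ℝ} (hf : ContDiff ℝ ∞ f) (u z : Z) :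
      dirDeriv w (dirDeriv u f) z
        = dirDeriv u (dirDeriv w f) z :=
    dirDeriv_comm (contDiff_infty.1 hf 2) w u z
  have hflux (j : J) : dirDeriv w (flux a R (D j) (v j))
      = flux a (dirDeriv w R) (fun z => dirDeriv w a z
        * dirDeriv (v j) R z + dirDeriv w (D j) z) (v j) := by
    funext z
    have hR' := diff (contDiff_dirDeriv hR (v j)) z
    refine (dirDeriv_add ((diff ha z).fun_mul hR') (diff (hD j) z) w).trans ?_
    rw [dirDeriv_mul (diff ha z) hR', comm hR, flux, add_assoc]
  have hw := congrArg (dirDeriv w · z) (funext h)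
  rw [dirDeriv_add ((diff hR z).const_mul μ) (diff (contDiff_dirDeriv hR v₀) z),
    dirDeriv_const_mul (diff hR z), comm hR,
    dirDeriv_sum fun j _ => diff (contDiff_dirDeriv (contDiff_flux ha hR (hD j) _) _) z] at hw
  simpa only [comm (contDiff_flux ha hR (hD _) _), hflux] using hw

lemma dirDeriv_sq_le (h : IsParabolicSol μ v₀ v a R D) (ha : ContDiff ℝ ∞ a)
    (hR : ContDiff ℝ ∞ R) (hD : ∀ j, ContDiff ℝ ∞ (D j)) {z : Z} (hν : 0 < ν) (haν : ν ≤ a z) :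
    dirDeriv v₀ (fun z => R z ^ 2) z
      ≤ -(2 * μ * R z ^ 2) - a z * gradSq v R z + (∑ j, D j z ^ 2) / ν
        + ∑ j, dirDeriv (v j) (fun z => 2 * (R z * flux a R (D j) (v j) z)) z := by
  have hR' := hR.differentiable (by simp) z
  have hflux (j : J) := (contDiff_flux ha hR (hD j) (v j)).differentiable (by simp) z
  have hdiv (j : J) : dirDeriv (v j) (fun z => 2 * (R z * flux a R (D j) (v j) z)) z
      = 2 * R z * dirDeriv (v j) (flux a R (D j) (v j)) z
        + 2 * (dirDeriv (v j) R z * flux a R (D j) (v j) z) := by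
    rw [dirDeriv_const_mul (hR'.fun_mul (hflux j)), dirDeriv_mul hR' (hflux j)]
    ring
  have hyoung := Finset.sum_le_sum fun j (_ : j ∈ Finset.univ) =>
    sub_div_le_two_mul_flux (R := R) (c := D j) hν haν (v j)
  rw [Finset.sum_sub_distrib, ← Finset.mul_sum, ← Finset.sum_div] at hyoung
  rw [Finset.sum_congr rfl fun j _ => hdiv j, Finset.sum_add_distrib, ← Finset.mul_sum, ← h z,
    dirDeriv_sq hR', gradSq]
  linarith

/- Testing with `∂₀ R`: `2 a ∇R · ∇(∂₀ R)` is, up to a divergence, `-2 (∂₀ R) ∇ · (a ∇R)`. -/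
lemma dirDeriv_energy_le (h : IsParabolicSol μ v₀ v a R D) (ha : ContDiff ℝ ∞ a)
    (hR : ContDiff ℝ ∞ R) (hD : ∀ j, ContDiff ℝ ∞ (D j)) (z : Z) :
    dirDeriv v₀ (fun z => μ * R z ^ 2 + a z * gradSq v R z) z
      ≤ dirDeriv v₀ a z * gradSq v R z - dirDeriv v₀ R z ^ 2
        + (∑ j, dirDeriv (v j) (D j) z) ^ 2
        + ∑ j, dirDeriv (v j) (fun z => 2 * (dirDeriv v₀ R z
          * (a z * dirDeriv (v j) R z))) z := by
  have diff {f : Z → ℝ} (hf : ContDiff ℝ ∞ f) : DifferentiableAt ℝ f z :=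
    hf.differentiable (by simp) z
  have hR₀ := contDiff_dirDeriv hR v₀
  have hRj (j : J) := contDiff_dirDeriv hR (v j)
  have hgrad : dirDeriv v₀ (gradSq v R) z = ∑ j, 2 * (dirDeriv (v j) R z
      * dirDeriv (v j) (dirDeriv v₀ R) z) := by
    refine (dirDeriv_sum (fun j _ => diff ((hRj j).pow 2)) v₀).trans ?_
    refine Finset.sum_congr rfl fun j _ => ?_
    rw [dirDeriv_sq (diff (hRj j)), dirDeriv_comm (contDiff_infty.1 hR 2)]
  have hdiv (j : J) : dirDeriv (v j) (fun z => 2 * (dirDeriv v₀ R z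
      * (a z * dirDeriv (v j) R z))) z
      = 2 * dirDeriv v₀ R z * (dirDeriv (v j) (flux a R (D j) (v j)) z
          - dirDeriv (v j) (D j) z)
        + a z * (2 * (dirDeriv (v j) R z
          * dirDeriv (v j) (dirDeriv v₀ R) z)) := by
    have hflux : dirDeriv (v j) (flux a R (D j) (v j)) z
        = dirDeriv (v j) (fun z => a z * dirDeriv (v j) R z) z
          + dirDeriv (v j) (D j) z :=
      dirDeriv_add (diff (ha.mul (hRj j))) (diff (hD j)) (v j)
    rw [dirDeriv_const_mul (diff (hR₀.mul (ha.mul (hRj j)))),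
      dirDeriv_mul (diff hR₀) (diff (ha.mul (hRj j))), hflux]
    ring
  have hsum : ∑ j, dirDeriv (v j) (fun z => 2 * (dirDeriv v₀ R z * (a z * dirDeriv (v j) R z))) z
      = 2 * dirDeriv v₀ R z * (μ * R z + dirDeriv v₀ R z - ∑ j, dirDeriv (v j) (D j) z)
        + a z * dirDeriv v₀ (gradSq v R) z := by
    rw [Finset.sum_congr rfl fun j _ => hdiv j, Finset.sum_add_distrib, ← Finset.mul_sum,
      ← Finset.mul_sum, Finset.sum_sub_distrib, ← h z, hgrad]
  have hG := contDiff_gradSq hR v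
  rw [dirDeriv_add (diff (contDiff_const.mul (hR.pow 2))) (diff (ha.mul hG)),
    dirDeriv_const_mul (diff (hR.pow 2)), dirDeriv_sq (diff hR), dirDeriv_mul (diff ha) (diff hG),
    hsum]
  nlinarith [sq_nonneg (dirDeriv v₀ R z - ∑ j, dirDeriv (v j) (D j) z)]

lemma dirDeriv_energyDensity_le (h : IsParabolicSol μ v₀ v a R D) (ha : ContDiff ℝ ∞ a)
    (hR : ContDiff ℝ ∞ R) (hD : ∀ j, ContDiff ℝ ∞ (D j)) {γ k : ℝ} {z : Z} (hν : 0 < ν)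
    (haν : ν ≤ a z) (ha₀ : dirDeriv v₀ a z ≤ γ) (hk : 1 ≤ k) (hγk : γ ≤ (k - 1) * ν) :
    dirDeriv v₀ (energyDensity μ k v a R) z
      ≤ (∑ j, dirDeriv (v j) (D j) z) ^ 2 + k * ((∑ j, D j z ^ 2) / ν)
        - (dirDeriv v₀ R z ^ 2 + (a z * gradSq v R z + 2 * k * μ * R z ^ 2))
        + ∑ j, dirDeriv (v j) (fun z => 2 * (dirDeriv v₀ R z * (a z * dirDeriv (v j) R z))
          + k * (2 * (R z * flux a R (D j) (v j) z))) z := by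
  have diff {f : Z → ℝ} (hf : ContDiff ℝ ∞ f) : DifferentiableAt ℝ f z :=
    hf.differentiable (by simp) z
  have hH₁ (j : J) : ContDiff ℝ ∞ fun z => 2 * (dirDeriv v₀ R z * (a z * dirDeriv (v j) R z)) :=
    contDiff_const.mul ((contDiff_dirDeriv hR v₀).mul (ha.mul (contDiff_dirDeriv hR (v j))))
  have hH₂ (j : J) : ContDiff ℝ ∞ fun z => 2 * (R z * flux a R (D j) (v j) z) :=
    contDiff_const.mul (hR.mul (contDiff_flux ha hR (hD j) (v j)))
  have hdiv := Finset.sum_congr rfl fun j (_ : j ∈ Finset.univ) =>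
    (dirDeriv_add (diff (hH₁ j)) (diff (contDiff_const.mul (hH₂ j))) (v j)).trans
      (congrArg _ (dirDeriv_const_mul (diff (hH₂ j)) k (v j)))
  have hsplit : dirDeriv v₀ (energyDensity μ k v a R) z
      = dirDeriv v₀ (fun z => μ * R z ^ 2 + a z * gradSq v R z) z
        + k * dirDeriv v₀ (fun z => R z ^ 2) z :=
    (dirDeriv_add (diff ((contDiff_const.mul (hR.pow 2)).add (ha.mul (contDiff_gradSq hR v))))
      (diff (contDiff_const.mul (hR.pow 2))) v₀).trans
      (congrArg _ (dirDeriv_const_mul (diff (hR.pow 2)) k v₀))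
  have henergy := h.dirDeriv_energy_le ha hR hD z
  have hsq := mul_le_mul_of_nonneg_left (h.dirDeriv_sq_le ha hR hD hν haν) (zero_le_one.trans hk)
  have hcoeff : dirDeriv v₀ a z * gradSq v R z ≤ (k - 1) * a z * gradSq v R z :=
    mul_le_mul_of_nonneg_right (ha₀.trans (hγk.trans
      (mul_le_mul_of_nonneg_left haν (sub_nonneg.2 hk)))) (gradSq_nonneg v R z)
  rw [hdiv, Finset.sum_add_distrib, ← Finset.mul_sum, hsplit]
  linarith

end IsParabolicSol

end Pointwise

section Slices

/-- The variables `(t, τ, θ, x)`. -/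
abbrev Point : Type := ℝ × ℝ × ℝ × (ℝ × ℝ)

/-- The inclusion `(θ, x₁, x₂) ↦ (0, 0, θ, (x₁, x₂))` of the periodic variables. -/
def periodicVars : (Fin 3 → ℝ) →L[ℝ] Point :=
  ContinuousLinearMap.prod 0 (ContinuousLinearMap.prod 0 ((ContinuousLinearMap.proj 0).prod
    ((ContinuousLinearMap.proj 1).prod (ContinuousLinearMap.proj 2))))

lemma periodicVars_apply (y : Fin 3 → ℝ) : periodicVars y = (0, 0, y 0, (y 1, y 2)) := rfl

/-- The direction of the variable `θ`. -/
def thetaDir : Point := periodicVars (Pi.single 0 1)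

/-- The directions of the two space variables. -/
def spaceDir (j : Fin 2) : Point := periodicVars (Pi.single j.succ 1)

lemma thetaDir_eq : thetaDir = (0, 0, 1, 0) := by simp [thetaDir, periodicVars_apply]

lemma spaceDir_zero : spaceDir 0 = (0, 0, 0, (1, 0)) := by simp [spaceDir, periodicVars_apply]

lemma spaceDir_one : spaceDir 1 = (0, 0, 0, (0, 1)) := by simp [spaceDir, periodicVars_apply]

lemma SmoothPeriodic.apply_add_theta {E : Type} [NormedAddCommGroup E] [NormedSpace ℝ E]
    {F : Point → E} (hF : SmoothPeriodic periodicVars F) (t τ θ : ℝ) (x : ℝ × ℝ) :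
    F (t, τ, θ + 1, x) = F (t, τ, θ, x) := by
  simpa [periodicVars_apply, Prod.mk_zero_zero] using hF.periodic (t, τ, θ, x) (Pi.single 0 1)

lemma SmoothPeriodic.apply_add_space {E : Type} [NormedAddCommGroup E] [NormedSpace ℝ E]
    {F : Point → E} (hF : SmoothPeriodic periodicVars F) (t τ θ : ℝ) :
    SpacePeriodic fun x => F (t, τ, θ, x) := fun x =>
  ⟨by simpa [periodicVars_apply] using hF.periodic (t, τ, θ, x) (Pi.single 1 1),
    by simpa [periodicVars_apply] using hF.periodic (t, τ, θ, x) (Pi.single 2 1)⟩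

lemma hasDerivAt_theta {E : Type*} [NormedAddCommGroup E] [NormedSpace ℝ E] {F : Point → E}
    (hF : Differentiable ℝ F) (t τ θ : ℝ) (x : ℝ × ℝ) :
    HasDerivAt (fun θ => F (t, τ, θ, x)) (dirDeriv thetaDir F (t, τ, θ, x)) θ := by
  refine hasDerivAt_comp_curve (φ := fun θ => (t, τ, θ, x)) (hF _) ?_
  rw [thetaDir_eq]
  exact (hasDerivAt_const θ t).prodMk <| (hasDerivAt_const θ τ).prodMk <|
    (hasDerivAt_id θ).prodMk (hasDerivAt_const θ x)

lemma hasDerivAt_space_zero {F : Point → ℝ} (hF : Differentiable ℝ F) (t τ θ x y : ℝ) :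
    HasDerivAt (fun x => F (t, τ, θ, (x, y))) (dirDeriv (spaceDir 0) F (t, τ, θ, (x, y))) x := by
  refine hasDerivAt_comp_curve (φ := fun x => (t, τ, θ, (x, y))) (hF _) ?_
  rw [spaceDir_zero]
  exact (hasDerivAt_const x t).prodMk <| (hasDerivAt_const x τ).prodMk <|
    (hasDerivAt_const x θ).prodMk <| (hasDerivAt_id x).prodMk (hasDerivAt_const x y)

lemma hasDerivAt_space_one {F : Point → ℝ} (hF : Differentiable ℝ F) (t τ θ x y : ℝ) :
    HasDerivAt (fun y => F (t, τ, θ, (x, y))) (dirDeriv (spaceDir 1) F (t, τ, θ, (x, y))) y := by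
  refine hasDerivAt_comp_curve (φ := fun y => (t, τ, θ, (x, y))) (hF _) ?_
  rw [spaceDir_one]
  exact (hasDerivAt_const y t).prodMk <| (hasDerivAt_const y τ).prodMk <|
    (hasDerivAt_const y θ).prodMk <| (hasDerivAt_const y x).prodMk (hasDerivAt_id y)

/-- The integral over the torus `{(t, τ, θ)} × 𝕋²`, as a function of `θ`. -/
def sliceIntegral (t τ : ℝ) (F : Point → ℝ) (θ : ℝ) : ℝ := ∫ x in Tsq, F (t, τ, θ, x)

variable {t τ : ℝ} {F G : Point → ℝ}

lemma integrableOn_slice (hF : Continuous F) (t τ θ : ℝ) :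
    IntegrableOn (fun x => F (t, τ, θ, x)) Tsq :=
  integrableOn_Tsq (by fun_prop)

lemma sliceIntegral_add (hF : Continuous F) (hG : Continuous G) (θ : ℝ) :
    sliceIntegral t τ (fun z => F z + G z) θ = sliceIntegral t τ F θ + sliceIntegral t τ G θ :=
  integral_add (integrableOn_slice hF t τ θ) (integrableOn_slice hG t τ θ)

lemma sliceIntegral_sub (hF : Continuous F) (hG : Continuous G) (θ : ℝ) :
    sliceIntegral t τ (fun z => F z - G z) θ = sliceIntegral t τ F θ - sliceIntegral t τ G θ :=
  integral_sub (integrableOn_slice hF t τ θ) (integrableOn_slice hG t τ θ)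

lemma sliceIntegral_sum {κ : Type*} {s : Finset κ} {H : κ → Point → ℝ}
    (hH : ∀ j ∈ s, Continuous (H j)) (θ : ℝ) :
    sliceIntegral t τ (fun z => ∑ j ∈ s, H j z) θ = ∑ j ∈ s, sliceIntegral t τ (H j) θ :=
  integral_finsetSum s fun j hj => integrableOn_slice (hH j hj) t τ θ

lemma sliceIntegral_const_mul (c : ℝ) (F : Point → ℝ) (θ : ℝ) :
    sliceIntegral t τ (fun z => c * F z) θ = c * sliceIntegral t τ F θ :=
  integral_const_mul _ _

lemma sliceIntegral_const (c θ : ℝ) : sliceIntegral t τ (fun _ => c) θ = c :=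
  setIntegral_Tsq_const c

lemma sliceIntegral_mono (hF : Continuous F) (hG : Continuous G) (h : ∀ z, F z ≤ G z) (θ : ℝ) :
    sliceIntegral t τ F θ ≤ sliceIntegral t τ G θ :=
  setIntegral_mono (integrableOn_slice hF t τ θ) (integrableOn_slice hG t τ θ) fun _ => h _

lemma sliceIntegral_nonneg (h : ∀ z, 0 ≤ F z) (θ : ℝ) : 0 ≤ sliceIntegral t τ F θ :=
  integral_nonneg fun _ => h _

lemma periodic_sliceIntegral (hF : SmoothPeriodic periodicVars F) (t τ : ℝ) :
    Function.Periodic (sliceIntegral t τ F) 1 := fun θ =>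
  integral_congr_ae (.of_forall fun x => hF.apply_add_theta t τ θ x)

lemma sliceIntegral_dirDeriv_spaceDir (hF : SmoothPeriodic periodicVars F) (j : Fin 2) (θ : ℝ) :
    sliceIntegral t τ (dirDeriv (spaceDir j) F) θ = 0 := by
  have hdiff : Differentiable ℝ F := hF.contDiff.differentiable (by simp)
  have hcont := (hF.dirDeriv (spaceDir j)).continuous
  have hper := hF.apply_add_space t τ θ
  have hderiv {f f' : ℝ → ℝ} (hf : ∀ x, HasDerivAt f (f' x) x) (hf' : Continuous f')
      (h : f 1 = f 0) : ∫ x in (0 : ℝ)..1, f' x = 0 := by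
    rw [intervalIntegral.integral_eq_sub_of_hasDerivAt (fun x _ => hf x)
      (hf'.intervalIntegrable _ _), h, sub_self]
  match j with
  | 0 =>
    rw [sliceIntegral, setIntegral_Tsq_symm (by fun_prop)]
    refine (intervalIntegral.integral_congr fun y _ => hderiv
      (fun x => hasDerivAt_space_zero hdiff t τ θ x y) (by fun_prop) ?_).trans (by simp)
    simpa using (hper (0, y)).1
  | 1 =>
    rw [sliceIntegral, setIntegral_Tsq (by fun_prop)]
    refine (intervalIntegral.integral_congr fun x _ => hderiv
      (fun y => hasDerivAt_space_one hdiff t τ θ x y) (by fun_prop) ?_).trans (by simp)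
    simpa using (hper (x, 0)).2

lemma sliceIntegral_add_div {H : Fin 2 → Point → ℝ} (hG : Continuous G)
    (hH : ∀ j, SmoothPeriodic periodicVars (H j)) (θ : ℝ) :
    sliceIntegral t τ (fun z => G z + ∑ j, dirDeriv (spaceDir j) (H j) z) θ
      = sliceIntegral t τ G θ := by
  have hH' (j : Fin 2) := ((hH j).dirDeriv (spaceDir j)).continuous
  rw [sliceIntegral_add hG (continuous_finsetSum _ fun j _ => hH' j),
    sliceIntegral_sum fun j _ => hH' j,
    Finset.sum_eq_zero fun j _ => sliceIntegral_dirDeriv_spaceDir (hH j) j θ, add_zero]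

lemma sliceIntegral_le_of_le_add_div {H : Fin 2 → Point → ℝ} (hF : Continuous F)
    (hG : Continuous G) (hH : ∀ j, SmoothPeriodic periodicVars (H j))
    (h : ∀ z, F z ≤ G z + ∑ j, dirDeriv (spaceDir j) (H j) z) (θ : ℝ) :
    sliceIntegral t τ F θ ≤ sliceIntegral t τ G θ := by
  rw [← sliceIntegral_add_div hG hH]
  exact sliceIntegral_mono hF (hG.add (continuous_finsetSum _ fun j _ =>
    ((hH j).dirDeriv (spaceDir j)).continuous)) h θ

lemma hasDerivAt_sliceIntegral (hF : ContDiff ℝ ∞ F) (t τ θ : ℝ) :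
    HasDerivAt (sliceIntegral t τ F) (sliceIntegral t τ (dirDeriv thetaDir F) θ) θ := by
  have hc := (contDiff_dirDeriv hF thetaDir).continuous
  obtain ⟨B, hB⟩ := ((isCompact_closedBall θ 1).prod isCompact_Tsq).exists_bound_of_continuousOn
    (f := fun p : ℝ × (ℝ × ℝ) => dirDeriv thetaDir F (t, τ, p.1, p.2)) (by fun_prop)
  refine (hasDerivAt_integral_of_dominated_loc_of_deriv_le
    (F := fun θ x => F (t, τ, θ, x)) (F' := fun θ x => dirDeriv thetaDir F (t, τ, θ, x))
    (bound := fun _ => B) (Metric.closedBall_mem_nhds θ one_pos)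
    (.of_forall fun θ => (integrableOn_slice hF.continuous t τ θ).aestronglyMeasurable)
    (integrableOn_slice hF.continuous t τ θ) (integrableOn_slice hc t τ θ).aestronglyMeasurable ?_
    (integrableOn_Tsq continuous_const)
    (.of_forall fun x s _ => hasDerivAt_theta (hF.differentiable (by simp)) t τ s x)).2
  filter_upwards [ae_restrict_mem isCompact_Tsq.measurableSet] with x hx s hs
  exact hB (s, x) ⟨hs, hx⟩

lemma sliceIntegral_sq_le_gradSq (hF : ContDiff ℝ ∞ F) {θ : ℝ}
    (hmean : sliceIntegral t τ F θ = 0) :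
    sliceIntegral t τ (fun z => F z ^ 2) θ ≤ sliceIntegral t τ (gradSq spaceDir F) θ := by
  have hdiff : Differentiable ℝ F := hF.differentiable (by simp)
  have hc := hF.continuous
  have hc' (j : Fin 2) := (contDiff_dirDeriv hF (spaceDir j)).continuous
  change _ ≤ sliceIntegral t τ (fun z => ∑ j, dirDeriv (spaceDir j) F z ^ 2) θ
  rw [sliceIntegral_sum (H := fun j z => dirDeriv (spaceDir j) F z ^ 2) fun j _ => (hc' j).pow 2,
    Fin.sum_univ_two]
  exact poincare_Tsq (by fun_prop) ((hc' 0).comp (by fun_prop)) ((hc' 1).comp (by fun_prop))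
    (fun x y => hasDerivAt_space_zero hdiff t τ θ x y)
    (fun x y => hasDerivAt_space_one hdiff t τ θ x y) hmean

lemma eq_zero_of_sliceIntegral_sq_nonpos (hF : SmoothPeriodic periodicVars F)
    (h : ∀ t τ θ, sliceIntegral t τ (fun z => F z ^ 2) θ ≤ 0) (z : Point) : F z = 0 := by
  obtain ⟨t, τ, θ, x, y⟩ := z
  have hc : Continuous fun x => F (t, τ, θ, x) := hF.continuous.comp (by fun_prop)
  have hae : (fun x => F (t, τ, θ, x)) =ᵐ[volume.restrict Tsq] fun _ => 0 := by
    have hint := (h t τ θ).antisymm (sliceIntegral_nonneg (fun z => sq_nonneg (F z)) θ)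
    rw [sliceIntegral, integral_eq_zero_iff_of_nonneg (fun x => sq_nonneg _)
      (integrableOn_Tsq (hc.pow 2))] at hint
    filter_upwards [hint] with x hx
    exact pow_eq_zero_iff two_ne_zero |>.1 hx
  have hclosure : Tsq ⊆ closure (interior Tsq) := by
    rw [Tsq, interior_prod_eq, closure_prod_eq, interior_Icc, closure_Ioo zero_ne_one]
  have hshift : F (t, τ, θ, Int.fract x, Int.fract y) = F (t, τ, θ, x, y) := by
    simpa [periodicVars_apply, ← sub_eq_add_neg] using
      hF.periodic (t, τ, θ, x, y) ![0, -⌊x⌋, -⌊y⌋]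
  rw [← hshift]
  exact Measure.eqOn_of_ae_eq hae hc.continuousOn continuousOn_const hclosure
    (x := (Int.fract x, Int.fract y)) ⟨⟨Int.fract_nonneg x, (Int.fract_lt_one x).le⟩,
      ⟨Int.fract_nonneg y, (Int.fract_lt_one y).le⟩⟩

end Slices

section Estimates

/-- `R` is a smooth periodic solution of the cell equation `μ R + ∂_θ R = ∇·(a ∇R + D)`, whose
smooth periodic diffusion coefficient is bounded below by `ν`. -/
structure IsCellSol (μ ν : ℝ) (a R : Point → ℝ) (D : Fin 2 → Point → ℝ) : Prop where
  coeff : SmoothPeriodic periodicVars a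
  sol : SmoothPeriodic periodicVars R
  source : ∀ j, SmoothPeriodic periodicVars (D j)
  le_coeff : ∀ z, ν ≤ a z
  isParabolicSol : IsParabolicSol μ thetaDir spaceDir a R D

/-- Bounds `∂_θ a ≤ γ`, `|D|² ≤ B` and `(∇·D)² ≤ L` on the data of a cell equation. -/
structure DataBounds (γ B L : ℝ) (a : Point → ℝ) (D : Fin 2 → Point → ℝ) : Prop where
  deriv_le : ∀ z, dirDeriv thetaDir a z ≤ γ
  source_sq_le : ∀ z, ∑ j, D j z ^ 2 ≤ B
  div_sq_le : ∀ z, (∑ j, dirDeriv (spaceDir j) (D j) z) ^ 2 ≤ L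

namespace IsCellSol

variable {μ ν γ : ℝ} {a R : Point → ℝ} {D : Fin 2 → Point → ℝ} {t τ : ℝ}

lemma sub {R' : Point → ℝ} {D' : Fin 2 → Point → ℝ} (h : IsCellSol μ ν a R D)
    (h' : IsCellSol μ ν a R' D') :
    IsCellSol μ ν a (fun z => R z - R' z) (fun j z => D j z - D' j z) where
  coeff := h.coeff
  sol := h.sol.sub h'.sol
  source j := (h.source j).sub (h'.source j)
  le_coeff := h.le_coeff
  isParabolicSol := h.isParabolicSol.sub h'.isParabolicSol h.coeff.contDiff h.sol.contDiff
    h'.sol.contDiff (fun j => (h.source j).contDiff) fun j => (h'.source j).contDiff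

lemma dirDeriv_sol (h : IsCellSol μ ν a R D) (w : Point) :
    IsCellSol μ ν a (dirDeriv w R)
      (fun j z => dirDeriv w a z * dirDeriv (spaceDir j) R z + dirDeriv w (D j) z) where
  coeff := h.coeff
  sol := h.sol.dirDeriv w
  source j := ((h.coeff.dirDeriv w).mul (h.sol.dirDeriv (spaceDir j))).add
    ((h.source j).dirDeriv w)
  le_coeff := h.le_coeff
  isParabolicSol := h.isParabolicSol.dirDeriv_sol h.coeff.contDiff h.sol.contDiff
    (fun j => (h.source j).contDiff) w

lemma sliceIntegral_eq_zero (h : IsCellSol μ ν a R D) (hμ : 0 < μ) (t τ θ : ℝ) :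
    sliceIntegral t τ R θ = 0 := by
  have hc := h.sol.continuous
  have hode (θ : ℝ) : HasDerivAt (sliceIntegral t τ R) (-μ * sliceIntegral t τ R θ) θ := by
    convert hasDerivAt_sliceIntegral h.sol.contDiff t τ θ using 1
    rw [← sliceIntegral_const_mul, ← sliceIntegral_add_div (by fun_prop)
      fun j => h.coeff.flux h.sol (h.source j) (spaceDir j)]
    congr 1
    funext z
    linarith [h.isParabolicSol z]
  have hper := periodic_sliceIntegral h.sol t τ
  refine le_antisymm ?_ (neg_nonpos.1 ?_)
  · simpa using le_div_of_periodic_of_deriv_le (c := 0) hode one_ne_zero hper hμ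
      (fun θ => by linarith) θ
  · simpa using le_div_of_periodic_of_deriv_le (c := 0) (fun θ => (hode θ).fun_neg) one_ne_zero
      (fun θ => congrArg Neg.neg (hper θ)) hμ (fun θ => by linarith) θ

lemma sliceIntegral_sq_le (h : IsCellSol μ ν a R D) (hμ : 0 < μ) (hν : 0 < ν) {B : ℝ}
    (hB : ∀ θ, sliceIntegral t τ (fun z => ∑ j, D j z ^ 2) θ ≤ B) (θ : ℝ) :
    sliceIntegral t τ (fun z => R z ^ 2) θ ≤ B / ν ^ 2 := by
  have hR := h.sol.contDiff
  have hR2 : SmoothPeriodic periodicVars fun z => R z ^ 2 := h.sol.comp (contDiff_id.pow 2)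
  have hcG := (contDiff_gradSq hR spaceDir).continuous
  have hcD (j : Fin 2) := (h.source j).continuous
  rw [sq ν, ← div_div]
  refine le_div_of_periodic_of_deriv_le (hasDerivAt_sliceIntegral hR2.contDiff t τ) one_ne_zero
    (periodic_sliceIntegral hR2 t τ) hν (fun θ => ?_) θ
  calc sliceIntegral t τ (dirDeriv thetaDir fun z => R z ^ 2) θ
      ≤ sliceIntegral t τ (fun z => ν⁻¹ * (∑ j, D j z ^ 2) - ν * gradSq spaceDir R z) θ := by
        refine sliceIntegral_le_of_le_add_div (hR2.dirDeriv thetaDir).continuous (by fun_prop)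
          (fun j => (SmoothPeriodic.const 2).mul
            (h.sol.mul (h.coeff.flux h.sol (h.source j) (spaceDir j)))) (fun z => ?_) θ
        have := h.isParabolicSol.dirDeriv_sq_le h.coeff.contDiff hR
          (fun j => (h.source j).contDiff) hν (h.le_coeff z)
        have hgrad := mul_le_mul_of_nonneg_right (h.le_coeff z) (gradSq_nonneg spaceDir R z)
        have : 0 ≤ μ * R z ^ 2 := by positivity
        rw [inv_mul_eq_div]
        linarith
    _ = ν⁻¹ * sliceIntegral t τ (fun z => ∑ j, D j z ^ 2) θ
          - ν * sliceIntegral t τ (gradSq spaceDir R) θ := by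
        rw [sliceIntegral_sub (by fun_prop) (by fun_prop), sliceIntegral_const_mul,
          sliceIntegral_const_mul]
    _ ≤ B / ν - ν * sliceIntegral t τ (fun z => R z ^ 2) θ := by
        rw [div_eq_inv_mul]
        gcongr
        exacts [hB θ, sliceIntegral_sq_le_gradSq hR (h.sliceIntegral_eq_zero hμ t τ θ)]

lemma unique {R' : Point → ℝ} (h : IsCellSol μ ν a R D) (h' : IsCellSol μ ν a R' D) (hμ : 0 < μ)
    (hν : 0 < ν) : R = R' := by
  have hsub := h.sub h'
  funext z
  refine sub_eq_zero.1 (eq_zero_of_sliceIntegral_sq_nonpos hsub.sol (fun t τ θ => ?_) z)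
  simpa using hsub.sliceIntegral_sq_le (B := 0) hμ hν (fun θ => by simp [sliceIntegral_const]) θ

lemma sliceIntegral_dirDeriv_sq_le (h : IsCellSol μ ν a R D) (hμ : 0 < μ) (hν : 0 < ν) {w : Point}
    {M G : ℝ} (ha : ∀ z, dirDeriv w a z ^ 2 ≤ M) (hD : ∀ j z, dirDeriv w (D j) z ^ 2 ≤ M)
    (hG : ∀ θ, sliceIntegral t τ (gradSq spaceDir R) θ ≤ G) (θ : ℝ) :
    sliceIntegral t τ (fun z => dirDeriv w R z ^ 2) θ ≤ M * (2 * G + 4) / ν ^ 2 := by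
  refine (h.dirDeriv_sol w).sliceIntegral_sq_le hμ hν (fun θ => ?_) θ
  have hcG := (contDiff_gradSq h.sol.contDiff spaceDir).continuous
  have hc (j : Fin 2) := ((h.dirDeriv_sol w).source j).continuous
  have hM : 0 ≤ M := (sq_nonneg _).trans (ha 0)
  calc _ ≤ sliceIntegral t τ (fun z => 2 * M * gradSq spaceDir R z + 4 * M) θ := by
        refine sliceIntegral_mono (by fun_prop) (by fun_prop) (fun z => ?_) θ
        calc _ ≤ ∑ j, (2 * M * dirDeriv (spaceDir j) R z ^ 2 + 2 * M) :=
              Finset.sum_le_sum fun j _ => by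
                have := mul_le_mul_of_nonneg_right (ha z) (sq_nonneg (dirDeriv (spaceDir j) R z))
                rw [← mul_pow] at this
                linarith [hD j z, add_sq_le (a := dirDeriv w a z * dirDeriv (spaceDir j) R z)
                  (b := dirDeriv w (D j) z)]
          _ = _ := by
              rw [Finset.sum_add_distrib, ← Finset.mul_sum, gradSq, Finset.sum_const,
                Finset.card_univ, Fintype.card_fin]
              ring
    _ = 2 * M * sliceIntegral t τ (gradSq spaceDir R) θ + 4 * M := by
        rw [sliceIntegral_add (by fun_prop) continuous_const, sliceIntegral_const_mul,
          sliceIntegral_const]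
    _ ≤ 2 * M * G + 4 * M := by
        gcongr
        exact hG θ
    _ = M * (2 * G + 4) := by ring

lemma smoothPeriodic_gradSq (h : IsCellSol μ ν a R D) :
    SmoothPeriodic periodicVars (gradSq spaceDir R) :=
  .sum fun j _ => (h.sol.dirDeriv (spaceDir j)).comp (contDiff_id.pow 2)

lemma smoothPeriodic_energyDensity (h : IsCellSol μ ν a R D) (k : ℝ) :
    SmoothPeriodic periodicVars (energyDensity μ k spaceDir a R) :=
  have hsq : SmoothPeriodic periodicVars fun z => R z ^ 2 := h.sol.comp (contDiff_id.pow 2)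
  (((SmoothPeriodic.const μ).mul hsq).add (h.coeff.mul h.smoothPeriodic_gradSq)).add
    ((SmoothPeriodic.const k).mul hsq)

variable {B L k : ℝ}

lemma sliceIntegral_dirDeriv_energyDensity_le (h : IsCellSol μ ν a R D) (hν : 0 < ν)
    (hdata : DataBounds γ B L a D) (hk : 1 ≤ k) (hγk : γ ≤ (k - 1) * ν) (θ : ℝ) :
    sliceIntegral t τ (dirDeriv thetaDir (energyDensity μ k spaceDir a R)) θ
      ≤ (L + k * (B / ν)) - (sliceIntegral t τ (fun z => dirDeriv thetaDir R z ^ 2) θ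
        + sliceIntegral t τ (fun z => a z * gradSq spaceDir R z + 2 * k * μ * R z ^ 2) θ) := by
  have hθ := h.sol.dirDeriv thetaDir
  have hcθ := hθ.continuous
  have hcG := h.smoothPeriodic_gradSq.continuous
  have hca := h.coeff.continuous
  have hcR := h.sol.continuous
  rw [← sliceIntegral_add (by fun_prop) (by fun_prop), ← sliceIntegral_const (t := t) (τ := τ)
    (L + k * (B / ν)) θ, ← sliceIntegral_sub continuous_const (by fun_prop)]
  refine sliceIntegral_le_of_le_add_div
    ((h.smoothPeriodic_energyDensity k).dirDeriv thetaDir).continuous (by fun_prop)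
    (fun j => ((SmoothPeriodic.const 2).mul
      (hθ.mul (h.coeff.mul (h.sol.dirDeriv (spaceDir j))))).add
      ((SmoothPeriodic.const k).mul ((SmoothPeriodic.const 2).mul
        (h.sol.mul (h.coeff.flux h.sol (h.source j) (spaceDir j)))))) (fun z => ?_) θ
  refine (h.isParabolicSol.dirDeriv_energyDensity_le h.coeff.contDiff h.sol.contDiff
    (fun j => (h.source j).contDiff) hν (h.le_coeff z) (hdata.deriv_le z) hk hγk).trans ?_
  gcongr
  exacts [hdata.div_sq_le z, hdata.source_sq_le z]

lemma sliceIntegral_sq_le_of_dataBounds (h : IsCellSol μ ν a R D) (hμ : 0 < μ) (hν : 0 < ν)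
    (hdata : DataBounds γ B L a D) (θ : ℝ) :
    sliceIntegral t τ (fun z => R z ^ 2) θ ≤ B / ν ^ 2 := by
  have hcD (j : Fin 2) := (h.source j).continuous
  refine h.sliceIntegral_sq_le hμ hν (fun θ => ?_) θ
  rw [← sliceIntegral_const (t := t) (τ := τ) B θ]
  exact sliceIntegral_mono (by fun_prop) continuous_const hdata.source_sq_le θ

lemma sliceIntegral_gradSq_le (h : IsCellSol μ ν a R D) (hμ : 0 < μ) (hν : 0 < ν)
    (hdata : DataBounds γ B L a D) (hk : 1 ≤ k) (hγk : γ ≤ (k - 1) * ν) (θ : ℝ) :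
    sliceIntegral t τ (gradSq spaceDir R) θ ≤ (L + k * (B / ν) + k * (B / ν ^ 2)) / ν := by
  have hcG := h.smoothPeriodic_gradSq.continuous
  have hca := h.coeff.continuous
  have hcR := h.sol.continuous
  have hE := h.smoothPeriodic_energyDensity k
  have hcE := hE.continuous
  have henergy : sliceIntegral t τ (energyDensity μ k spaceDir a R) θ
      ≤ L + k * (B / ν) + k * (B / ν ^ 2) := by
    rw [← div_one (_ + _)]
    refine le_div_of_periodic_of_deriv_le (hasDerivAt_sliceIntegral hE.contDiff t τ) one_ne_zero
      (periodic_sliceIntegral hE t τ) one_pos (fun θ => ?_) θ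
    have hdecay : sliceIntegral t τ (energyDensity μ k spaceDir a R) θ
        - k * sliceIntegral t τ (fun z => R z ^ 2) θ
        ≤ sliceIntegral t τ (fun z => a z * gradSq spaceDir R z + 2 * k * μ * R z ^ 2) θ := by
      rw [← sliceIntegral_const_mul, ← sliceIntegral_sub (by fun_prop) (by fun_prop)]
      refine sliceIntegral_mono (by fun_prop) (by fun_prop) (fun z => ?_) θ
      have : 0 ≤ (2 * k - 1) * (μ * R z ^ 2) := mul_nonneg (by linarith) (by positivity)
      rw [energyDensity]
      linarith
    have := h.sliceIntegral_dirDeriv_energyDensity_le (t := t) (τ := τ) hν hdata hk hγk θ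
    have := sliceIntegral_nonneg (t := t) (τ := τ) (fun z => sq_nonneg (dirDeriv thetaDir R z)) θ
    have := mul_le_mul_of_nonneg_left (h.sliceIntegral_sq_le_of_dataBounds (t := t) (τ := τ) hμ hν
      hdata θ) (zero_le_one.trans hk)
    linarith
  rw [le_div_iff₀' hν, ← sliceIntegral_const_mul]
  refine (sliceIntegral_mono (by fun_prop) hcE (fun z => ?_) θ).trans henergy
  have := mul_le_mul_of_nonneg_right (h.le_coeff z) (gradSq_nonneg spaceDir R z)
  have : 0 ≤ (μ + k) * R z ^ 2 := by positivity
  rw [energyDensity]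
  linarith

lemma integral_sliceIntegral_dirDeriv_sq_le (h : IsCellSol μ ν a R D) (hμ : 0 < μ) (hν : 0 < ν)
    (hdata : DataBounds γ B L a D) (hk : 1 ≤ k) (hγk : γ ≤ (k - 1) * ν) :
    ∫ θ in (0 : ℝ)..1, sliceIntegral t τ (fun z => dirDeriv thetaDir R z ^ 2) θ
      ≤ L + k * (B / ν) := by
  have hE := h.smoothPeriodic_energyDensity k
  have hint {F : Point → ℝ} (hF : SmoothPeriodic periodicVars F) :
      IntervalIntegrable (sliceIntegral t τ F) volume 0 1 :=
    Continuous.intervalIntegrable (continuous_iff_continuousAt.2 fun θ =>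
      (hasDerivAt_sliceIntegral hF.contDiff t τ θ).continuousAt) _ _
  have hθ : SmoothPeriodic periodicVars fun z => dirDeriv thetaDir R z ^ 2 :=
    (h.sol.dirDeriv thetaDir).comp (contDiff_id.pow 2)
  have hperiod : ∫ θ in (0 : ℝ)..1,
      sliceIntegral t τ (dirDeriv thetaDir (energyDensity μ k spaceDir a R)) θ = 0 := by
    rw [intervalIntegral.integral_eq_sub_of_hasDerivAt
      (fun θ _ => hasDerivAt_sliceIntegral hE.contDiff t τ θ) (hint (hE.dirDeriv thetaDir)),
      ← zero_add (1 : ℝ), periodic_sliceIntegral hE t τ, sub_self]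
  calc ∫ θ in (0 : ℝ)..1, sliceIntegral t τ (fun z => dirDeriv thetaDir R z ^ 2) θ
      ≤ ∫ θ in (0 : ℝ)..1, ((L + k * (B / ν))
        - sliceIntegral t τ (dirDeriv thetaDir (energyDensity μ k spaceDir a R)) θ) := by
        refine intervalIntegral.integral_mono zero_le_one (hint hθ)
          (intervalIntegrable_const.sub (hint (hE.dirDeriv thetaDir))) fun θ => ?_
        have := h.sliceIntegral_dirDeriv_energyDensity_le (t := t) (τ := τ) hν hdata hk hγk θ
        have := sliceIntegral_nonneg (t := t) (τ := τ)
          (F := fun z => a z * gradSq spaceDir R z + 2 * k * μ * R z ^ 2) (fun z => add_nonneg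
            (mul_nonneg (hν.le.trans (h.le_coeff z)) (gradSq_nonneg spaceDir R z))
            (by positivity)) θ
        linarith
    _ = L + k * (B / ν) := by
        rw [intervalIntegral.integral_sub intervalIntegrable_const (hint (hE.dirDeriv thetaDir)),
          hperiod]
        simp

end IsCellSol

end Estimates

section CellProblemTranslation

variable {E : Type} [NormedAddCommGroup E] [NormedSpace ℝ E]

/-- A function `S(t, τ, θ, x)` as a function on `Point`. -/
def uncurryPoint (S : ℝ → ℝ → ℝ → ℝ × ℝ → E) (z : Point) : E := S z.1 z.2.1 z.2.2.1 z.2.2.2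

lemma smoothPeriodic_uncurryPoint_iff {S : ℝ → ℝ → ℝ → ℝ × ℝ → E} :
    SmoothPeriodic periodicVars (uncurryPoint S) ↔ ContDiff ℝ ∞ (uncurryPoint S) ∧
      (∀ t τ θ x, S t τ (θ + 1) x = S t τ θ x) ∧ ∀ t τ θ, SpacePeriodic (S t τ θ) := by
  refine ⟨fun h => ⟨h.contDiff, h.apply_add_theta, h.apply_add_space⟩,
    fun ⟨hS, hθ, hx⟩ => ⟨hS, ?_⟩⟩
  rintro ⟨t, τ, θ, x, y⟩ n
  have hθ' := Function.Periodic.int_mul (f := fun θ => S t τ θ (x + n 1, y + n 2)) (c := 1)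
    (fun θ => hθ t τ θ _) (n 0) θ
  have hx' := Function.Periodic.int_mul (f := fun x => S t τ θ (x, y + n 2)) (c := 1)
    (fun x => by simpa using (hx t τ θ (x, y + n 2)).1) (n 1) x
  have hy' := Function.Periodic.int_mul (f := fun y => S t τ θ (x, y)) (c := 1)
    (fun y => by simpa using (hx t τ θ (x, y)).2) (n 2) y
  simp only [mul_one] at hθ' hx' hy'
  simp only [uncurryPoint, periodicVars_apply, Prod.mk_add_mk, add_zero, hθ', hx', hy']

/-- The direction of the parameter `t`. -/
def tDir : Point := (1, 0, 0, 0)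

/-- The direction of the parameter `τ`. -/
def tauDir : Point := (0, 1, 0, 0)

variable {S : ℝ → ℝ → ℝ → ℝ × ℝ → E}

lemma deriv_t (hS : Differentiable ℝ (uncurryPoint S)) (t τ θ : ℝ) (x : ℝ × ℝ) :
    deriv (fun s => S s τ θ x) t = dirDeriv tDir (uncurryPoint S) (t, τ, θ, x) :=
  (hasDerivAt_comp_curve (φ := fun s => (s, τ, θ, x)) (hS _) <|
    (hasDerivAt_id t).prodMk (hasDerivAt_const t (τ, θ, x))).deriv

lemma deriv_tau (hS : Differentiable ℝ (uncurryPoint S)) (t τ θ : ℝ) (x : ℝ × ℝ) :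
    deriv (fun s => S t s θ x) τ = dirDeriv tauDir (uncurryPoint S) (t, τ, θ, x) :=
  (hasDerivAt_comp_curve (φ := fun s => (t, s, θ, x)) (hS _) <|
    (hasDerivAt_const τ t).prodMk <| (hasDerivAt_id τ).prodMk
      (hasDerivAt_const τ (θ, x))).deriv

lemma deriv_theta (hS : Differentiable ℝ (uncurryPoint S)) (t τ θ : ℝ) (x : ℝ × ℝ) :
    deriv (fun s => S t τ s x) θ = dirDeriv thetaDir (uncurryPoint S) (t, τ, θ, x) :=
  (hasDerivAt_theta hS t τ θ x).deriv

lemma fderiv_slice {F : Point → ℝ} (hF : Differentiable ℝ F) (t τ θ : ℝ) (x v : ℝ × ℝ) :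
    fderiv ℝ (fun y => F (t, τ, θ, y)) x v = dirDeriv (0, 0, 0, v) F (t, τ, θ, x) :=
  dirDeriv_comp (φ := fun y : ℝ × ℝ => (t, τ, θ, y)) (hF _)
    ((hasFDerivAt_const t x).prodMk <| (hasFDerivAt_const τ x).prodMk <|
      (hasFDerivAt_const θ x).prodMk (hasFDerivAt_id x)) v

lemma grad_eq {S : ℝ → ℝ → ℝ → ℝ × ℝ → ℝ} (hS : Differentiable ℝ (uncurryPoint S)) (t τ θ : ℝ)
    (x : ℝ × ℝ) : grad (S t τ θ) x = (dirDeriv (spaceDir 0) (uncurryPoint S) (t, τ, θ, x),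
      dirDeriv (spaceDir 1) (uncurryPoint S) (t, τ, θ, x)) := by
  rw [spaceDir_zero, spaceDir_one]
  exact Prod.ext (fderiv_slice hS t τ θ x (1, 0)) (fderiv_slice hS t τ θ x (0, 1))

lemma div2_slice {F₀ F₁ : Point → ℝ} (h₀ : Differentiable ℝ F₀) (h₁ : Differentiable ℝ F₁)
    (t τ θ : ℝ) (x : ℝ × ℝ) : div2 (fun y => (F₀ (t, τ, θ, y), F₁ (t, τ, θ, y))) x
      = dirDeriv (spaceDir 0) F₀ (t, τ, θ, x) + dirDeriv (spaceDir 1) F₁ (t, τ, θ, x) := by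
  rw [spaceDir_zero, spaceDir_one, ← fderiv_slice h₀, ← fderiv_slice h₁]
  rfl

/-- The two components of the vector field `C(t, τ, θ, x)`. -/
def components (C : ℝ → ℝ → ℝ → ℝ × ℝ → ℝ × ℝ) : Fin 2 → Point → ℝ :=
  ![fun z => (uncurryPoint C z).1, fun z => (uncurryPoint C z).2]

/-- Smoothness, periodicity in `(θ, x)`, nonnegativity of `A`, and the part of (H1) and (H2) that
the cell problem depends on; `δ` stands for the bound `√ε` on the `τ` derivatives. -/
structure CoeffBounds (γ δ : ℝ) (A : ℝ → ℝ → ℝ → ℝ × ℝ → ℝ)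
    (C : ℝ → ℝ → ℝ → ℝ × ℝ → ℝ × ℝ) : Prop where
  smooth_coeff : SmoothPeriodic periodicVars (uncurryPoint A)
  smooth_source : SmoothPeriodic periodicVars (uncurryPoint C)
  nonneg : ∀ t τ θ x, 0 ≤ A t τ θ x
  coeff_le : ∀ t τ θ x, A t τ θ x ≤ γ
  source_le : ∀ t τ θ x, ‖C t τ θ x‖ ≤ γ
  coeff_deriv_t_le : ∀ t τ θ x, |deriv (fun s => A s τ θ x) t| ≤ γ
  source_deriv_t_le : ∀ t τ θ x, ‖deriv (fun s => C s τ θ x) t‖ ≤ γ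
  coeff_deriv_theta_le : ∀ t τ θ x, deriv (fun s => A t τ s x) θ ≤ γ
  div_le : ∀ t τ θ x, |div2 (C t τ θ) x| ≤ γ
  coeff_deriv_tau_le : ∀ t τ θ x, |deriv (fun s => A t s θ x) τ| ≤ δ * γ
  source_deriv_tau_le : ∀ t τ θ x, ‖deriv (fun s => C t s θ x) τ‖ ≤ δ * γ

lemma coeffBounds_of_coeffBasic {γ ε : ℝ} {A : ℝ → ℝ → ℝ → ℝ × ℝ → ℝ}
    {C : ℝ → ℝ → ℝ → ℝ × ℝ → ℝ × ℝ} (h : CoeffBasic γ ε A C) : CoeffBounds γ √ε A C := by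
  obtain ⟨hA, hC, h0, hper, hx, h1, h2⟩ := h
  exact {
    smooth_coeff := smoothPeriodic_uncurryPoint_iff.2
      ⟨hA, fun t τ θ x => (hper t τ θ x).2.1, fun t τ θ => (hx t τ θ).1⟩
    smooth_source := smoothPeriodic_uncurryPoint_iff.2
      ⟨hC, fun t τ θ x => (hper t τ θ x).2.2.2, fun t τ θ => (hx t τ θ).2⟩
    nonneg := h0
    coeff_le := fun t τ θ x => (le_abs_self _).trans (h1 t τ θ x).1
    source_le := fun t τ θ x => (h1 t τ θ x).2.1
    coeff_deriv_t_le := fun t τ θ x => (h1 t τ θ x).2.2.1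
    source_deriv_t_le := fun t τ θ x => (h1 t τ θ x).2.2.2.1
    coeff_deriv_theta_le := fun t τ θ x => (le_abs_self _).trans (h1 t τ θ x).2.2.2.2.1
    div_le := fun t τ θ x => (h1 t τ θ x).2.2.2.2.2.2.2.1
    coeff_deriv_tau_le := fun t τ θ x => (h2 t τ θ x).1
    source_deriv_tau_le := fun t τ θ x => (h2 t τ θ x).2.1 }

namespace CoeffBounds

variable {γ δ μ ν : ℝ} {A S : ℝ → ℝ → ℝ → ℝ × ℝ → ℝ} {C : ℝ → ℝ → ℝ → ℝ × ℝ → ℝ × ℝ}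

lemma smoothPeriodic_components (h : CoeffBounds γ δ A C) :
    ∀ j, SmoothPeriodic periodicVars (components C j)
  | 0 => h.smooth_source.comp contDiff_fst
  | 1 => h.smooth_source.comp contDiff_snd

lemma smoothPeriodic_coeff_add (h : CoeffBounds γ δ A C) (ν : ℝ) :
    SmoothPeriodic periodicVars fun z => uncurryPoint A z + ν :=
  h.smooth_coeff.add (.const ν)

lemma dirDeriv_coeff_add (h : CoeffBounds γ δ A C) (ν : ℝ) (w z : Point) :
    dirDeriv w (fun z => uncurryPoint A z + ν) z = dirDeriv w (uncurryPoint A) z := by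
  rw [dirDeriv_add (h.smooth_coeff.contDiff.differentiable (by simp) z) (by fun_prop),
    dirDeriv_const, add_zero]

lemma differentiable_components (h : CoeffBounds γ δ A C) (j : Fin 2) :
    Differentiable ℝ (components C j) :=
  (h.smoothPeriodic_components j).contDiff.differentiable (by simp)

lemma div2_source (h : CoeffBounds γ δ A C) (t τ θ : ℝ) (x : ℝ × ℝ) :
    div2 (C t τ θ) x = ∑ j, dirDeriv (spaceDir j) (components C j) (t, τ, θ, x) := by
  rw [Fin.sum_univ_two, ← div2_slice (h.differentiable_components 0)
    (h.differentiable_components 1)]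
  rfl

lemma equation_iff (h : CoeffBounds γ δ A C) (hS : SmoothPeriodic periodicVars (uncurryPoint S))
    (t τ θ : ℝ) (x : ℝ × ℝ) :
    μ * S t τ θ x + deriv (fun σ => S t τ σ x) θ
        - div2 (fun y => (A t τ θ y + ν) • grad (S t τ θ) y) x = div2 (C t τ θ) x ↔
      μ * uncurryPoint S (t, τ, θ, x) + dirDeriv thetaDir (uncurryPoint S) (t, τ, θ, x)
        = ∑ j, dirDeriv (spaceDir j) (flux (fun z => uncurryPoint A z + ν) (uncurryPoint S)
          (components C j) (spaceDir j)) (t, τ, θ, x) := by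
  have hdiff : Differentiable ℝ (uncurryPoint S) := hS.contDiff.differentiable (by simp)
  have hflux (j : Fin 2) : Differentiable ℝ fun z =>
      (uncurryPoint A z + ν) * dirDeriv (spaceDir j) (uncurryPoint S) z :=
    ((h.smoothPeriodic_coeff_add ν).mul (hS.dirDeriv (spaceDir j))).contDiff.differentiable
      (by simp)
  have hdiv : div2 (fun y => (A t τ θ y + ν) • grad (S t τ θ) y) x
      = ∑ j, dirDeriv (spaceDir j) (fun z => (uncurryPoint A z + ν)
        * dirDeriv (spaceDir j) (uncurryPoint S) z) (t, τ, θ, x) := by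
    simp only [grad_eq hdiff]
    rw [Fin.sum_univ_two, ← div2_slice (hflux 0) (hflux 1)]
    rfl
  rw [deriv_theta hdiff, hdiv, h.div2_source, sub_eq_iff_eq_add', ← Finset.sum_add_distrib,
    Finset.sum_congr rfl fun j _ =>
      (dirDeriv_add (hflux j _) (h.differentiable_components j _) (spaceDir j)).symm]
  rfl

lemma isRegCellSolP_iff (h : CoeffBounds γ δ A C) : IsRegCellSolP A C μ ν S ↔
    IsCellSol μ ν (fun z => uncurryPoint A z + ν) (uncurryPoint S) (components C) := by
  constructor
  · rintro ⟨hS, hθ, hx, heq⟩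
    have hS' := smoothPeriodic_uncurryPoint_iff.2 ⟨hS, hθ, hx⟩
    exact ⟨h.smoothPeriodic_coeff_add ν, hS', h.smoothPeriodic_components,
      fun z => le_add_of_nonneg_left (h.nonneg _ _ _ _),
      fun ⟨t, τ, θ, x⟩ => (h.equation_iff hS' t τ θ x).1 (heq t τ θ x)⟩
  · intro hsol
    obtain ⟨hS, hθ, hx⟩ := smoothPeriodic_uncurryPoint_iff.1 hsol.sol
    exact ⟨hS, hθ, hx, fun t τ θ x => (h.equation_iff hsol.sol t τ θ x).2 (hsol.isParabolicSol _)⟩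

end CoeffBounds

end CellProblemTranslation

section Norms

variable {f : ℝ → ℝ × ℝ → ℝ} {K : ℝ}

lemma linfL2Norm_le (hK : 0 ≤ K) (h : ∀ θ, ∫ x in Tsq, f θ x ^ 2 ≤ K ^ 2) : LinfL2Norm f ≤ K := by
  have : Nonempty (Set.Icc (0 : ℝ) 1) := ⟨⟨0, by simp⟩⟩
  refine ciSup_le fun θ => ?_
  rw [L2norm, ← Real.sqrt_eq_rpow]
  exact Real.sqrt_le_iff.2 ⟨hK, h θ⟩

lemma l2sharpNorm_le (hK : 0 ≤ K) (h : ∫ θ in (0 : ℝ)..1, ∫ x in Tsq, f θ x ^ 2 ≤ K ^ 2) :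
    L2sharpNorm f ≤ K := by
  rw [L2sharpNorm, ← Real.sqrt_eq_rpow, integral_Icc_eq_integral_Ioc,
    ← intervalIntegral.integral_of_le zero_le_one]
  exact Real.sqrt_le_iff.2 ⟨hK, h⟩

lemma sq_norm_le_add (v : ℝ × ℝ) : ‖v‖ ^ 2 ≤ v.1 ^ 2 + v.2 ^ 2 := by
  rw [Prod.norm_def, Real.norm_eq_abs, Real.norm_eq_abs]
  rcases max_choice |v.1| |v.2| with h | h <;> rw [h, sq_abs]
  exacts [le_add_of_nonneg_right (sq_nonneg _), le_add_of_nonneg_left (sq_nonneg _)]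

end Norms

section Constants

/-- The bound for the integral of `S²` over a slice. -/
def solBound (γ ν : ℝ) : ℝ := 2 * γ ^ 2 / ν ^ 2

/-- The bound for the integral of `(∂_θ S)²` over a period. -/
def thetaBound (γ ν : ℝ) : ℝ := γ ^ 2 + (γ / ν + 1) * (2 * γ ^ 2 / ν)

/-- The bound for the integral of `|∇S|²` over a slice. -/
def gradBound (γ ν : ℝ) : ℝ := (thetaBound γ ν + (γ / ν + 1) * solBound γ ν) / ν

/-- The bound for the integral of `(∂_t S)²` over a slice. -/
def paramBound (γ ν : ℝ) : ℝ := γ ^ 2 * (2 * gradBound γ ν + 4) / ν ^ 2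

/-- The constant `γ₃` of the theorem. -/
def cellConst (γ ν : ℝ) : ℝ :=
  √(solBound γ ν + thetaBound γ ν + gradBound γ ν + paramBound γ ν)

variable {γ ν : ℝ}

lemma le_cellConst_sq (hγ : 0 ≤ γ) (hν : 0 < ν) : solBound γ ν ≤ cellConst γ ν ^ 2 ∧
    thetaBound γ ν ≤ cellConst γ ν ^ 2 ∧ gradBound γ ν ≤ cellConst γ ν ^ 2 ∧
    paramBound γ ν ≤ cellConst γ ν ^ 2 := by
  have hsol : 0 ≤ solBound γ ν := by unfold solBound; positivity
  have htheta : 0 ≤ thetaBound γ ν := by unfold thetaBound; positivity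
  have hgrad : 0 ≤ gradBound γ ν := by unfold gradBound; positivity
  have hparam : 0 ≤ paramBound γ ν := by unfold paramBound; positivity
  rw [cellConst, Real.sq_sqrt (by positivity)]
  refine ⟨?_, ?_, ?_, ?_⟩ <;> linarith

lemma cellConst_nonneg (γ ν : ℝ) : 0 ≤ cellConst γ ν := Real.sqrt_nonneg _

end Constants

namespace CoeffBounds

variable {γ δ μ ν : ℝ} {A S : ℝ → ℝ → ℝ → ℝ × ℝ → ℝ} {C : ℝ → ℝ → ℝ → ℝ × ℝ → ℝ × ℝ}

lemma exists_isRegCellSolP (h : CoeffBounds γ δ A C) (hμ : 0 < μ) (hν : 0 < ν) :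
    ∃ S, IsRegCellSolP A C μ ν S := by
  have hcoeff := h.smoothPeriodic_coeff_add ν
  have hle (z : Point) : ν ≤ uncurryPoint A z + ν := le_add_of_nonneg_left (h.nonneg _ _ _ _)
  obtain ⟨F, hF, hsol⟩ := exists_smoothPeriodic_isParabolicSol 0 Fin.succ hμ hν hcoeff hle
    (fun z => add_le_add_left (h.coeff_le _ _ _ _) ν) h.smoothPeriodic_components
  exact ⟨fun t τ θ x => F (t, τ, θ, x), h.isRegCellSolP_iff.2
    ⟨hcoeff, hF, h.smoothPeriodic_components, hle, hsol⟩⟩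

lemma isRegCellSolP_unique {S' : ℝ → ℝ → ℝ → ℝ × ℝ → ℝ} (h : CoeffBounds γ δ A C) (hμ : 0 < μ)
    (hν : 0 < ν) (hS : IsRegCellSolP A C μ ν S) (hS' : IsRegCellSolP A C μ ν S') : S = S' := by
  have heq := (h.isRegCellSolP_iff.1 hS).unique (h.isRegCellSolP_iff.1 hS') hμ hν
  funext t τ θ x
  exact congrFun heq (t, τ, θ, x)

lemma bound_nonneg (h : CoeffBounds γ δ A C) : 0 ≤ γ :=
  (h.nonneg 0 0 0 0).trans (h.coeff_le 0 0 0 0)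

lemma dirDeriv_components_sq_le (h : CoeffBounds γ δ A C) {w z : Point} {b : ℝ}
    (hb : ‖dirDeriv w (uncurryPoint C) z‖ ≤ b) (j : Fin 2) :
    dirDeriv w (components C j) z ^ 2 ≤ b ^ 2 := by
  have hC : DifferentiableAt ℝ (uncurryPoint C) z :=
    h.smooth_source.contDiff.differentiable (by simp) z
  refine sq_le_sq.2 (le_trans ?_ (hb.trans (le_abs_self b)))
  match j with
  | 0 =>
    exact (congrArg _ (dirDeriv_clm_comp (.fst ℝ ℝ ℝ) hC w)).trans_le
      (norm_fst_le (dirDeriv w (uncurryPoint C) z))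
  | 1 =>
    exact (congrArg _ (dirDeriv_clm_comp (.snd ℝ ℝ ℝ) hC w)).trans_le
      (norm_snd_le (dirDeriv w (uncurryPoint C) z))

lemma dataBounds (h : CoeffBounds γ δ A C) (ν : ℝ) :
    DataBounds γ (2 * γ ^ 2) (γ ^ 2) (fun z => uncurryPoint A z + ν) (components C) where
  deriv_le z := by
    rw [h.dirDeriv_coeff_add, ← deriv_theta (h.smooth_coeff.contDiff.differentiable (by simp))]
    exact h.coeff_deriv_theta_le _ _ _ _
  source_sq_le z := by
    have hC := (h.source_le z.1 z.2.1 z.2.2.1 z.2.2.2).trans (le_abs_self γ)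
    rw [Fin.sum_univ_two, two_mul]
    exact add_le_add (sq_le_sq.2 ((norm_fst_le _).trans hC)) (sq_le_sq.2 ((norm_snd_le _).trans hC))
  div_sq_le z := by
    rw [← h.div2_source]
    exact sq_le_sq.2 ((h.div_le _ _ _ _).trans (le_abs_self γ))

lemma integral_eq_zero (h : CoeffBounds γ δ A C) (hμ : 0 < μ) (hS : IsRegCellSolP A C μ ν S)
    (t τ θ : ℝ) : ∫ x in Tsq, S t τ θ x = 0 :=
  (h.isRegCellSolP_iff.1 hS).sliceIntegral_eq_zero hμ t τ θ

lemma linfL2Norm_sol_le (h : CoeffBounds γ δ A C) (hμ : 0 < μ) (hν : 0 < ν)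
    (hS : IsRegCellSolP A C μ ν S) (t τ : ℝ) : LinfL2Norm (S t τ) ≤ cellConst γ ν :=
  linfL2Norm_le (cellConst_nonneg γ ν) fun θ =>
    ((h.isRegCellSolP_iff.1 hS).sliceIntegral_sq_le_of_dataBounds hμ hν (h.dataBounds ν) θ).trans
      (le_cellConst_sq h.bound_nonneg hν).1

lemma l2sharpNorm_deriv_theta_le (h : CoeffBounds γ δ A C) (hμ : 0 < μ) (hν : 0 < ν)
    (hS : IsRegCellSolP A C μ ν S) (t τ : ℝ) :
    L2sharpNorm (fun θ x => deriv (fun σ => S t τ σ x) θ) ≤ cellConst γ ν := by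
  have hsol := h.isRegCellSolP_iff.1 hS
  have hγ := h.bound_nonneg
  simp only [deriv_theta (hsol.sol.contDiff.differentiable (by simp))]
  exact l2sharpNorm_le (cellConst_nonneg γ ν) <|
    (hsol.integral_sliceIntegral_dirDeriv_sq_le hμ hν (h.dataBounds ν)
      (le_add_of_nonneg_left (by positivity)) (by field_simp; linarith)).trans
      (le_cellConst_sq hγ hν).2.1

lemma sliceIntegral_gradSq_le (h : CoeffBounds γ δ A C) (hμ : 0 < μ) (hν : 0 < ν)
    (hS : IsRegCellSolP A C μ ν S) (t τ θ : ℝ) :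
    sliceIntegral t τ (gradSq spaceDir (uncurryPoint S)) θ ≤ gradBound γ ν := by
  have hγ := h.bound_nonneg
  exact (h.isRegCellSolP_iff.1 hS).sliceIntegral_gradSq_le hμ hν (h.dataBounds ν)
    (le_add_of_nonneg_left (by positivity)) (by field_simp; linarith) θ

lemma linfL2Norm_grad_le (h : CoeffBounds γ δ A C) (hμ : 0 < μ) (hν : 0 < ν)
    (hS : IsRegCellSolP A C μ ν S) (t τ : ℝ) :
    LinfL2Norm (fun θ x => ‖grad (S t τ θ) x‖) ≤ cellConst γ ν := by
  have hsol := h.isRegCellSolP_iff.1 hS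
  refine linfL2Norm_le (cellConst_nonneg γ ν) fun θ =>
    le_trans ?_ <| (h.sliceIntegral_gradSq_le hμ hν hS t τ θ).trans
      (le_cellConst_sq h.bound_nonneg hν).2.2.1
  refine integral_mono_of_nonneg (.of_forall fun x => sq_nonneg _)
    (integrableOn_slice hsol.smoothPeriodic_gradSq.continuous t τ θ) (.of_forall fun x => ?_)
  simp only [grad_eq (hsol.sol.contDiff.differentiable (by simp)), gradSq, Fin.sum_univ_two]
  exact sq_norm_le_add _

lemma linfL2Norm_dirDeriv_le (h : CoeffBounds γ δ A C) (hμ : 0 < μ) (hν : 0 < ν)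
    (hS : IsRegCellSolP A C μ ν S) {w : Point} {b : ℝ} (hb : 0 ≤ b)
    (hA : ∀ z, |dirDeriv w (uncurryPoint A) z| ≤ b * γ)
    (hC : ∀ z, ‖dirDeriv w (uncurryPoint C) z‖ ≤ b * γ) (t τ : ℝ) :
    LinfL2Norm (fun θ x => dirDeriv w (uncurryPoint S) (t, τ, θ, x)) ≤ b * cellConst γ ν := by
  refine linfL2Norm_le (mul_nonneg hb (cellConst_nonneg γ ν)) fun θ => ?_
  calc sliceIntegral t τ (fun z => dirDeriv w (uncurryPoint S) z ^ 2) θ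
      ≤ (b * γ) ^ 2 * (2 * gradBound γ ν + 4) / ν ^ 2 := by
        refine (h.isRegCellSolP_iff.1 hS).sliceIntegral_dirDeriv_sq_le hμ hν (fun z => ?_)
          (fun j z => h.dirDeriv_components_sq_le (hC z) j) (h.sliceIntegral_gradSq_le hμ hν hS t τ)
          θ
        rw [h.dirDeriv_coeff_add]
        exact sq_le_sq.2 ((hA z).trans (le_abs_self _))
    _ = b ^ 2 * paramBound γ ν := by
        rw [paramBound]
        ring
    _ ≤ (b * cellConst γ ν) ^ 2 := by
        rw [mul_pow]
        gcongr
        exact (le_cellConst_sq h.bound_nonneg hν).2.2.2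

lemma linfL2Norm_deriv_t_le (h : CoeffBounds γ δ A C) (hμ : 0 < μ) (hν : 0 < ν)
    (hS : IsRegCellSolP A C μ ν S) (t τ : ℝ) :
    LinfL2Norm (fun θ x => deriv (fun s => S s τ θ x) t) ≤ cellConst γ ν := by
  simp only [deriv_t ((h.isRegCellSolP_iff.1 hS).sol.contDiff.differentiable (by simp))]
  rw [← one_mul (cellConst γ ν)]
  refine h.linfL2Norm_dirDeriv_le hμ hν hS zero_le_one (fun z => ?_) (fun z => ?_) t τ
  · rw [one_mul, ← deriv_t (h.smooth_coeff.contDiff.differentiable (by simp))]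
    exact h.coeff_deriv_t_le _ _ _ _
  · rw [one_mul, ← deriv_t (h.smooth_source.contDiff.differentiable (by simp))]
    exact h.source_deriv_t_le _ _ _ _

lemma linfL2Norm_deriv_tau_le (h : CoeffBounds γ δ A C) (hμ : 0 < μ) (hν : 0 < ν)
    (hS : IsRegCellSolP A C μ ν S) (hδ : 0 ≤ δ) (t τ : ℝ) :
    LinfL2Norm (fun θ x => deriv (fun s => S t s θ x) τ) ≤ δ * cellConst γ ν := by
  simp only [deriv_tau ((h.isRegCellSolP_iff.1 hS).sol.contDiff.differentiable (by simp))]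
  refine h.linfL2Norm_dirDeriv_le hμ hν hS hδ (fun z => ?_) (fun z => ?_) t τ
  · rw [← deriv_tau (h.smooth_coeff.contDiff.differentiable (by simp))]
    exact h.coeff_deriv_tau_le _ _ _ _
  · rw [← deriv_tau (h.smooth_source.contDiff.differentiable (by simp))]
    exact h.source_deriv_tau_le _ _ _ _

end CoeffBounds

end CellProblem

open CellProblem in
theorem regularized_cell_problem_wellposedness_general (γ ν : ℝ) (hν : 0 < ν) :
    ∃ γ₃ : ℝ, ∀ (δ : ℝ) (A : ℝ → ℝ → ℝ → ℝ × ℝ → ℝ) (C : ℝ → ℝ → ℝ → ℝ × ℝ → ℝ × ℝ) (μ : ℝ),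
      0 ≤ δ → CoeffBounds γ δ A C → 0 < μ →
      ∃ S : ℝ → ℝ → ℝ → ℝ × ℝ → ℝ,
        IsRegCellSolP A C μ ν S ∧
        (∀ S', IsRegCellSolP A C μ ν S' → S' = S) ∧
        ∀ t τ : ℝ,
          (∀ θ : ℝ, ∫ x in Tsq, S t τ θ x = 0) ∧
          L2sharpNorm (fun θ x => deriv (fun σ => S t τ σ x) θ) ≤ γ₃ ∧
          LinfL2Norm (fun θ x => ‖grad (S t τ θ) x‖) ≤ γ₃ ∧
          LinfL2Norm (S t τ) ≤ γ₃ ∧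
          LinfL2Norm (fun θ x => deriv (fun s => S s τ θ x) t) ≤ γ₃ ∧
          LinfL2Norm (fun θ x => deriv (fun s => S t s θ x) τ) ≤ δ * γ₃ := by
  refine ⟨cellConst γ ν, fun δ A C μ hδ h hμ => ?_⟩
  obtain ⟨S, hS⟩ := h.exists_isRegCellSolP hμ hν
  exact ⟨S, hS, fun S' hS' => h.isRegCellSolP_unique hμ hν hS' hS, fun t τ =>
    ⟨h.integral_eq_zero hμ hS t τ, h.l2sharpNorm_deriv_theta_le hμ hν hS t τ,
      h.linfL2Norm_grad_le hμ hν hS t τ, h.linfL2Norm_sol_le hμ hν hS t τ,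
      h.linfL2Norm_deriv_t_le hμ hν hS t τ, h.linfL2Norm_deriv_tau_le hμ hν hS hδ t τ⟩⟩

/-- Theorem 3.5: under (H1), (H2) and the periodicity of `Ã_ε` and `C̃_ε` in `τ`
and `θ`, for any `μ > 0` and `ν > 0` there exists a unique `θ`-periodic solution
`S_μ^ν(t,τ,θ,x)` of `μS + ∂S/∂θ − ∇·((Ã_ε+ν)∇S) = ∇·C̃_ε`, regular in the
parameters `t` and `τ`, and there is a constant `γ₃` depending only on `γ` and
`ν` such that `∫_{𝕋²} S_μ^ν dx = 0`, `‖∂S_μ^ν/∂θ‖_{L²_#} ≤ γ₃`,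
`‖∇S_μ^ν‖_{L^∞_#L²} ≤ γ₃`, `‖S_μ^ν‖_{L^∞_#L²} ≤ γ₃`,
`‖∂S_μ^ν/∂t‖_{L^∞_#L²} ≤ γ₃` and `‖∂S_μ^ν/∂τ‖_{L^∞_#L²} ≤ √ε γ₃`. -/
theorem regularized_cell_problem_wellposedness :
    ∀ γ ν : ℝ, 0 ≤ γ → 0 < ν → ∃ γ₃ : ℝ,
      ∀ (ε : ℝ) (A : ℝ → ℝ → ℝ → (ℝ × ℝ) → ℝ) (C : ℝ → ℝ → ℝ → (ℝ × ℝ) → ℝ × ℝ)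
        (μ : ℝ),
        0 < ε → ε ≤ 1 → CoeffBasic γ ε A C → 0 < μ →
        ∃ S : ℝ → ℝ → ℝ → (ℝ × ℝ) → ℝ,
          IsRegCellSolP A C μ ν S ∧
          (∀ S', IsRegCellSolP A C μ ν S' → S' = S) ∧
          ∀ t τ : ℝ,
            (∀ θ : ℝ, ∫ x in Tsq, S t τ θ x = 0) ∧
            L2sharpNorm (fun θ x => deriv (fun σ => S t τ σ x) θ) ≤ γ₃ ∧
            LinfL2Norm (fun θ x => ‖grad (S t τ θ) x‖) ≤ γ₃ ∧
            LinfL2Norm (S t τ) ≤ γ₃ ∧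
            LinfL2Norm (fun θ x => deriv (fun s => S s τ θ x) t) ≤ γ₃ ∧
            LinfL2Norm (fun θ x => deriv (fun s => S t s θ x) τ) ≤ Real.sqrt ε * γ₃ := by
  intro γ ν _ hν
  obtain ⟨γ₃, h⟩ := regularized_cell_problem_wellposedness_general γ ν hν
  exact ⟨γ₃, fun ε A C μ _ _ hcoeff hμ =>
    h √ε A C μ ε.sqrt_nonneg (CellProblem.coeffBounds_of_coeffBasic hcoeff) hμ⟩
end
end

section
/- For any μ > 0, ν > 0 and ε > 0, the θ-periodic solution S_μ^ν of the regularized cell problem satisfies ‖∇S_μ^ν‖_{L²_#(ℝ×𝕋²)} ≤ γ/ν and ‖∂S_μ^ν/∂θ‖_{L²_#(ℝ×𝕋²)} ≤ γ₃, where γ₃ depends only on γ and ν. -/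
open MeasureTheory Filter

noncomputable section

/-- The coefficients of the cell problem: a nonnegative regular scalar `Ã_ε(θ,x)`
and a regular vector field `C̃_ε(θ,x)`, both 1-periodic in `θ` and in space. -/
def CellCoeff (A : ℝ → (ℝ × ℝ) → ℝ) (C : ℝ → (ℝ × ℝ) → ℝ × ℝ) : Prop :=
  ContDiff ℝ (⊤ : ℕ∞) (fun p : ℝ × (ℝ × ℝ) => A p.1 p.2) ∧
  ContDiff ℝ (⊤ : ℕ∞) (fun p : ℝ × (ℝ × ℝ) => C p.1 p.2) ∧
  (∀ θ x, 0 ≤ A θ x) ∧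
  (∀ θ x, A (θ + 1) x = A θ x) ∧ (∀ θ x, C (θ + 1) x = C θ x) ∧
  (∀ θ, SpacePeriodic (A θ)) ∧ (∀ θ, SpacePeriodic (C θ))

/-- `S` is a classical solution, 1-periodic in `θ`, of the regularized cell problem
`μ S + ∂S/∂θ − ∇·((Ã_ε + ν)∇S) = ∇·C̃_ε` on `ℝ × 𝕋²`. -/
def IsRegCellSol (A : ℝ → (ℝ × ℝ) → ℝ) (C : ℝ → (ℝ × ℝ) → ℝ × ℝ)
    (μ ν : ℝ) (S : ℝ → (ℝ × ℝ) → ℝ) : Prop :=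
  ContDiff ℝ (⊤ : ℕ∞) (fun p : ℝ × (ℝ × ℝ) => S p.1 p.2) ∧
  (∀ θ x, S (θ + 1) x = S θ x) ∧
  (∀ θ, SpacePeriodic (S θ)) ∧
  (∀ θ x, μ * S θ x + deriv (fun σ => S σ x) θ
      - div2 (fun y => (A θ y + ν) • grad (S θ) y) x = div2 (C θ) x)

/-!
Multiplying the equation by `S` and integrating over a period cell leaves
`μ‖S‖² + ∫ (Ã + ν)|∇S|² = ∫ (∇·C̃) S`. Since `∇·C̃` has zero mean on each torus slice, the mean of
`S` may be subtracted on the right, and an `L¹` Poincaré inequality bounds the right-hand side by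
`γ/2 ∫ (|∂₁S| + |∂₂S|) ≤ ν/2 ∫ |∇S|² + γ²/(4ν)`, whose gradient term is absorbed on the left.
Multiplying by `∂S/∂θ` and using periodicity in `θ` leaves
`‖∂S/∂θ‖² = ∫ (∇·C̃) ∂S/∂θ + ½ ∫ (∂Ã/∂θ)|∇S|²`, uniformly in `μ`.
-/

section UnitCell

/-- Lebesgue measure on the unit cell `[0, 1]`, where `1` is the all-ones vector when `X` is a
product: the interval, square or cube over which periodic functions are averaged. -/
def unitCell (X : Type*) [MeasureSpace X] [Preorder X] [Zero X] [One X] : Measure X :=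
  volume.restrict (Set.Icc 0 1)

lemma unitCell_prod (X Y : Type*) [MeasureSpace X] [Preorder X] [Zero X] [One X]
    [MeasureSpace Y] [Preorder Y] [Zero Y] [One Y]
    [SFinite (volume : Measure X)] [SFinite (volume : Measure Y)] :
    unitCell (X × Y) = (unitCell X).prod (unitCell Y) := by
  rw [unitCell, unitCell, unitCell, Measure.prod_restrict, Set.Icc_prod_eq]
  rfl

instance {X : Type*} [MeasureSpace X] [Preorder X] [Zero X] [One X]
    [SFinite (volume : Measure X)] : SFinite (unitCell X) := by
  unfold unitCell
  infer_instance

instance : IsProbabilityMeasure (unitCell ℝ) := ⟨by simp [unitCell]⟩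

instance {X Y : Type*} [MeasureSpace X] [Preorder X] [Zero X] [One X]
    [MeasureSpace Y] [Preorder Y] [Zero Y] [One Y]
    [SFinite (volume : Measure X)] [SFinite (volume : Measure Y)]
    [IsProbabilityMeasure (unitCell X)] [IsProbabilityMeasure (unitCell Y)] :
    IsProbabilityMeasure (unitCell (X × Y)) := by
  rw [unitCell_prod]
  infer_instance

lemma integrable_unitCell {X : Type*} [TopologicalSpace X] [MeasureSpace X]
    [OpensMeasurableSpace X] [T2Space X] [Preorder X] [CompactIccSpace X] [Zero X] [One X]
    [IsFiniteMeasureOnCompacts (volume : Measure X)] {f : X → ℝ} (hf : Continuous f) :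
    Integrable f (unitCell X) :=
  hf.continuousOn.integrableOn_compact isCompact_Icc

lemma integral_unitCell_eq_intervalIntegral (f : ℝ → ℝ) :
    ∫ t, f t ∂unitCell ℝ = ∫ t in (0 : ℝ)..1, f t := by
  rw [unitCell, intervalIntegral.integral_of_le zero_le_one, integral_Icc_eq_integral_Ioc]

lemma integral_unitCell_prod {f : ℝ × ℝ × ℝ → ℝ} (hf : Continuous f) :
    ∫ p, f p ∂unitCell (ℝ × ℝ × ℝ) = ∫ θ, ∫ x, f (θ, x) ∂unitCell (ℝ × ℝ) ∂unitCell ℝ := by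
  have hint := integrable_unitCell hf
  rw [unitCell_prod] at hint ⊢
  exact integral_prod f hint

end UnitCell

section PartialDerivatives

variable {X Y : Type*} [NormedAddCommGroup X] [NormedSpace ℝ X]
  [NormedAddCommGroup Y] [NormedSpace ℝ Y] {F : X × Y → ℝ}

lemma fderiv_slice_left (hF : Differentiable ℝ F) (x u : X) (y : Y) :
    fderiv ℝ (fun x' => F (x', y)) x u = fderiv ℝ F (x, y) (u, 0) := by
  have hslice := (hF (x, y)).hasFDerivAt.comp (f := fun x' => (x', y)) x
    (hasFDerivAt_prodMk_left x y)
  exact DFunLike.congr_fun hslice.fderiv u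

lemma fderiv_slice_right (hF : Differentiable ℝ F) (x : X) (y w : Y) :
    fderiv ℝ (fun y' => F (x, y')) y w = fderiv ℝ F (x, y) (0, w) := by
  have hslice := (hF (x, y)).hasFDerivAt.comp (f := fun y' => (x, y')) y
    (hasFDerivAt_prodMk_right x y)
  exact DFunLike.congr_fun hslice.fderiv w

end PartialDerivatives

section ZeroMean

variable {X Y : Type*}
  [NormedAddCommGroup X] [NormedSpace ℝ X] [MeasureSpace X] [BorelSpace X]
  [Preorder X] [CompactIccSpace X] [One X]
  [SFinite (volume : Measure X)] [IsFiniteMeasureOnCompacts (volume : Measure X)]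
  [NormedAddCommGroup Y] [NormedSpace ℝ Y] [MeasureSpace Y] [BorelSpace Y]
  [SecondCountableTopology Y] [Preorder Y] [CompactIccSpace Y] [One Y]
  [SFinite (volume : Measure Y)] [IsFiniteMeasureOnCompacts (volume : Measure Y)]

lemma integral_fderiv_prod_eq_zero {F : X × Y → ℝ} (hF : ContDiff ℝ 1 F) {u : X} {w : Y}
    (hX : ∀ y, ∫ x, fderiv ℝ (fun x' => F (x', y)) x u ∂unitCell X = 0)
    (hY : ∀ x, ∫ y, fderiv ℝ (fun y' => F (x, y')) y w ∂unitCell Y = 0) :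
    ∫ p, fderiv ℝ F p (u, w) ∂unitCell (X × Y) = 0 := by
  have hdiff : Differentiable ℝ F := hF.differentiable one_ne_zero
  have hint (v : X × Y) :
      Integrable (fun p => fderiv ℝ F p v) ((unitCell X).prod (unitCell Y)) := by
    rw [← unitCell_prod]
    exact integrable_unitCell ((hF.continuous_fderiv one_ne_zero).clm_apply continuous_const)
  have hsplit (p : X × Y) : fderiv ℝ F p (u, w) = fderiv ℝ F p (u, 0) + fderiv ℝ F p (0, w) := by
    rw [← map_add, Prod.mk_add_mk, add_zero, zero_add]
  simp_rw [hsplit, unitCell_prod]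
  rw [integral_add (hint _) (hint _), integral_prod_symm _ (hint _), integral_prod _ (hint _)]
  simp_rw [← fderiv_slice_left hdiff, ← fderiv_slice_right hdiff, hX, hY]
  simp

lemma integral_fderiv_unitCell_eq_zero {f : ℝ → ℝ} (hf : ContDiff ℝ 1 f) (h01 : f 1 = f 0)
    (u : ℝ) : ∫ t, fderiv ℝ f t u ∂unitCell ℝ = 0 := by
  have hderiv : ∫ t in (0 : ℝ)..1, deriv f t = f 1 - f 0 :=
    intervalIntegral.integral_deriv_eq_sub (fun t _ => hf.differentiable one_ne_zero t)
      ((hf.continuous_deriv le_rfl).intervalIntegrable 0 1)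
  simp_rw [fderiv_eq_smul_deriv]
  rw [integral_smul, integral_unitCell_eq_intervalIntegral, hderiv, h01, sub_self, smul_zero]

lemma SpacePeriodic.apply_one_left {E : Type*} {f : ℝ × ℝ → E} (hf : SpacePeriodic f) (y : ℝ) :
    f (1, y) = f (0, y) := by
  simpa using (hf (0, y)).1

lemma SpacePeriodic.apply_one_right {E : Type*} {f : ℝ × ℝ → E} (hf : SpacePeriodic f) (x : ℝ) :
    f (x, 1) = f (x, 0) := by
  simpa using (hf (x, 0)).2

lemma SpacePeriodic.integral_fderiv_eq_zero {f : ℝ × ℝ → ℝ} (hf : ContDiff ℝ 1 f)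
    (hper : SpacePeriodic f) (v : ℝ × ℝ) : ∫ x, fderiv ℝ f x v ∂unitCell (ℝ × ℝ) = 0 :=
  integral_fderiv_prod_eq_zero hf
    (fun y => integral_fderiv_unitCell_eq_zero (hf.comp (contDiff_prodMk_left y))
      (hper.apply_one_left y) v.1)
    (fun x => integral_fderiv_unitCell_eq_zero (hf.comp (contDiff_prodMk_right x))
      (hper.apply_one_right x) v.2)

lemma SpacePeriodic.integral_div2_eq_zero {F : ℝ × ℝ → ℝ × ℝ} (hF : ContDiff ℝ 1 F)
    (hper : SpacePeriodic F) : ∫ x, div2 F x ∂unitCell (ℝ × ℝ) = 0 := by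
  have hint {f : ℝ × ℝ → ℝ} (hf : ContDiff ℝ 1 f) (v : ℝ × ℝ) :
      Integrable (fun x => fderiv ℝ f x v) (unitCell (ℝ × ℝ)) :=
    integrable_unitCell ((hf.continuous_fderiv one_ne_zero).clm_apply continuous_const)
  have hfst : SpacePeriodic fun x => (F x).1 :=
    fun x => ⟨congrArg Prod.fst (hper x).1, congrArg Prod.fst (hper x).2⟩
  have hsnd : SpacePeriodic fun x => (F x).2 :=
    fun x => ⟨congrArg Prod.snd (hper x).1, congrArg Prod.snd (hper x).2⟩
  simp_rw [div2]
  rw [integral_add (hint hF.fst _) (hint hF.snd _), hfst.integral_fderiv_eq_zero hF.fst,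
    hsnd.integral_fderiv_eq_zero hF.snd, add_zero]

end ZeroMean

section Poincare

lemma abs_sub_le_half_integral_abs_deriv {f : ℝ → ℝ} (hf : ContDiff ℝ 1 f) (h01 : f 1 = f 0)
    {x y : ℝ} (hx : x ∈ Set.Icc 0 1) (hy : y ∈ Set.Icc 0 1) :
    |f x - f y| ≤ 1 / 2 * ∫ t, |deriv f t| ∂unitCell ℝ := by
  wlog hxy : x ≤ y generalizing x y
  · rw [abs_sub_comm]
    exact this hy hx (le_of_not_ge hxy)
  have hcont : Continuous (deriv f) := hf.continuous_deriv le_rfl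
  have hvar {a b : ℝ} (hab : a ≤ b) : |f b - f a| ≤ ∫ t in a..b, |deriv f t| := by
    rw [← intervalIntegral.integral_deriv_eq_sub
      (fun t _ => hf.differentiable one_ne_zero t) (hcont.intervalIntegrable a b)]
    exact intervalIntegral.abs_integral_le_integral_abs hab
  have hsplit : ∫ t, |deriv f t| ∂unitCell ℝ =
      (∫ t in (0 : ℝ)..x, |deriv f t|) + (∫ t in x..y, |deriv f t|) +
        ∫ t in y..1, |deriv f t| := by
    have hint (a b : ℝ) : IntervalIntegrable (fun t => |deriv f t|) volume a b :=
      hcont.abs.intervalIntegrable a b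
    rw [integral_unitCell_eq_intervalIntegral,
      intervalIntegral.integral_add_adjacent_intervals (hint _ _) (hint _ _),
      intervalIntegral.integral_add_adjacent_intervals (hint _ _) (hint _ _)]
  -- `x` and `y` are joined by two arcs of the circle; the shorter variation is at most half.
  have hdirect : |f x - f y| ≤ ∫ t in x..y, |deriv f t| :=
    abs_sub_comm (f x) (f y) ▸ hvar hxy
  have hwrap : |f x - f y| ≤ (∫ t in (0 : ℝ)..x, |deriv f t|) + ∫ t in y..1, |deriv f t| :=
    calc |f x - f y| = |(f x - f 0) + (f 1 - f y)| := by rw [h01]; ring_nf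
      _ ≤ |f x - f 0| + |f 1 - f y| := abs_add_le _ _
      _ ≤ _ := add_le_add (hvar hx.1) (hvar hy.2)
  linarith

lemma integral_abs_sub_integral_le_of_abs_sub_le {X Y : Type*} [MeasurableSpace X]
    [MeasurableSpace Y] {m : Measure X} {n : Measure Y} [IsProbabilityMeasure m]
    [IsProbabilityMeasure n] {s : X × Y → ℝ} {a : Y → ℝ} {b : X → ℝ}
    (hs : Integrable s (m.prod n)) (ha : Integrable a n) (hb : Integrable b m)
    (hosc : ∀ᵐ p ∂m.prod n, ∀ᵐ q ∂m.prod n, |s p - s q| ≤ a p.2 + b q.1) :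
    ∫ p, |s p - ∫ q, s q ∂m.prod n| ∂m.prod n ≤ (∫ y, a y ∂n) + ∫ x, b x ∂m := by
  have hpoint : ∀ᵐ p ∂m.prod n, |s p - ∫ q, s q ∂m.prod n| ≤ a p.2 + ∫ x, b x ∂m := by
    filter_upwards [hosc] with p hp
    calc |s p - ∫ q, s q ∂m.prod n|
        = |∫ q, (s p - s q) ∂m.prod n| := by
          rw [integral_sub (integrable_const _) hs]; simp
      _ ≤ ∫ q, |s p - s q| ∂m.prod n := abs_integral_le_integral_abs
      _ ≤ ∫ q, (a p.2 + b q.1) ∂m.prod n :=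
          integral_mono_ae ((integrable_const _).sub hs).abs
            ((integrable_const _).add (hb.comp_fst n)) hp
      _ = a p.2 + ∫ x, b x ∂m := by
          rw [integral_add (integrable_const _) (hb.comp_fst n), integral_fun_fst]; simp
  calc ∫ p, |s p - ∫ q, s q ∂m.prod n| ∂m.prod n
      ≤ ∫ p, (a p.2 + ∫ x, b x ∂m) ∂m.prod n :=
        integral_mono_ae (hs.sub (integrable_const _)).abs
          ((ha.comp_snd m).add (integrable_const _)) hpoint
    _ = (∫ y, a y ∂n) + ∫ x, b x ∂m := by
        rw [integral_add (ha.comp_snd m) (integrable_const _), integral_fun_snd]; simp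

lemma continuous_grad {s : ℝ × ℝ → ℝ} (hs : ContDiff ℝ 1 s) : Continuous (grad s) :=
  ((hs.continuous_fderiv one_ne_zero).clm_apply continuous_const).prodMk
    ((hs.continuous_fderiv one_ne_zero).clm_apply continuous_const)

lemma SpacePeriodic.abs_sub_le_half_integral_abs_grad {s : ℝ × ℝ → ℝ} (hs : ContDiff ℝ 1 s)
    (hper : SpacePeriodic s) {p q : ℝ × ℝ} (hp : p ∈ Set.Icc 0 1) (hq : q ∈ Set.Icc 0 1) :
    |s p - s q| ≤ (1 / 2 * ∫ t, |(grad s (t, p.2)).1| ∂unitCell ℝ) +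
      1 / 2 * ∫ t, |(grad s (q.1, t)).2| ∂unitCell ℝ := by
  have hdiff : Differentiable ℝ s := hs.differentiable one_ne_zero
  rw [Set.Icc_prod_eq] at hp hq
  have hhoriz := abs_sub_le_half_integral_abs_deriv (hs.comp (contDiff_prodMk_left p.2))
    (hper.apply_one_left p.2) hp.1 hq.1
  have hvert := abs_sub_le_half_integral_abs_deriv (hs.comp (contDiff_prodMk_right q.1))
    (hper.apply_one_right q.1) hp.2 hq.2
  simp_rw [← fderiv_apply_one_eq_deriv, Function.comp_def, fderiv_slice_left hdiff] at hhoriz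
  simp_rw [← fderiv_apply_one_eq_deriv, Function.comp_def, fderiv_slice_right hdiff] at hvert
  -- Join `p` to `q` through the corner `(q.1, p.2)`.
  exact (abs_sub_le _ (s (q.1, p.2)) _).trans (add_le_add hhoriz hvert)

theorem SpacePeriodic.integral_abs_sub_integral_le {s : ℝ × ℝ → ℝ} (hs : ContDiff ℝ 1 s)
    (hper : SpacePeriodic s) :
    ∫ x, |s x - ∫ y, s y ∂unitCell (ℝ × ℝ)| ∂unitCell (ℝ × ℝ) ≤
      1 / 2 * ∫ x, (|(grad s x).1| + |(grad s x).2|) ∂unitCell (ℝ × ℝ) := by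
  have hfst := integrable_unitCell (continuous_grad hs).fst.abs
  have hsnd := integrable_unitCell (continuous_grad hs).snd.abs
  have hint := integrable_unitCell hs.continuous
  have hmem : ∀ᵐ p ∂unitCell (ℝ × ℝ), p ∈ Set.Icc 0 1 := ae_restrict_mem measurableSet_Icc
  rw [integral_add hfst hsnd]
  rw [unitCell_prod] at *
  rw [integral_prod_symm _ hfst, integral_prod _ hsnd, mul_add, ← integral_const_mul,
    ← integral_const_mul]
  refine integral_abs_sub_integral_le_of_abs_sub_le hint (hfst.integral_prod_right.const_mul _)
    (hsnd.integral_prod_left.const_mul _) ?_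
  filter_upwards [hmem] with p hp
  filter_upwards [hmem] with q hq
  exact hper.abs_sub_le_half_integral_abs_grad hs hp hq

lemma integral_mul_le_of_integral_eq_zero {X : Type*} [MeasurableSpace X] {m : Measure X}
    [IsFiniteMeasure m] {g s : X → ℝ} {γ : ℝ} (hs : Integrable s m) (hg : Integrable g m)
    (hg_le : ∀ x, |g x| ≤ γ) (hg_zero : ∫ x, g x ∂m = 0) (c : ℝ) :
    ∫ x, g x * s x ∂m ≤ γ * ∫ x, |s x - c| ∂m := by
  have hgs {f : X → ℝ} (hf : Integrable f m) : Integrable (fun x => g x * f x) m :=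
    hf.bdd_mul hg.aestronglyMeasurable (Eventually.of_forall hg_le)
  have hsc : Integrable (fun x => s x - c) m := hs.sub (integrable_const c)
  calc ∫ x, g x * s x ∂m = ∫ x, g x * (s x - c) ∂m := by
        simp_rw [mul_sub]
        rw [integral_sub (hgs hs) (hg.mul_const c), integral_mul_const, hg_zero, zero_mul,
          sub_zero]
    _ ≤ ∫ x, γ * |s x - c| ∂m := by
        refine integral_mono (hgs hsc) (hsc.abs.const_mul γ) fun x => (le_abs_self _).trans ?_
        rw [abs_mul]
        exact mul_le_mul_of_nonneg_right (hg_le x) (abs_nonneg _)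
    _ = γ * ∫ x, |s x - c| ∂m := integral_const_mul _ _

end Poincare

section SmoothPeriodic

variable {E : Type*} [NormedAddCommGroup E] [NormedSpace ℝ E] {L : Set E} {F G K S : E → ℝ}

/-- The directional derivative of `F` along the constant vector `v`, as a function that can be
differentiated again. -/
def dirDeriv (v : E) (F : E → ℝ) (p : E) : ℝ := fderiv ℝ F p v

lemma dirDeriv_mul (hF : Differentiable ℝ F) (hG : Differentiable ℝ G) (v p : E) :
    dirDeriv v (fun q => F q * G q) p = F p * dirDeriv v G p + dirDeriv v F p * G p := by
  simp only [dirDeriv, fderiv_fun_mul (hF p) (hG p), add_apply, smul_apply, smul_eq_mul]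
  ring

lemma dirDeriv_comm (hF : ContDiff ℝ 2 F) (v w p : E) :
    dirDeriv v (dirDeriv w F) p = dirDeriv w (dirDeriv v F) p := by
  have hsymm : IsSymmSndFDerivAt ℝ F p := hF.contDiffAt.isSymmSndFDerivAt (by simp)
  have hdiff : Differentiable ℝ (fderiv ℝ F) :=
    (hF.fderiv_right (m := 1) (by norm_num)).differentiable one_ne_zero
  have hsnd (a b : E) : dirDeriv a (dirDeriv b F) p = fderiv ℝ (fderiv ℝ F) p a b := by
    unfold dirDeriv
    simp [fderiv_clm_apply (hdiff p) (differentiableAt_const b)]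
  rw [hsnd, hsnd, hsymm.eq]

/-- Smooth functions on `E` having every element of `L` as a period. -/
structure SmoothPeriodic (L : Set E) (F : E → ℝ) : Prop where
  contDiff : ContDiff ℝ (⊤ : ℕ∞) F
  periodic : ∀ c ∈ L, Function.Periodic F c

namespace SmoothPeriodic

protected lemma continuous (hF : SmoothPeriodic L F) : Continuous F := hF.contDiff.continuous

protected lemma differentiable (hF : SmoothPeriodic L F) : Differentiable ℝ F :=
  hF.contDiff.differentiable (by simp)

protected lemma mul (hF : SmoothPeriodic L F) (hG : SmoothPeriodic L G) :
    SmoothPeriodic L fun p => F p * G p :=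
  ⟨hF.contDiff.mul hG.contDiff, fun c hc => (hF.periodic c hc).mul (hG.periodic c hc)⟩

protected lemma dirDeriv (hF : SmoothPeriodic L F) (v : E) : SmoothPeriodic L (dirDeriv v F) where
  contDiff := (hF.contDiff.fderiv_right (by simp)).clm_apply contDiff_const
  periodic c hc p := by
    simp_rw [dirDeriv, ← fderiv_comp_add_right, (hF.periodic c hc) _]

end SmoothPeriodic

end SmoothPeriodic

section SpaceTime

/-- The generators of the period lattice of functions on `ℝ × 𝕋²` that are `1`-periodic in `θ`. -/
def cubePeriods : Set (ℝ × ℝ × ℝ) := {(1, 0, 0), (0, 1, 0), (0, 0, 1)}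

local notation "∂θ" => dirDeriv ((1, 0, 0) : ℝ × ℝ × ℝ)
local notation "∂₁" => dirDeriv ((0, 1, 0) : ℝ × ℝ × ℝ)
local notation "∂₂" => dirDeriv ((0, 0, 1) : ℝ × ℝ × ℝ)

variable {F G K S : ℝ × ℝ × ℝ → ℝ} {α γ μ ν : ℝ}

lemma smoothPeriodic_uncurry {f : ℝ → ℝ × ℝ → ℝ}
    (hf : ContDiff ℝ (⊤ : ℕ∞) fun p : ℝ × ℝ × ℝ => f p.1 p.2)
    (htime : ∀ θ x, f (θ + 1) x = f θ x) (hspace : ∀ θ, SpacePeriodic (f θ)) :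
    SmoothPeriodic cubePeriods fun p : ℝ × ℝ × ℝ => f p.1 p.2 where
  contDiff := hf
  periodic := by
    rintro c (rfl | rfl | rfl) ⟨θ, x⟩
    · simpa [← Prod.zero_eq_mk] using htime θ x
    · simpa using (hspace θ x).1
    · simpa using (hspace θ x).2

namespace SmoothPeriodic

lemma periodic_time (hF : SmoothPeriodic cubePeriods F) (x : ℝ × ℝ) : F (1, x) = F (0, x) := by
  simpa [← Prod.zero_eq_mk] using hF.periodic (1, 0, 0) (by simp [cubePeriods]) (0, x)

lemma spacePeriodic_slice (hF : SmoothPeriodic cubePeriods F) (θ : ℝ) :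
    SpacePeriodic fun x => F (θ, x) := fun x =>
  ⟨by simpa using hF.periodic (0, 1, 0) (by simp [cubePeriods]) (θ, x),
    by simpa using hF.periodic (0, 0, 1) (by simp [cubePeriods]) (θ, x)⟩

lemma contDiff_slice (hF : SmoothPeriodic cubePeriods F) (θ : ℝ) :
    ContDiff ℝ 1 fun x => F (θ, x) :=
  (hF.contDiff.of_le (by simp)).comp (contDiff_prodMk_right θ)

protected lemma integrable (hF : SmoothPeriodic cubePeriods F) :
    Integrable F (unitCell (ℝ × ℝ × ℝ)) :=
  integrable_unitCell hF.continuous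

lemma integral_dirDeriv_eq_zero (hF : SmoothPeriodic cubePeriods F) (v : ℝ × ℝ × ℝ) :
    ∫ p, dirDeriv v F p ∂unitCell (ℝ × ℝ × ℝ) = 0 := by
  have hF1 : ContDiff ℝ 1 F := hF.contDiff.of_le (by simp)
  exact integral_fderiv_prod_eq_zero hF1
    (fun x => integral_fderiv_unitCell_eq_zero (hF1.comp (contDiff_prodMk_left x))
      (hF.periodic_time x) v.1)
    (fun θ => (hF.spacePeriodic_slice θ).integral_fderiv_eq_zero (hF.contDiff_slice θ) v.2)

lemma integral_mul_dirDeriv (hF : SmoothPeriodic cubePeriods F)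
    (hG : SmoothPeriodic cubePeriods G) (v : ℝ × ℝ × ℝ) :
    ∫ p, F p * dirDeriv v G p ∂unitCell (ℝ × ℝ × ℝ) =
      -∫ p, dirDeriv v F p * G p ∂unitCell (ℝ × ℝ × ℝ) := by
  have hzero := (hF.mul hG).integral_dirDeriv_eq_zero v
  simp_rw [dirDeriv_mul hF.differentiable hG.differentiable] at hzero
  rw [integral_add (hF.mul (hG.dirDeriv v)).integrable ((hF.dirDeriv v).mul hG).integrable]
    at hzero
  linarith

lemma integral_mul_dirDeriv_self (hF : SmoothPeriodic cubePeriods F) (v : ℝ × ℝ × ℝ) :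
    ∫ p, F p * dirDeriv v F p ∂unitCell (ℝ × ℝ × ℝ) = 0 := by
  have hparts := hF.integral_mul_dirDeriv hF v
  simp_rw [mul_comm (dirDeriv v F _)] at hparts
  linarith

lemma integral_mul_dirDeriv_flux (hK : SmoothPeriodic cubePeriods K)
    (hS : SmoothPeriodic cubePeriods S) (v : ℝ × ℝ × ℝ) :
    ∫ p, S p * dirDeriv v (fun q => K q * dirDeriv v S q) p
        ∂unitCell (ℝ × ℝ × ℝ) =
      -∫ p, K p * dirDeriv v S p ^ 2 ∂unitCell (ℝ × ℝ × ℝ) := by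
  rw [hS.integral_mul_dirDeriv (hK.mul (hS.dirDeriv v))]
  congr! 3 with p
  ring

lemma integral_dirDeriv_mul_dirDeriv_flux (hK : SmoothPeriodic cubePeriods K)
    (hS : SmoothPeriodic cubePeriods S) (v w : ℝ × ℝ × ℝ) :
    ∫ p, dirDeriv w S p * dirDeriv v (fun q => K q * dirDeriv v S q) p
        ∂unitCell (ℝ × ℝ × ℝ) =
      1 / 2 * ∫ p, dirDeriv w K p * dirDeriv v S p ^ 2 ∂unitCell (ℝ × ℝ × ℝ) := by
  have hV := hS.dirDeriv v
  have hleft : ∫ p, dirDeriv w S p *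
        dirDeriv v (fun q => K q * dirDeriv v S q) p ∂unitCell (ℝ × ℝ × ℝ) =
      -∫ p, K p * (dirDeriv v S p * dirDeriv w (dirDeriv v S) p)
        ∂unitCell (ℝ × ℝ × ℝ) := by
    rw [(hS.dirDeriv w).integral_mul_dirDeriv (hK.mul hV)]
    congr! 3 with p
    rw [dirDeriv_comm (hS.contDiff.of_le (WithTop.coe_le_coe.2 le_top))]
    ring
  have hright := hK.integral_mul_dirDeriv (hV.mul hV) w
  have hsquare (p : ℝ × ℝ × ℝ) :
      K p * dirDeriv w (fun q => dirDeriv v S q * dirDeriv v S q) p =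
        2 * (K p * (dirDeriv v S p * dirDeriv w (dirDeriv v S) p)) := by
    rw [dirDeriv_mul hV.differentiable hV.differentiable]
    ring
  simp_rw [hsquare, integral_const_mul, ← sq] at hright
  linarith

end SmoothPeriodic

/-- The parabolic operator `S ↦ μS + ∂S/∂θ - ∇·(K∇S)` of the cell problem with diffusion
coefficient `K`. -/
def cellOperator (μ : ℝ) (K S : ℝ × ℝ × ℝ → ℝ) (p : ℝ × ℝ × ℝ) : ℝ :=
  μ * S p + ∂θ S p - (∂₁ (fun q => K q * ∂₁ S q) p + ∂₂ (fun q => K q * ∂₂ S q) p)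

/-- The squared Euclidean length `|∇S|²` of the gradient in the torus variables. -/
def gradSq (S : ℝ × ℝ × ℝ → ℝ) (p : ℝ × ℝ × ℝ) : ℝ := ∂₁ S p ^ 2 + ∂₂ S p ^ 2

lemma gradSq_nonneg (S : ℝ × ℝ × ℝ → ℝ) (p : ℝ × ℝ × ℝ) : 0 ≤ gradSq S p :=
  add_nonneg (sq_nonneg _) (sq_nonneg _)

namespace SmoothPeriodic

lemma continuous_gradSq (hS : SmoothPeriodic cubePeriods S) : Continuous (gradSq S) :=
  ((hS.dirDeriv _).continuous.pow 2).add ((hS.dirDeriv _).continuous.pow 2)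

lemma integral_mul_gradSq (hS : SmoothPeriodic cubePeriods S) (hK : Continuous K) :
    ∫ p, K p * gradSq S p ∂unitCell (ℝ × ℝ × ℝ) =
      (∫ p, K p * ∂₁ S p ^ 2 ∂unitCell (ℝ × ℝ × ℝ)) +
        ∫ p, K p * ∂₂ S p ^ 2 ∂unitCell (ℝ × ℝ × ℝ) := by
  simp_rw [gradSq, mul_add]
  exact integral_add (integrable_unitCell (hK.mul ((hS.dirDeriv _).continuous.pow 2)))
    (integrable_unitCell (hK.mul ((hS.dirDeriv _).continuous.pow 2)))

lemma continuous_cellOperator (hK : SmoothPeriodic cubePeriods K)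
    (hS : SmoothPeriodic cubePeriods S) : Continuous (cellOperator μ K S) :=
  ((continuous_const.mul hS.continuous).add (hS.dirDeriv _).continuous).sub
    (((hK.mul (hS.dirDeriv _)).dirDeriv _).continuous.add
      ((hK.mul (hS.dirDeriv _)).dirDeriv _).continuous)

lemma integral_cellOperator_mul (hK : SmoothPeriodic cubePeriods K)
    (hS : SmoothPeriodic cubePeriods S) (hF : SmoothPeriodic cubePeriods F) :
    ∫ p, cellOperator μ K S p * F p ∂unitCell (ℝ × ℝ × ℝ) =
      μ * (∫ p, F p * S p ∂unitCell (ℝ × ℝ × ℝ)) + (∫ p, F p * ∂θ S p ∂unitCell (ℝ × ℝ × ℝ)) -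
        ((∫ p, F p * ∂₁ (fun q => K q * ∂₁ S q) p ∂unitCell (ℝ × ℝ × ℝ)) +
          ∫ p, F p * ∂₂ (fun q => K q * ∂₂ S q) p ∂unitCell (ℝ × ℝ × ℝ)) := by
  have hμ := (hF.mul hS).integrable.const_mul μ
  have hθ := (hF.mul (hS.dirDeriv (1, 0, 0))).integrable
  have hflux (v : ℝ × ℝ × ℝ) :=
    (hF.mul ((hK.mul (hS.dirDeriv v)).dirDeriv v)).integrable
  rw [← integral_const_mul, ← integral_add' hμ hθ, ← integral_add' (hflux _) (hflux _),
    ← integral_sub' (hμ.add hθ) ((hflux _).add (hflux _))]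
  congr! 2 with p
  simp only [cellOperator, Pi.add_apply, Pi.sub_apply]
  ring

theorem integral_cellOperator_mul_self (hK : SmoothPeriodic cubePeriods K)
    (hS : SmoothPeriodic cubePeriods S) :
    ∫ p, cellOperator μ K S p * S p ∂unitCell (ℝ × ℝ × ℝ) =
      μ * (∫ p, S p ^ 2 ∂unitCell (ℝ × ℝ × ℝ)) +
        ∫ p, K p * gradSq S p ∂unitCell (ℝ × ℝ × ℝ) := by
  rw [hK.integral_cellOperator_mul hS hS, hS.integral_mul_dirDeriv_self,
    hK.integral_mul_dirDeriv_flux hS, hK.integral_mul_dirDeriv_flux hS,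
    hS.integral_mul_gradSq hK.continuous]
  simp_rw [sq (S _)]
  ring

theorem integral_cellOperator_mul_dirDeriv (hK : SmoothPeriodic cubePeriods K)
    (hS : SmoothPeriodic cubePeriods S) :
    ∫ p, cellOperator μ K S p * ∂θ S p ∂unitCell (ℝ × ℝ × ℝ) =
      (∫ p, ∂θ S p ^ 2 ∂unitCell (ℝ × ℝ × ℝ)) -
        1 / 2 * ∫ p, ∂θ K p * gradSq S p ∂unitCell (ℝ × ℝ × ℝ) := by
  have hmass : ∫ p, ∂θ S p * S p ∂unitCell (ℝ × ℝ × ℝ) = 0 := by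
    simpa only [mul_comm] using hS.integral_mul_dirDeriv_self (1, 0, 0)
  rw [hK.integral_cellOperator_mul hS (hS.dirDeriv _), hmass,
    hK.integral_dirDeriv_mul_dirDeriv_flux hS, hK.integral_dirDeriv_mul_dirDeriv_flux hS,
    hS.integral_mul_gradSq (hK.dirDeriv _).continuous]
  simp_rw [sq (∂θ S _)]
  ring

end SmoothPeriodic

lemma grad_slice (hF : Differentiable ℝ F) (θ : ℝ) (x : ℝ × ℝ) :
    grad (fun y => F (θ, y)) x = (∂₁ F (θ, x), ∂₂ F (θ, x)) := by
  rw [grad, fderiv_slice_right hF, fderiv_slice_right hF]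
  rfl

lemma div2_slice (hF : Differentiable ℝ F) (hG : Differentiable ℝ G) (θ : ℝ) (x : ℝ × ℝ) :
    div2 (fun y => (F (θ, y), G (θ, y))) x = ∂₁ F (θ, x) + ∂₂ G (θ, x) := by
  rw [div2, fderiv_slice_right hF, fderiv_slice_right hG]
  rfl

lemma deriv_slice (hF : Differentiable ℝ F) (θ : ℝ) (x : ℝ × ℝ) :
    deriv (fun σ => F (σ, x)) θ = ∂θ F (θ, x) := by
  rw [← fderiv_apply_one_eq_deriv, fderiv_slice_left hF]
  rfl

lemma SmoothPeriodic.integral_mul_le_of_integral_slice_eq_zero {g : ℝ × ℝ × ℝ → ℝ}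
    (hS : SmoothPeriodic cubePeriods S) (hg : Continuous g) (hg_le : ∀ p, |g p| ≤ γ)
    (hg_zero : ∀ θ, ∫ x, g (θ, x) ∂unitCell (ℝ × ℝ) = 0) :
    ∫ p, g p * S p ∂unitCell (ℝ × ℝ × ℝ) ≤
      ∫ p, γ / 2 * (|∂₁ S p| + |∂₂ S p|) ∂unitCell (ℝ × ℝ × ℝ) := by
  have hγ : 0 ≤ γ := (abs_nonneg _).trans (hg_le 0)
  have hS_cont := hS.continuous
  have h₁ := (hS.dirDeriv (0, 1, 0)).continuous
  have h₂ := (hS.dirDeriv (0, 0, 1)).continuous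
  have hleft : Continuous fun p => g p * S p := hg.mul hS_cont
  have hright : Continuous fun p => γ / 2 * (|∂₁ S p| + |∂₂ S p|) := by fun_prop
  have hint {f : ℝ × ℝ × ℝ → ℝ} (hf : Continuous f) :
      Integrable (fun θ => ∫ x, f (θ, x) ∂unitCell (ℝ × ℝ)) (unitCell ℝ) := by
    have hprod := integrable_unitCell hf
    rw [unitCell_prod] at hprod
    exact hprod.integral_prod_left
  rw [integral_unitCell_prod hleft, integral_unitCell_prod hright]
  refine integral_mono (hint hleft) (hint hright) fun θ => ?_
  calc ∫ x, g (θ, x) * S (θ, x) ∂unitCell (ℝ × ℝ)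
      ≤ γ * ∫ x, |S (θ, x) - ∫ y, S (θ, y) ∂unitCell (ℝ × ℝ)| ∂unitCell (ℝ × ℝ) :=
        integral_mul_le_of_integral_eq_zero (integrable_unitCell (by fun_prop))
          (integrable_unitCell (by fun_prop)) (fun x => hg_le (θ, x)) (hg_zero θ) _
    _ ≤ γ * (1 / 2 * ∫ x, (|(grad (fun y => S (θ, y)) x).1| +
          |(grad (fun y => S (θ, y)) x).2|) ∂unitCell (ℝ × ℝ)) :=
        mul_le_mul_of_nonneg_left
          ((hS.spacePeriodic_slice θ).integral_abs_sub_integral_le (hS.contDiff_slice θ)) hγ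
    _ = ∫ x, γ / 2 * (|∂₁ S (θ, x)| + |∂₂ S (θ, x)|) ∂unitCell (ℝ × ℝ) := by
        simp_rw [grad_slice hS.differentiable, integral_const_mul]
        ring

lemma half_mul_abs_add_abs_le (hν : 0 < ν) (γ a b : ℝ) :
    γ / 2 * (|a| + |b|) ≤ ν / 2 * (a ^ 2 + b ^ 2) + γ ^ 2 / (4 * ν) := by
  have hsquares : ν / 2 * (a ^ 2 + b ^ 2) + γ ^ 2 / (4 * ν) - γ / 2 * (|a| + |b|) =
      ((2 * ν * |a| - γ) ^ 2 + (2 * ν * |b| - γ) ^ 2) / (8 * ν) := by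
    rw [← sq_abs a, ← sq_abs b]
    field_simp
    ring
  have hnonneg : 0 ≤ ((2 * ν * |a| - γ) ^ 2 + (2 * ν * |b| - γ) ^ 2) / (8 * ν) := by positivity
  linarith

theorem SmoothPeriodic.integral_gradSq_le (hK : SmoothPeriodic cubePeriods K)
    (hS : SmoothPeriodic cubePeriods S) (hμ : 0 ≤ μ) (hν : 0 < ν) (hνK : ∀ p, ν ≤ K p)
    (hL_le : ∀ p, |cellOperator μ K S p| ≤ γ)
    (hL_zero : ∀ θ, ∫ x, cellOperator μ K S (θ, x) ∂unitCell (ℝ × ℝ) = 0) :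
    ∫ p, gradSq S p ∂unitCell (ℝ × ℝ × ℝ) ≤ γ ^ 2 / (2 * ν ^ 2) := by
  have hint := integrable_unitCell hS.continuous_gradSq
  have h₁ := (hS.dirDeriv (0, 1, 0)).continuous
  have h₂ := (hS.dirDeriv (0, 0, 1)).continuous
  have hcoercive : ν * ∫ p, gradSq S p ∂unitCell (ℝ × ℝ × ℝ) ≤
      ∫ p, K p * gradSq S p ∂unitCell (ℝ × ℝ × ℝ) := by
    rw [← integral_const_mul]
    exact integral_mono (hint.const_mul ν)
      (integrable_unitCell (hK.continuous.mul hS.continuous_gradSq))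
      fun p => mul_le_mul_of_nonneg_right (hνK p) (gradSq_nonneg S p)
  have hmass : 0 ≤ μ * ∫ p, S p ^ 2 ∂unitCell (ℝ × ℝ × ℝ) :=
    mul_nonneg hμ (integral_nonneg fun p => sq_nonneg (S p))
  have henergy := hK.integral_cellOperator_mul_self (μ := μ) hS
  have habsorb : ∫ p, cellOperator μ K S p * S p ∂unitCell (ℝ × ℝ × ℝ) ≤
      ν / 2 * (∫ p, gradSq S p ∂unitCell (ℝ × ℝ × ℝ)) + γ ^ 2 / (4 * ν) :=
    calc ∫ p, cellOperator μ K S p * S p ∂unitCell (ℝ × ℝ × ℝ)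
        ≤ ∫ p, γ / 2 * (|∂₁ S p| + |∂₂ S p|) ∂unitCell (ℝ × ℝ × ℝ) :=
          hS.integral_mul_le_of_integral_slice_eq_zero (hK.continuous_cellOperator hS) hL_le hL_zero
      _ ≤ ∫ p, (ν / 2 * gradSq S p + γ ^ 2 / (4 * ν)) ∂unitCell (ℝ × ℝ × ℝ) :=
          integral_mono (integrable_unitCell (by fun_prop))
            ((hint.const_mul _).add (integrable_const _))
            fun p => half_mul_abs_add_abs_le hν γ (∂₁ S p) (∂₂ S p)
      _ = _ := by
          rw [integral_add (hint.const_mul _) (integrable_const _), integral_const_mul]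
          simp
  calc ∫ p, gradSq S p ∂unitCell (ℝ × ℝ × ℝ)
      ≤ γ ^ 2 / (4 * ν) / (ν / 2) := by
        rw [le_div_iff₀ (half_pos hν)]
        linarith
    _ = γ ^ 2 / (2 * ν ^ 2) := by
        field_simp
        norm_num

theorem SmoothPeriodic.integral_dirDeriv_sq_le (hK : SmoothPeriodic cubePeriods K)
    (hS : SmoothPeriodic cubePeriods S) (hK_le : ∀ p, ∂θ K p ≤ α)
    (hL_le : ∀ p, |cellOperator μ K S p| ≤ γ) :
    ∫ p, ∂θ S p ^ 2 ∂unitCell (ℝ × ℝ × ℝ) ≤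
      γ ^ 2 + α * ∫ p, gradSq S p ∂unitCell (ℝ × ℝ × ℝ) := by
  have hsq : Integrable (fun p => ∂θ S p ^ 2) (unitCell (ℝ × ℝ × ℝ)) :=
    integrable_unitCell ((hS.dirDeriv _).continuous.pow 2)
  have hcoeff : ∫ p, ∂θ K p * gradSq S p ∂unitCell (ℝ × ℝ × ℝ) ≤
      α * ∫ p, gradSq S p ∂unitCell (ℝ × ℝ × ℝ) := by
    rw [← integral_const_mul]
    exact integral_mono
      (integrable_unitCell ((hK.dirDeriv _).continuous.mul hS.continuous_gradSq))
      ((integrable_unitCell hS.continuous_gradSq).const_mul α)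
      fun p => mul_le_mul_of_nonneg_right (hK_le p) (gradSq_nonneg S p)
  have hyoung (p : ℝ × ℝ × ℝ) :
      cellOperator μ K S p * ∂θ S p ≤ γ ^ 2 / 2 + 1 / 2 * ∂θ S p ^ 2 := by
    have hL_sq : cellOperator μ K S p ^ 2 ≤ γ ^ 2 := sq_le_sq' (abs_le.1 (hL_le p)).1
      (abs_le.1 (hL_le p)).2
    linarith [two_mul_le_add_sq (cellOperator μ K S p) (∂θ S p)]
  have hsource : ∫ p, cellOperator μ K S p * ∂θ S p ∂unitCell (ℝ × ℝ × ℝ) ≤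
      γ ^ 2 / 2 + 1 / 2 * ∫ p, ∂θ S p ^ 2 ∂unitCell (ℝ × ℝ × ℝ) :=
    calc ∫ p, cellOperator μ K S p * ∂θ S p ∂unitCell (ℝ × ℝ × ℝ)
        ≤ ∫ p, (γ ^ 2 / 2 + 1 / 2 * ∂θ S p ^ 2) ∂unitCell (ℝ × ℝ × ℝ) :=
          integral_mono (integrable_unitCell
            ((hK.continuous_cellOperator hS).mul (hS.dirDeriv _).continuous))
            ((integrable_const _).add (hsq.const_mul _)) hyoung
      _ = _ := by
          rw [integral_add (integrable_const _) (hsq.const_mul _), integral_const_mul]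
          simp
  rw [hK.integral_cellOperator_mul_dirDeriv hS] at hsource
  linarith

lemma L2sharpNorm_eq_sqrt {f : ℝ → ℝ × ℝ → ℝ}
    (hf : Continuous fun p : ℝ × ℝ × ℝ => f p.1 p.2) :
    L2sharpNorm f = √(∫ p, f p.1 p.2 ^ 2 ∂unitCell (ℝ × ℝ × ℝ)) := by
  rw [integral_unitCell_prod (by fun_prop), L2sharpNorm, ← Real.sqrt_eq_rpow, Tsq,
    ← Set.Icc_prod_eq (0, 0) (1, 1)]
  rfl

lemma norm_sq_le_fst_sq_add_snd_sq (a : ℝ × ℝ) : ‖a‖ ^ 2 ≤ a.1 ^ 2 + a.2 ^ 2 := by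
  rcases max_choice ‖a.1‖ ‖a.2‖ with h | h <;>
    rw [Prod.norm_def, h, Real.norm_eq_abs, sq_abs] <;> nlinarith [sq_nonneg a.1, sq_nonneg a.2]

namespace SmoothPeriodic

lemma L2sharpNorm_norm_grad_le (hS : SmoothPeriodic cubePeriods S) :
    L2sharpNorm (fun θ x => ‖grad (fun y => S (θ, y)) x‖) ≤
      √(∫ p, gradSq S p ∂unitCell (ℝ × ℝ × ℝ)) := by
  have hcont : Continuous fun p => ‖(∂₁ S p, ∂₂ S p)‖ :=
    ((hS.dirDeriv _).continuous.prodMk (hS.dirDeriv _).continuous).norm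
  simp_rw [grad_slice hS.differentiable]
  rw [L2sharpNorm_eq_sqrt hcont]
  exact Real.sqrt_le_sqrt <| integral_mono (integrable_unitCell (hcont.pow 2))
    (integrable_unitCell hS.continuous_gradSq) fun p => norm_sq_le_fst_sq_add_snd_sq _

lemma L2sharpNorm_deriv (hS : SmoothPeriodic cubePeriods S) :
    L2sharpNorm (fun θ x => deriv (fun σ => S (σ, x)) θ) =
      √(∫ p, ∂θ S p ^ 2 ∂unitCell (ℝ × ℝ × ℝ)) := by
  simp_rw [deriv_slice hS.differentiable]
  exact L2sharpNorm_eq_sqrt (hS.dirDeriv _).continuous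

end SmoothPeriodic

section CellProblem

variable {A : ℝ → ℝ × ℝ → ℝ} {C : ℝ → ℝ × ℝ → ℝ × ℝ} {S : ℝ → ℝ × ℝ → ℝ}

lemma CellCoeff.smoothPeriodic_add_const (hAC : CellCoeff A C) (ν : ℝ) :
    SmoothPeriodic cubePeriods fun p : ℝ × ℝ × ℝ => A p.1 p.2 + ν := by
  obtain ⟨hA, -, -, hA_time, -, hA_space, -⟩ := hAC
  exact smoothPeriodic_uncurry (f := fun θ x => A θ x + ν) (hA.add contDiff_const)
    (fun θ x => congrArg (· + ν) (hA_time θ x))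
    fun θ x => ⟨congrArg (· + ν) (hA_space θ x).1, congrArg (· + ν) (hA_space θ x).2⟩

lemma CellCoeff.integral_div2_eq_zero (hAC : CellCoeff A C) (θ : ℝ) :
    ∫ x, div2 (C θ) x ∂unitCell (ℝ × ℝ) = 0 := by
  obtain ⟨-, hC, -, -, -, -, hC_space⟩ := hAC
  have hslice : ContDiff ℝ 1 (C θ) := (hC.of_le (by simp)).comp (contDiff_prodMk_right θ)
  exact (hC_space θ).integral_div2_eq_zero hslice

lemma IsRegCellSol.smoothPeriodic (hS : IsRegCellSol A C μ ν S) :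
    SmoothPeriodic cubePeriods fun p : ℝ × ℝ × ℝ => S p.1 p.2 :=
  smoothPeriodic_uncurry hS.1 hS.2.1 hS.2.2.1

lemma IsRegCellSol.cellOperator_eq (hS : IsRegCellSol A C μ ν S) (hAC : CellCoeff A C)
    (θ : ℝ) (x : ℝ × ℝ) :
    cellOperator μ (fun p => A p.1 p.2 + ν) (fun p => S p.1 p.2) (θ, x) = div2 (C θ) x := by
  have hK := hAC.smoothPeriodic_add_const ν
  have hflux (v : ℝ × ℝ × ℝ) := (hK.mul (hS.smoothPeriodic.dirDeriv v)).differentiable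
  have hS_diff := hS.smoothPeriodic.differentiable
  have hgrad := grad_slice hS_diff θ
  obtain ⟨-, -, -, hequation⟩ := hS
  rw [← hequation θ x, cellOperator, ← deriv_slice hS_diff, ← div2_slice (hflux _) (hflux _)]
  simp only [hgrad, Prod.smul_mk, smul_eq_mul]

lemma CellCoeff.nonneg_of_deriv_le (hAC : CellCoeff A C)
    (hA : ∀ θ x, deriv (fun σ => A σ x) θ ≤ α) : 0 ≤ α := by
  obtain ⟨hA_smooth, -, -, hA_time, -⟩ := hAC
  have hcont : Continuous fun σ => A σ 0 :=
    hA_smooth.continuous.comp (Continuous.prodMk_left (0 : ℝ × ℝ))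
  obtain ⟨θ, -, hθ⟩ := exists_deriv_eq_zero zero_lt_one hcont.continuousOn
    (by simpa using (hA_time 0 0).symm)
  exact hθ ▸ hA θ 0

theorem regularized_cell_solution_gradient_estimates_general (hμ : 0 ≤ μ) (hν : 0 < ν)
    (hAC : CellCoeff A C) (hA : ∀ θ x, deriv (fun σ => A σ x) θ ≤ α)
    (hC : ∀ θ x, |div2 (C θ) x| ≤ γ) (hS : IsRegCellSol A C μ ν S) :
    L2sharpNorm (fun θ x => ‖grad (S θ) x‖) ≤ γ / ν ∧
      L2sharpNorm (fun θ x => deriv (fun σ => S σ x) θ) ≤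
        √(γ ^ 2 + α * (γ ^ 2 / (2 * ν ^ 2))) := by
  have hK := hAC.smoothPeriodic_add_const ν
  have hsol := hS.smoothPeriodic
  have hequation := hS.cellOperator_eq hAC
  have hK_deriv (p : ℝ × ℝ × ℝ) : ∂θ (fun q => A q.1 q.2 + ν) p ≤ α := by
    rw [← deriv_slice hK.differentiable, deriv_add_const]
    exact hA p.1 p.2
  have hsource (p : ℝ × ℝ × ℝ) :
      |cellOperator μ (fun q => A q.1 q.2 + ν) (fun q => S q.1 q.2) p| ≤ γ :=
    hequation p.1 p.2 ▸ hC p.1 p.2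
  have hgradSq := hK.integral_gradSq_le hsol hμ hν
    (fun p => le_add_of_nonneg_left (hAC.2.2.1 p.1 p.2)) hsource
    (fun θ => by simpa only [hequation] using hAC.integral_div2_eq_zero θ)
  refine ⟨hsol.L2sharpNorm_norm_grad_le.trans (Real.sqrt_le_iff.2 ⟨?_, hgradSq.trans ?_⟩),
    hsol.L2sharpNorm_deriv.trans_le (Real.sqrt_le_sqrt ?_)⟩
  · exact div_nonneg ((abs_nonneg _).trans (hC 0 0)) hν.le
  · rw [div_pow]
    gcongr
    linarith [sq_nonneg ν]
  · exact (hK.integral_dirDeriv_sq_le hsol hK_deriv hsource).trans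
      (add_le_add_right (mul_le_mul_of_nonneg_left hgradSq (hAC.nonneg_of_deriv_le hA)) _)

end CellProblem

end SpaceTime

/-- Lemma 3.8: for any `μ > 0`, `ν > 0` and `ε > 0`, the `θ`-periodic solution
`S_μ^ν` of the regularized cell problem satisfies
`‖∇S_μ^ν‖_{L²_#(ℝ×𝕋²)} ≤ γ/ν` and `‖∂S_μ^ν/∂θ‖_{L²_#(ℝ×𝕋²)} ≤ γ₃`
for a constant `γ₃` depending only on `γ` and `ν`. -/
theorem regularized_cell_solution_gradient_estimates :
    ∀ γ ν : ℝ, 0 ≤ γ → 0 < ν → ∃ γ₃ : ℝ,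
      ∀ (A : ℝ → (ℝ × ℝ) → ℝ) (C : ℝ → (ℝ × ℝ) → ℝ × ℝ) (μ ε : ℝ)
        (S : ℝ → (ℝ × ℝ) → ℝ),
        0 < μ → 0 < ε → CellCoeff A C →
        (∀ θ x, |A θ x| ≤ γ) → (∀ θ x, ‖C θ x‖ ≤ γ) →
        (∀ θ x, |deriv (fun σ => A σ x) θ| ≤ γ) →
        (∀ θ x, ‖deriv (fun σ => C σ x) θ‖ ≤ γ) →
        (∀ θ x, |div2 (C θ) x| ≤ γ) →
        IsRegCellSol A C μ ν S →
        L2sharpNorm (fun θ x => ‖grad (S θ) x‖) ≤ γ / ν ∧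
        L2sharpNorm (fun θ x => deriv (fun σ => S σ x) θ) ≤ γ₃ := by
  intro γ ν _ hν
  exact ⟨_, fun _ _ _ _ _ hμ _ hAC _ _ hA _ hC hS =>
    regularized_cell_solution_gradient_estimates_general hμ.le hν hAC
      (fun θ x => (le_abs_self _).trans (hA θ x)) hC hS⟩
end
end
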